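/- arXiv:1512.06691 — 8 statements merged into one kernel-verified Lean document; each statement's English description precedes it below -/
import Mathlib

section
/- There exists a constant C ≥ 0, depending only on the bounds a_m, g_m, a_M, b_M, R_M, with the following property: for every Y > 0, μ > 0, measurable Y-periodic a, b, g : ℝ → ℝ with 0 < a_m ≤ a ≤ a_M, 0 < b_m ≤ b ≤ b_M, 0 < g_m ≤ g ≤ g_M a.e., every R : ℝ × (0,∞) → (0,∞) satisfying the standing assumptions together with |ln T| · essinf_y R(y,T) → +∞ as T → 0⁺, and every travelling wave solution (c, v, u) of the combustion free-boundary problem with curvature coefficient μ and c > 0, one has u(v(y), y) ≥ T_* for every y ∈ ℝ, where T_* := inf{T ∈ (0,∞) : ln(T) · essinf_z R(z,T) ≥ −C·(1 + Y)}, and moreover T_* > 0. -/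
/-!
Let `T` be the minimum of the temperature along the front and `r = essinf R(·, T)`. The proof bounds
`T` below in terms of the oscillation of `v`, and the oscillation of `v` in terms of `r`.

* *Geometry of the front.* At a minimum of `v` the front equation gives `c ≤ R_M`
  (`front_speed_le`). Since `R` is nondecreasing in the temperature, the rate along the front is at
  least `r`, and at a maximum of `v' ^ 2` the equation gives `|v'| ≤ c / r` (`front_slope_le`), so
  that `v` oscillates by at most `c Y / r` (`front_osc_le`).
* *Comparison.* With `λ = c b_M / a_m` and `K₀ = g_m a_m / (a_M b_M)`, the function
  `K₀ exp (λ (x - max v))` is a subsolution of the temperature problem, hence it lies below `u` on the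
  front (`front_lower`). At the point where `T` is attained this reads
  `log T ≥ log K₀ - λ c Y / r`.
* *Conclusion.* Multiplying by `r ≤ R_M` gives `r log T ≥ -C (1 + Y)` with
  `C = R_M |log K₀| + b_M R_M ^ 2 / a_m`; thus `T` belongs to the set whose infimum is `T_*`. The
  hypothesis `|log T| essinf R(·, T) → ∞` keeps that set away from `0`.

The comparison is the substantial part. In the classical argument one tests the difference of the
two problems with an increasing function of `W - u`, where `W` is the subsolution minus a small
constant `θ`. Here `u` is only a weak solution, while the admissible test functions are `C¹` and
compactly supported. So `u` is replaced by a smooth `U` obtained by mollifying with a bump supported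
in the cone `{K |y| < x}`, `K` being a Lipschitz constant of `v`: this only samples `u` inside the
subgraph, and gives uniform convergence on the front together with `L²` convergence of the gradient
up to the boundary (`exists_approx`). The test function is `χ(y) η(W - U)` with `η` a smooth step.
It is compactly supported because `u ≥ 0` and `W < 0` far to the left. The cutoff `χ` is the
difference of a step and its translate by one period, so the term containing `χ'` vanishes by
periodicity. The gradient terms are nonnegative up to errors that tend to `0` with `U → u`, and the
first-order term leaves a front integral of `c b χ H(W - U)`, where `H' = η` (`core`). Letting `U → u`
forces `W ≤ u` on the front.
-/

open MeasureTheory Real Filter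

noncomputable section

/-- The fresh region `Ω = {(x,y) : x < v(y)}`. -/
def Omg (v : ℝ → ℝ) : Set (ℝ × ℝ) := {p | p.1 < v p.2}

/-- One periodicity cell of the fresh region, `Ω_♯ = Ω ∩ {0 < y < Y}`. -/
def OmgS (Y : ℝ) (v : ℝ → ℝ) : Set (ℝ × ℝ) := {p | p.1 < v p.2 ∧ 0 < p.2 ∧ p.2 < Y}

/-- `Y`-periodicity in the second variable. -/
def PerY (Y : ℝ) (u : ℝ × ℝ → ℝ) : Prop := ∀ x y : ℝ, u (x, y + Y) = u (x, y)

/-- `ux`, `uy` are the weak partial derivatives of `u` on the open set `Omg v`: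
integration by parts against smooth test functions compactly supported in `Omg v`. -/
def IsWeakDeriv (v : ℝ → ℝ) (u ux uy : ℝ × ℝ → ℝ) : Prop :=
  ∀ φ : ℝ × ℝ → ℝ, ContDiff ℝ (⊤ : ℕ∞) φ → HasCompactSupport φ → tsupport φ ⊆ Omg v →
    (∫ p in Omg v, u p * fderiv ℝ φ p (1, 0)) = (-∫ p in Omg v, ux p * φ p) ∧
    (∫ p in Omg v, u p * fderiv ℝ φ p (0, 1)) = (-∫ p in Omg v, uy p * φ p)

/-- `u` is a variational solution of the temperature problem associated with `(c, v)`,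
with explicitly given weak partial derivatives `ux`, `uy`. -/
def IsVarSolWith (Y : ℝ) (a b g : ℝ → ℝ) (c : ℝ) (v : ℝ → ℝ)
    (u ux uy : ℝ × ℝ → ℝ) : Prop :=
  PerY Y u ∧ PerY Y ux ∧ PerY Y uy ∧
  IntegrableOn (fun p => u p ^ 2) (OmgS Y v) ∧
  IntegrableOn (fun p => ux p ^ 2) (OmgS Y v) ∧
  IntegrableOn (fun p => uy p ^ 2) (OmgS Y v) ∧
  IsWeakDeriv v u ux uy ∧
  ∀ φ : ℝ × ℝ → ℝ, ContDiff ℝ 1 φ → HasCompactSupport φ →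
    (∫ p in Omg v, (c * b p.2 * ux p * φ p +
      a p.2 * (ux p * fderiv ℝ φ p (1, 0) + uy p * fderiv ℝ φ p (0, 1)))) =
    ∫ y : ℝ, c * g y * φ (v y, y)

/-- `u` is a variational solution of the temperature problem associated with `(c, v)`. -/
def IsVarSol (Y : ℝ) (a b g : ℝ → ℝ) (c : ℝ) (v : ℝ → ℝ) (u : ℝ × ℝ → ℝ) : Prop :=
  ∃ ux uy : ℝ × ℝ → ℝ, IsVarSolWith Y a b g c v u ux uy

/-- `(c, v, u)` is a travelling wave solution of the combustion free-boundary problem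
with curvature coefficient `μ`: `v ∈ W^{2,∞}` is `Y`-periodic, `u` is continuous,
nonnegative and `Y`-periodic in `y` on `{x ≤ v(y)}`, its restriction to `{x < v(y)}` is a
variational solution of the temperature problem, and the front equation holds a.e. -/
def IsTW (Y μ : ℝ) (a b g : ℝ → ℝ) (R : ℝ → ℝ → ℝ) (c : ℝ) (v : ℝ → ℝ)
    (u : ℝ × ℝ → ℝ) : Prop :=
  (∀ y, DifferentiableAt ℝ v y) ∧ (∃ K, LipschitzWith K (deriv v)) ∧
  Function.Periodic v Y ∧
  ContinuousOn u {p : ℝ × ℝ | p.1 ≤ v p.2} ∧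
  (∀ p : ℝ × ℝ, p.1 ≤ v p.2 → 0 ≤ u p) ∧
  PerY Y u ∧
  IsVarSol Y a b g c v u ∧
  ∀ᵐ y : ℝ, -c + R y (u (v y, y)) * Real.sqrt (1 + deriv v y ^ 2) =
      μ * deriv (deriv v) y / (1 + deriv v y ^ 2)

/-- Standing assumptions (A3)–(A6) on the combustion rate `R`, with upper bound `RM`. -/
def StandingR (Y RM : ℝ) (R : ℝ → ℝ → ℝ) : Prop :=
  (∀ᵐ y : ℝ, ContinuousOn (R y) (Set.Ioi 0) ∧ MonotoneOn (R y) (Set.Ioi 0)) ∧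
  (∀ T : ℝ, 0 < T → Measurable (fun y => R y T) ∧ Function.Periodic (fun y => R y T) Y) ∧
  (∀ᵐ y : ℝ, ∀ T : ℝ, 0 < T → 0 < R y T ∧ R y T ≤ RM) ∧
  (∀ T : ℝ, 0 < T → 0 < essInf (fun y => R y T) volume)

/-! ### Geometry of the front -/

/-- A Lipschitz function whose a.e. derivative dominates a continuous `F` is strictly increasing near
any point where `F` is positive. -/
lemma lip_strict_incr {p F : ℝ → ℝ} (hp : ∃ K, LipschitzWith K p) (hF : Continuous F)
    (h : ∀ᵐ y : ℝ, F y ≤ deriv p y) {y0 : ℝ} (h0 : 0 < F y0) :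
    ∃ d > 0, ∀ s t, y0 - d ≤ s → s < t → t ≤ y0 + d → p s < p t := by
  obtain ⟨K, hK⟩ := hp
  have hev : ∀ᶠ y in nhds y0, F y0 / 2 < F y :=
    hF.continuousAt.eventually (lt_mem_nhds (by linarith))
  obtain ⟨d, hd, hball⟩ := Metric.eventually_nhds_iff.1 hev
  refine ⟨d / 2, by linarith, fun s t hs hst ht => ?_⟩
  have hac : AbsolutelyContinuousOnInterval p s t :=
    (hK.lipschitzOnWith (s := Set.uIcc s t)).absolutelyContinuousOnInterval
  have hle : ∫ y in s..t, F y0 / 2 ≤ ∫ y in s..t, deriv p y := by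
    refine intervalIntegral.integral_mono_ae_restrict hst.le ?_ ?_ ?_
    · simp
    · exact hac.intervalIntegrable_deriv
    · filter_upwards [ae_restrict_mem measurableSet_Icc, ae_restrict_of_ae h] with y hy hy'
      have : y ∈ Metric.ball y0 d := by
        rw [Metric.mem_ball, Real.dist_eq, abs_lt]
        constructor <;> linarith [hy.1, hy.2]
      exact (hball this).le.trans hy'
  rw [hac.integral_deriv_eq_sub] at hle
  simp at hle
  nlinarith [mul_pos (sub_pos.2 hst) h0]

/-- The speed is at most `RM`.  At a minimum of `v` the slope vanishes, so if `c > RM` the front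
equation would make `v'` strictly decreasing there, contradicting minimality.  Strict monotonicity
on an interval is used because `v''` exists only almost everywhere. -/
lemma front_speed_le {Y μ c RM : ℝ} {v ρ : ℝ → ℝ} (hY : 0 < Y) (hμ : 0 < μ)
    (hv : ∀ y, DifferentiableAt ℝ v y) (hlip : ∃ K, LipschitzWith K (deriv v))
    (hper : Function.Periodic v Y) (hρ : ∀ᵐ y : ℝ, ρ y ≤ RM)
    (heq : ∀ᵐ y : ℝ, -c + ρ y * Real.sqrt (1 + deriv v y ^ 2) =
      μ * deriv (deriv v) y / (1 + deriv v y ^ 2)) : c ≤ RM := by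
  by_contra! hc
  have hpc : Continuous (deriv v) := hlip.choose_spec.continuous
  have hvc : Continuous v := continuous_iff_continuousAt.2 fun y => (hv y).continuousAt
  obtain ⟨y0, hy0⟩ : ∃ y0, ∀ y, v y0 ≤ v y := by
    obtain ⟨y0, -, h⟩ := (isCompact_Icc (a := (0:ℝ)) (b := Y)).exists_isMinOn
      ⟨0, by simp [hY.le]⟩ hvc.continuousOn
    refine ⟨y0, fun y => ?_⟩
    obtain ⟨z, hz, e⟩ := hper.exists_mem_Ico₀ hY y
    rw [e]; exact h ⟨hz.1, hz.2.le⟩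
  have hp0 : deriv v y0 = 0 := IsLocalMin.deriv_eq_zero (Filter.Eventually.of_forall hy0)
  obtain ⟨d, hd, hinc⟩ := lip_strict_incr (p := fun y => -deriv v y)
    (F := fun y => (1 + deriv v y ^ 2) / μ * (c - RM * Real.sqrt (1 + deriv v y ^ 2)))
    (y0 := y0) (by obtain ⟨K, hK⟩ := hlip; exact ⟨K, hK.neg⟩) (by fun_prop) (by
      filter_upwards [hρ, heq] with y h1 h2
      have h3 : 0 < 1 + deriv v y ^ 2 := by positivity
      have h4 := mul_le_mul_of_nonneg_right h1 (Real.sqrt_nonneg (1 + deriv v y ^ 2))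
      rw [show deriv (fun y => - deriv v y) y = - deriv (deriv v) y from deriv.fun_neg]
      rw [eq_div_iff h3.ne'] at h2
      have h5 : -deriv (deriv v) y = (1 + deriv v y ^ 2) / μ *
        (c - ρ y * Real.sqrt (1 + deriv v y ^ 2)) := by
        field_simp; linarith
      rw [h5]
      gcongr) (by
      rw [hp0]
      have : 0 < c - RM := by linarith
      simp only [ne_eq, OfNat.ofNat_ne_zero, not_false_eq_true, zero_pow, add_zero, Real.sqrt_one,
        mul_one]
      positivity)
  have hanti : StrictAntiOn v (Set.Icc y0 (y0 + d)) := by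
    apply strictAntiOn_of_deriv_neg (convex_Icc _ _) hvc.continuousOn
    intro x hx
    rw [interior_Icc] at hx
    have := hinc y0 x (by linarith) hx.1 hx.2.le
    simp only [hp0] at this; linarith
  have h1 := hanti (Set.left_mem_Icc.2 (by linarith)) (Set.right_mem_Icc.2 (by linarith))
    (by linarith : y0 < y0 + d)
  linarith [hy0 (y0 + d)]

/-- If the combustion rate along the front is at least `r`, then `|v'| ≤ c / r`.  At a maximum of
`v' ^ 2` one has `r √(1 + v' ^ 2) ≤ c`, since otherwise `v'` would be strictly increasing there. -/
lemma front_slope_le {Y μ c r : ℝ} {v ρ : ℝ → ℝ} (hY : 0 < Y) (hμ : 0 < μ) (hr : 0 < r)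
    (hlip : ∃ K, LipschitzWith K (deriv v))
    (hper : Function.Periodic v Y) (hρ : ∀ᵐ y : ℝ, r ≤ ρ y)
    (heq : ∀ᵐ y : ℝ, -c + ρ y * Real.sqrt (1 + deriv v y ^ 2) =
      μ * deriv (deriv v) y / (1 + deriv v y ^ 2)) (y : ℝ) : |deriv v y| ≤ c / r := by
  have hpc : Continuous (deriv v) := hlip.choose_spec.continuous
  have hperd : Function.Periodic (deriv v) Y := by
    intro y
    rw [← deriv_comp_add_const]
    congr 1; ext z; exact hper z
  obtain ⟨y0, hy0⟩ : ∃ y0, ∀ y, deriv v y ^ 2 ≤ deriv v y0 ^ 2 := by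
    obtain ⟨y0, -, h⟩ := (isCompact_Icc (a := (0:ℝ)) (b := Y)).exists_isMaxOn
      ⟨0, by simp [hY.le]⟩ (hpc.pow 2).continuousOn
    refine ⟨y0, fun y => ?_⟩
    obtain ⟨z, hz, e⟩ := hperd.exists_mem_Ico₀ hY y
    rw [e]; exact h ⟨hz.1, hz.2.le⟩
  have key : r * Real.sqrt (1 + deriv v y0 ^ 2) ≤ c := by
    by_contra! hc
    obtain ⟨d, hd, hinc⟩ := lip_strict_incr (p := deriv v)
      (F := fun y => (1 + deriv v y ^ 2) / μ * (r * Real.sqrt (1 + deriv v y ^ 2) - c))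
      (y0 := y0) hlip (by fun_prop) (by
        filter_upwards [hρ, heq] with y h1 h2
        have h3 : 0 < 1 + deriv v y ^ 2 := by positivity
        rw [eq_div_iff h3.ne'] at h2
        have h5 : deriv (deriv v) y = (1 + deriv v y ^ 2) / μ *
          (ρ y * Real.sqrt (1 + deriv v y ^ 2) - c) := by
          field_simp; linarith
        rw [h5]
        gcongr) (mul_pos (by positivity) (by linarith))
    rcases le_total 0 (deriv v y0) with h | h
    · have h1 := hinc y0 (y0 + d) (by linarith) (by linarith) le_rfl
      nlinarith [hy0 (y0 + d)]
    · have h1 := hinc (y0 - d) y0 le_rfl (by linarith) (by linarith)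
      nlinarith [hy0 (y0 - d)]
  rw [le_div_iff₀ hr]
  have h1 : |deriv v y| ≤ Real.sqrt (1 + deriv v y0 ^ 2) :=
    Real.abs_le_sqrt (by linarith [hy0 y])
  nlinarith

lemma front_osc_le {Y L : ℝ} {v : ℝ → ℝ} (hY : 0 < Y) (hv : ∀ y, DifferentiableAt ℝ v y)
    (hper : Function.Periodic v Y) (hL : ∀ y, |deriv v y| ≤ L) (y z : ℝ) :
    v y - v z ≤ L * Y := by
  obtain ⟨w, hw, e⟩ := hper.exists_mem_Ico hY y z
  rw [e]
  have h := Convex.norm_image_sub_le_of_norm_deriv_le (f := v) (C := L) (s := Set.univ)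
    (fun x _ => hv x) (fun x _ => hL x) convex_univ (Set.mem_univ z) (Set.mem_univ w)
  have hL0 : 0 ≤ L := (abs_nonneg _).trans (hL 0)
  have h1 : |w - z| ≤ Y := by rw [abs_of_nonneg (by linarith [hw.1])]; linarith [hw.2]
  have := (le_abs_self _).trans h
  exact this.trans (mul_le_mul_of_nonneg_left h1 hL0)

/-! ### Mollification in `L²` -/

open scoped ENNReal in
lemma eLpNorm_two_rpow (f : ℝ × ℝ → ℝ) (ν : Measure (ℝ × ℝ)) :
    eLpNorm f 2 ν ^ (2:ℝ) = ∫⁻ q, ‖f q‖ₑ ^ (2:ℝ) ∂ν := by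
  rw [eLpNorm_eq_lintegral_rpow_enorm_toReal (by norm_num) (by norm_num), ENNReal.toReal_ofNat,
    ← ENNReal.rpow_mul]
  norm_num

open scoped ENNReal in
/-- Continuity of translations in `L²(ℝ²)`. -/
lemma translate_L2 {h : ℝ × ℝ → ℝ} (hm : MemLp h 2 volume) {ε : ℝ≥0∞} (hε : 0 < ε) :
    ∃ r : ℝ, 0 < r ∧ ∀ q : ℝ × ℝ, ‖q‖ < r →
      eLpNorm (fun p => h (p - q) - h p) 2 volume ≤ ε := by
  have : Fact ((1 : ℝ≥0∞) ≤ 2) := ⟨by norm_num⟩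
  have : Fact ((2 : ℝ≥0∞) ≠ ∞) := ⟨by norm_num⟩
  have hcont : Continuous (fun c : ℝ × ℝ => (DomAddAct.mk c) +ᵥ (hm.toLp h)) :=
    (DomAddAct.continuous_mk (M := ℝ × ℝ)).vadd continuous_const
  have h0 := EMetric.tendsto_nhds.1 (hcont.tendsto 0) ε hε
  obtain ⟨r, hr, hball⟩ := Metric.eventually_nhds_iff.1 h0
  refine ⟨r, hr, fun q hq => ?_⟩
  have h1 := (hball (y := -q) (by simpa using hq)).le
  rw [DomAddAct.mk_vadd_toLp, DomAddAct.mk_vadd_toLp, Lp.edist_toLp_toLp] at h1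
  refine le_trans (le_of_eq ?_) h1
  congr 1
  ext p
  simp [sub_eq_neg_add]

open scoped ENNReal in
/-- Mollification by any probability density concentrated near the origin is close to the identity
in `L²(ℝ²)`.  The density need not be centred, which allows supports in a one-sided cone. -/
lemma mollify_L2 {h : ℝ × ℝ → ℝ} (hm : MemLp h 2 volume) {ε : ℝ≥0∞} (hε : 0 < ε) :
    ∃ r : ℝ, 0 < r ∧ ∀ ρ : ℝ × ℝ → ℝ, Continuous ρ → HasCompactSupport ρ → (∀ q, 0 ≤ ρ q) →
      (∫ q, ρ q) = 1 → (∀ q, ρ q ≠ 0 → ‖q‖ < r) →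
      eLpNorm (fun p => (∫ q, ρ q * h (p - q)) - h p) 2 volume ≤ ε := by
  obtain ⟨r, hr, hr'⟩ := translate_L2 hm hε
  refine ⟨r, hr, fun ρ hρc hρs hρ0 hρ1 hρr => ?_⟩
  set k := hm.1.mk h with hk
  have hkm : StronglyMeasurable k := hm.1.stronglyMeasurable_mk
  have hke : h =ᵐ[volume] k := hm.1.ae_eq_mk
  have hmk : MemLp k 2 volume := hm.ae_eq hke
  set ν : Measure (ℝ × ℝ) := volume.withDensity (fun q => ENNReal.ofReal (ρ q)) with hν
  have hρi : Integrable ρ := hρc.integrable_of_hasCompactSupport hρs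
  have : IsProbabilityMeasure ν := ⟨by
    rw [hν, withDensity_apply _ MeasurableSet.univ, Measure.restrict_univ,
      ← ofReal_integral_eq_lintegral_ofReal hρi (ae_of_all _ hρ0), hρ1, ENNReal.ofReal_one]⟩
  have hmeas : Measurable (fun q => ENNReal.ofReal (ρ q)) := by fun_prop
  -- pointwise Jensen inequality
  have hJ : ∀ p, ‖(∫ q, ρ q * h (p - q)) - k p‖ₑ ^ (2:ℝ) ≤
      ∫⁻ q, ENNReal.ofReal (ρ q) * ‖k (p - q) - k p‖ₑ ^ (2:ℝ) := by
    intro p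
    have e1 : (∫ q, ρ q * h (p - q)) = ∫ q, ρ q * k (p - q) := by
      apply integral_congr_ae
      have := (Measure.measurePreserving_sub_left volume p).quasiMeasurePreserving.ae hke
      filter_upwards [this] with q hq
      rw [hq]
    have hi : Integrable (fun q => ρ q * k (p - q)) := by
      have hl : LocallyIntegrable (fun q => k (p - q)) := by
        have : MemLp (fun q => k (p - q)) 2 volume :=
          hmk.comp_measurePreserving (Measure.measurePreserving_sub_left volume p)
        exact this.locallyIntegrable (by norm_num)
      exact hl.integrable_smul_left_of_hasCompactSupport hρc hρs
    have e2 : (∫ q, ρ q * k (p - q)) - k p = ∫ q, (k (p - q) - k p) ∂ν := by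
      rw [hν, integral_withDensity_eq_integral_toReal_smul hmeas (ae_of_all _ fun _ => by simp)]
      simp only [ENNReal.toReal_ofReal (hρ0 _), smul_eq_mul, mul_sub]
      rw [integral_sub hi (hρi.mul_const _), integral_mul_const, hρ1, one_mul]
    rw [e1, e2]
    have hsm : AEStronglyMeasurable (fun q => k (p - q) - k p) ν :=
      ((hkm.comp_measurable (by fun_prop)).sub stronglyMeasurable_const).aestronglyMeasurable
    have h1 : ‖∫ q, (k (p - q) - k p) ∂ν‖ₑ ≤ eLpNorm (fun q => k (p - q) - k p) 2 ν :=
      (enorm_integral_le_lintegral_enorm _).trans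
        (by rw [← eLpNorm_one_eq_lintegral_enorm]
            exact eLpNorm_le_eLpNorm_of_exponent_le (by norm_num) hsm)
    calc _ ≤ (eLpNorm (fun q => k (p - q) - k p) 2 ν) ^ (2:ℝ) := by gcongr
      _ = ∫⁻ q, ‖k (p - q) - k p‖ₑ ^ (2:ℝ) ∂ν := eLpNorm_two_rpow _ _
      _ = _ := by
        rw [hν, lintegral_withDensity_eq_lintegral_mul _ hmeas]
        · rfl
        · have : Measurable (fun q => k (p - q) - k p) :=
            ((hkm.comp_measurable (by fun_prop)).sub stronglyMeasurable_const).measurable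
          fun_prop
  have hfin : (∫⁻ p, ‖(∫ q, ρ q * h (p - q)) - k p‖ₑ ^ (2:ℝ)) ≤ ε ^ (2:ℝ) := by
    calc _ ≤ ∫⁻ p, ∫⁻ q, ENNReal.ofReal (ρ q) * ‖k (p - q) - k p‖ₑ ^ (2:ℝ) := lintegral_mono hJ
      _ = ∫⁻ q, ∫⁻ p, ENNReal.ofReal (ρ q) * ‖k (p - q) - k p‖ₑ ^ (2:ℝ) := by
        apply lintegral_lintegral_swap
        have h1 : Measurable (fun z : (ℝ × ℝ) × (ℝ × ℝ) => k (z.1 - z.2) - k z.1) :=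
          ((hkm.comp_measurable (by fun_prop)).sub
            (hkm.comp_measurable (by fun_prop))).measurable
        have h2 : Measurable (fun z : (ℝ × ℝ) × (ℝ × ℝ) => ENNReal.ofReal (ρ z.2)) := by fun_prop
        exact (h2.mul (h1.enorm.pow_const _)).aemeasurable
      _ ≤ ∫⁻ q, ENNReal.ofReal (ρ q) * ε ^ (2:ℝ) := by
        apply lintegral_mono
        intro q
        beta_reduce
        rw [lintegral_const_mul' _ _ (by simp)]
        by_cases hq : ρ q = 0
        · simp [hq]
        · gcongr
          have h3 := hr' q (hρr q hq)
          have h4 : eLpNorm (fun p => k (p - q) - k p) 2 volume ≤ ε := by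
            refine le_trans (le_of_eq (eLpNorm_congr_ae ?_)) h3
            have := (measurePreserving_sub_right volume q).quasiMeasurePreserving.ae hke
            filter_upwards [this, hke] with p h5 h6
            rw [h5, h6]
          calc _ = (eLpNorm (fun p => k (p - q) - k p) 2 volume) ^ (2:ℝ) := (eLpNorm_two_rpow _ _).symm
            _ ≤ _ := by gcongr
      _ = ε ^ (2:ℝ) := by
        rw [lintegral_mul_const _ hmeas,
          ← ofReal_integral_eq_lintegral_ofReal hρi (ae_of_all _ hρ0), hρ1, ENNReal.ofReal_one,
          one_mul]
  have e3 : eLpNorm (fun p => (∫ q, ρ q * h (p - q)) - h p) 2 volume =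
      eLpNorm (fun p => (∫ q, ρ q * h (p - q)) - k p) 2 volume := by
    apply eLpNorm_congr_ae
    filter_upwards [hke] with p hp
    rw [hp]
  rw [e3]
  rwa [← eLpNorm_two_rpow, ENNReal.rpow_le_rpow_iff (by norm_num)] at hfin

/-! ### Integration over the subgraph -/

lemma measurableSet_Omg {v : ℝ → ℝ} (hv : Continuous v) : MeasurableSet (Omg v) :=
  measurableSet_lt measurable_fst (by fun_prop)

lemma ae_snd {P : ℝ → Prop} (h : ∀ᵐ y : ℝ, P y) : ∀ᵐ p : ℝ × ℝ, P p.2 :=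
  (Measure.quasiMeasurePreserving_snd (μ := (volume : Measure ℝ))
    (ν := (volume : Measure ℝ))).ae h

lemma integrable_coeff_mul {β : ℝ → ℝ} (hβ : Measurable β) {B : ℝ} (hB : ∀ᵐ y : ℝ, |β y| ≤ B)
    {F : ℝ × ℝ → ℝ} (hF : Continuous F) (hFs : HasCompactSupport F) :
    Integrable (fun p : ℝ × ℝ => β p.2 * F p) := by
  refine (hF.integrable_of_hasCompactSupport hFs).bdd_mul (c := B) ?_ ?_
  · exact (hβ.comp measurable_snd).aestronglyMeasurable
  · exact ae_snd hB

lemma continuous_fderiv_apply' {Ψ : ℝ × ℝ → ℝ} (h : ContDiff ℝ 1 Ψ) (e : ℝ × ℝ) :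
    Continuous (fun p => fderiv ℝ Ψ p e) :=
  (h.continuous_fderiv one_ne_zero).clm_apply continuous_const

/-- Integration by parts in `x` over the subgraph: the `x`-derivative of `Ψ` integrates to its trace
on the front. -/
lemma fubini_dx {v : ℝ → ℝ} (hv : Continuous v) {β : ℝ → ℝ} (hβ : Measurable β) {B : ℝ}
    (hB : ∀ᵐ y : ℝ, |β y| ≤ B) {Ψ : ℝ × ℝ → ℝ} (hΨ : ContDiff ℝ 1 Ψ)
    (hΨs : HasCompactSupport Ψ) :
    ∫ p in Omg v, β p.2 * fderiv ℝ Ψ p (1, 0) = ∫ y : ℝ, β y * Ψ (v y, y) := by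
  have hcs : HasCompactSupport (fun p => fderiv ℝ Ψ p (1, 0)) := hΨs.fderiv_apply (𝕜 := ℝ) _
  have hintg := integrable_coeff_mul hβ hB (continuous_fderiv_apply' hΨ (1, 0)) hcs
  rw [← integral_indicator (measurableSet_Omg hv), Measure.volume_eq_prod,
    integral_prod_symm _ (by
      rw [← Measure.volume_eq_prod]; exact hintg.indicator (measurableSet_Omg hv))]
  congr 1
  ext y
  have e : (fun x => (Omg v).indicator (fun p : ℝ × ℝ => β p.2 * fderiv ℝ Ψ p (1, 0)) (x, y)) =
      (Set.Iio (v y)).indicator (fun x => β y * fderiv ℝ Ψ (x, y) (1, 0)) := by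
    ext x
    by_cases hx : x < v y
    · rw [Set.indicator_of_mem (show (x, y) ∈ Omg v from hx), Set.indicator_of_mem (Set.mem_Iio.2 hx)]
    · rw [Set.indicator_of_notMem (show (x, y) ∉ Omg v from hx), Set.indicator_of_notMem (Set.notMem_Iio.2 (not_lt.1 hx))]
  rw [e, integral_indicator measurableSet_Iio, ← integral_Iic_eq_integral_Iio, integral_const_mul]
  congr 1
  have hline : Topology.IsClosedEmbedding (fun x : ℝ => (x, y)) :=
    Topology.IsClosedEmbedding.of_continuous_injective_isClosedMap (by fun_prop)
      (fun _ _ h => (Prod.mk.inj h).1) (isClosedMap_prodMk_right y)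
  have hd : ∀ x, HasDerivAt (fun x => Ψ (x, y)) (fderiv ℝ Ψ (x, y) (1, 0)) x := by
    intro x
    have h1 := (hΨ.differentiable one_ne_zero (x, y)).hasFDerivAt
    exact h1.comp_hasDerivAt x ((hasDerivAt_id x).prodMk (hasDerivAt_const x y))
  have hs' : HasCompactSupport (fun x => fderiv ℝ Ψ (x, y) (1, 0)) :=
    hcs.comp_isClosedEmbedding hline
  have hs : HasCompactSupport (fun x => Ψ (x, y)) := hΨs.comp_isClosedEmbedding hline
  have hlim : Tendsto (fun x => Ψ (x, y)) atBot (nhds 0) := by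
    have := hs.is_zero_at_infty
    exact this.mono_left atBot_le_cocompact
  have hcont : Continuous (fun x => fderiv ℝ Ψ (x, y) (1, 0)) :=
    (continuous_fderiv_apply' hΨ (1, 0)).comp (by fun_prop)
  rw [integral_Iic_of_hasDerivAt_of_tendsto' (fun x _ => hd x)
    (hcont.integrable_of_hasCompactSupport hs').integrableOn hlim, sub_zero]

lemma isClosedEmbedding_graph {v : ℝ → ℝ} (hv : Continuous v) :
    Topology.IsClosedEmbedding (fun y : ℝ => (v y, y)) :=
  Function.LeftInverse.isClosedEmbedding (f := Prod.snd) (fun _ => rfl) continuous_snd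
    (by fun_prop)

/-- The integrand of the variational identity tested against `φ`. -/
def varInt (a b : ℝ → ℝ) (c : ℝ) (ux uy φ : ℝ × ℝ → ℝ) (p : ℝ × ℝ) : ℝ :=
  c * b p.2 * ux p * φ p + a p.2 * (ux p * fderiv ℝ φ p (1, 0) + uy p * fderiv ℝ φ p (0, 1))

lemma integrable_front {v : ℝ → ℝ} (hv : Continuous v) {g : ℝ → ℝ} (hg : Measurable g) {B : ℝ}
    (hB : ∀ᵐ y : ℝ, |g y| ≤ B) {φ : ℝ × ℝ → ℝ} (hφ : Continuous φ)
    (hφs : HasCompactSupport φ) : Integrable (fun y : ℝ => g y * φ (v y, y)) := by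
  have hc : Continuous (fun y : ℝ => φ (v y, y)) := hφ.comp (by fun_prop)
  have hs : HasCompactSupport (fun y : ℝ => φ (v y, y)) :=
    hφs.comp_isClosedEmbedding (isClosedEmbedding_graph hv)
  exact (hc.integrable_of_hasCompactSupport hs).bdd_mul hg.aestronglyMeasurable hB

/-- The variational identity alone forces its integrand to be integrable.  A non-integrable integrand
has Bochner integral `0`; adding a bump with positive front integral to such a test function
keeps the integrand non-integrable but makes the two right-hand sides differ. -/
lemma varInt_integrable {a b g : ℝ → ℝ} {c gm gM : ℝ} {v : ℝ → ℝ} {ux uy : ℝ × ℝ → ℝ}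
    (hv : Continuous v) (hg : Measurable g) (hgm : 0 < gm) (hc : 0 < c)
    (hgb : ∀ᵐ y : ℝ, gm ≤ g y ∧ g y ≤ gM)
    (hvar : ∀ φ : ℝ × ℝ → ℝ, ContDiff ℝ 1 φ → HasCompactSupport φ →
      ∫ p in Omg v, varInt a b c ux uy φ p = ∫ y : ℝ, c * g y * φ (v y, y))
    {φ : ℝ × ℝ → ℝ} (hφ : ContDiff ℝ 1 φ) (hφs : HasCompactSupport φ) :
    IntegrableOn (varInt a b c ux uy φ) (Omg v) := by
  have hgb' : ∀ᵐ y : ℝ, |c * g y| ≤ c * gM := by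
    filter_upwards [hgb] with y hy
    rw [abs_of_nonneg (mul_nonneg hc.le (hgm.le.trans hy.1))]
    exact mul_le_mul_of_nonneg_left hy.2 hc.le
  have hcg : Measurable (fun y => c * g y) := hg.const_mul c
  let f : ContDiffBump ((v 0, 0) : ℝ × ℝ) := ⟨1, 2, by norm_num, by norm_num⟩
  have hf : ContDiff ℝ 1 f := f.contDiff
  have hfs : HasCompactSupport f := f.hasCompactSupport
  have hpos : 0 < ∫ y : ℝ, c * g y * f (v y, y) := by
    have h1 : 0 < ∫ y : ℝ, c * gm * f (v y, y) := by
      have hc1 : Continuous (fun y : ℝ => c * gm * f (v y, y)) :=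
        continuous_const.mul (f.continuous.comp (by fun_prop))
      refine hc1.integral_pos_of_hasCompactSupport_nonneg_nonzero ?_ ?_ (x := 0) ?_
      · exact (hfs.comp_isClosedEmbedding (isClosedEmbedding_graph hv)).mul_left
      · intro y; exact mul_nonneg (by positivity) f.nonneg
      · have : f ((v 0, 0) : ℝ × ℝ) = 1 := f.one_of_mem_closedBall (Metric.mem_closedBall_self (by simp [f]))
        rw [this]; positivity
    refine h1.trans_le (integral_mono_ae ?_ ?_ ?_)
    · exact integrable_front hv (g := fun _ => c * gm) measurable_const
        (ae_of_all _ fun _ => le_rfl) f.continuous hfs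
    · exact integrable_front hv hcg hgb' f.continuous hfs
    · filter_upwards [hgb] with y hy
      have := f.nonneg (x := (v y, y))
      gcongr
      exact hy.1
  have hfi : IntegrableOn (varInt a b c ux uy f) (Omg v) := by
    by_contra hn
    have := hvar f hf hfs
    rw [integral_undef hn] at this
    linarith
  by_contra hn
  have h1 := hvar φ hφ hφs
  rw [integral_undef hn] at h1
  have hn2 : ¬ IntegrableOn (varInt a b c ux uy (φ + ⇑f)) (Omg v) := by
    intro h2
    refine hn ((h2.sub hfi).congr (ae_of_all _ fun p => ?_))
    have e : fderiv ℝ (φ + ⇑f) p = fderiv ℝ φ p + fderiv ℝ f p :=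
      fderiv_add (hφ.differentiable one_ne_zero p) (hf.differentiable one_ne_zero p)
    simp only [varInt, Pi.sub_apply, Pi.add_apply, e, _root_.add_apply]
    ring
  have h3 := hvar (φ + ⇑f) (hφ.add hf) (hφs.add hfs)
  rw [integral_undef hn2] at h3
  have h4 : ∫ y : ℝ, c * g y * (φ + ⇑f) (v y, y) =
      (∫ y : ℝ, c * g y * φ (v y, y)) + ∫ y : ℝ, c * g y * f (v y, y) := by
    rw [← integral_add (integrable_front hv hcg hgb' hφ.continuous hφs)
      (integrable_front hv hcg hgb' f.continuous hfs)]
    congr 1; ext y; simp only [Pi.add_apply]; ring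
  linarith

/-- Measurability of the weak gradient.  Testing with `φ = 1` on a ball recovers `c b ux` from the
integrand, and testing with `φ = y` then recovers `a uy`. -/
lemma aesm_grad {a b : ℝ → ℝ} {c am bm : ℝ} {v : ℝ → ℝ} {ux uy : ℝ × ℝ → ℝ}
    (ha : Measurable a) (hb : Measurable b) (ham : 0 < am) (hbm : 0 < bm) (hc : 0 < c)
    (hab : ∀ᵐ y : ℝ, am ≤ a y) (hbb : ∀ᵐ y : ℝ, bm ≤ b y)
    (hintg : ∀ φ : ℝ × ℝ → ℝ, ContDiff ℝ 1 φ → HasCompactSupport φ →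
      IntegrableOn (varInt a b c ux uy φ) (Omg v)) :
    AEStronglyMeasurable ux (volume.restrict (Omg v)) ∧
    AEStronglyMeasurable uy (volume.restrict (Omg v)) := by
  have hU : Omg v = ⋃ k : ℕ, (Omg v ∩ Metric.ball 0 (k + 1)) := by
    rw [← Set.inter_iUnion, eq_comm, Set.inter_eq_left]
    intro p _
    obtain ⟨k, hk⟩ := exists_nat_gt ‖p‖
    exact Set.mem_iUnion.2 ⟨k, by simp; linarith⟩
  have hX : ∀ k : ℕ, AEStronglyMeasurable ux
      (volume.restrict (Omg v ∩ Metric.ball 0 ((k : ℝ) + 1))) := by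
    intro k
    let f : ContDiffBump (0 : ℝ × ℝ) := ⟨k + 1, k + 2, by positivity, by linarith⟩
    have h1 := ((hintg f f.contDiff f.hasCompactSupport).mono_set
      (Set.inter_subset_left (t := Metric.ball 0 ((k : ℝ) + 1)))).aestronglyMeasurable
    have h2 : AEStronglyMeasurable (fun p => varInt a b c ux uy f p * (c * b p.2)⁻¹)
        (volume.restrict (Omg v ∩ Metric.ball 0 ((k : ℝ) + 1))) :=
      h1.mul (Measurable.aestronglyMeasurable (by fun_prop))
    refine h2.congr ?_
    filter_upwards [ae_restrict_of_ae_restrict_of_subset Set.inter_subset_right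
        (ae_restrict_mem Metric.isOpen_ball.measurableSet),
      ae_restrict_of_ae (ae_snd hbb)] with p hp hbp
    have e1 : f =ᶠ[nhds p] fun _ => 1 := by
      filter_upwards [Metric.isOpen_ball.mem_nhds hp] with q hq
      exact f.one_of_mem_closedBall (Metric.ball_subset_closedBall hq)
    have e2 : fderiv ℝ f p = 0 := by rw [e1.fderiv_eq]; simp
    have hbp' : 0 < b p.2 := hbm.trans_le hbp
    simp only [varInt, e1.eq_of_nhds, e2]
    simp
    field_simp
  have hY : ∀ k : ℕ, AEStronglyMeasurable uy
      (volume.restrict (Omg v ∩ Metric.ball 0 ((k : ℝ) + 1))) := by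
    intro k
    let f : ContDiffBump (0 : ℝ × ℝ) := ⟨k + 1, k + 2, by positivity, by linarith⟩
    have hφs : HasCompactSupport (fun p : ℝ × ℝ => p.2 * f p) := f.hasCompactSupport.mul_left
    have hφ : ContDiff ℝ 1 (fun p : ℝ × ℝ => p.2 * f p) := contDiff_snd.mul f.contDiff
    have h1 := ((hintg _ hφ hφs).mono_set
      (Set.inter_subset_left (t := Metric.ball 0 ((k : ℝ) + 1)))).aestronglyMeasurable
    have h2 : AEStronglyMeasurable (fun p => (varInt a b c ux uy (fun p => p.2 * f p) p -
          (c * b p.2 * p.2) * ux p) * (a p.2)⁻¹)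
        (volume.restrict (Omg v ∩ Metric.ball 0 ((k : ℝ) + 1))) :=
      (h1.sub ((Measurable.aestronglyMeasurable (by fun_prop)).mul (hX k))).mul
        (Measurable.aestronglyMeasurable (by fun_prop))
    refine h2.congr ?_
    filter_upwards [ae_restrict_of_ae_restrict_of_subset Set.inter_subset_right
        (ae_restrict_mem Metric.isOpen_ball.measurableSet),
      ae_restrict_of_ae (ae_snd hab)] with p hp hap
    have e1 : (fun p : ℝ × ℝ => p.2 * f p) =ᶠ[nhds p] fun p => p.2 := by
      filter_upwards [Metric.isOpen_ball.mem_nhds hp] with q hq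
      rw [f.one_of_mem_closedBall (Metric.ball_subset_closedBall hq), mul_one]
    have e2 : fderiv ℝ (fun p : ℝ × ℝ => p.2 * f p) p = ContinuousLinearMap.snd ℝ ℝ ℝ := by
      rw [e1.fderiv_eq]; exact fderiv_snd
    have hap' : 0 < a p.2 := ham.trans_le hap
    have e3 := e1.eq_of_nhds
    simp only [varInt, e2, e3]
    simp
    field_simp
    ring
  constructor
  · rw [hU]; exact aestronglyMeasurable_iUnion_iff.2 hX
  · rw [hU]; exact aestronglyMeasurable_iUnion_iff.2 hY

/-! ### Periodic functions on strips -/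

/-- A `Y`-periodic function that is square integrable on one cell is square integrable on every
horizontal strip of the subgraph. -/
lemma strip_memLp {Y : ℝ} (hY : 0 < Y) {v : ℝ → ℝ} (hv : Continuous v)
    (hper : Function.Periodic v Y) {w : ℝ × ℝ → ℝ} (hw : PerY Y w)
    (hw2 : IntegrableOn (fun p => w p ^ 2) (OmgS Y v))
    (hwm : AEStronglyMeasurable w (volume.restrict (Omg v))) (m : ℝ) :
    MemLp ((Omg v ∩ {p | |p.2| < m}).indicator w) 2 volume := by
  have hΩ := measurableSet_Omg hv
  have hs : MeasurableSet {p : ℝ × ℝ | |p.2| < m} :=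
    measurableSet_lt (by fun_prop) measurable_const
  set G : ℝ × ℝ → ℝ := (Omg v).indicator (fun p => w p ^ 2) with hG
  let C : ℤ → Set (ℝ × ℝ) := fun k => {p | k * Y < p.2 ∧ p.2 ≤ (k + 1) * Y}
  have hC0 : IntegrableOn G (C 0) := by
    have hm : MeasurableSet (C 0) := by
      refine MeasurableSet.inter (measurableSet_lt measurable_const measurable_snd)
        (measurableSet_le measurable_snd measurable_const)
    rw [hG, IntegrableOn, integrable_indicator_iff hΩ, IntegrableOn,
      Measure.restrict_restrict hΩ]
    refine IntegrableOn.congr_set_ae hw2 ?_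
    have h1 : ∀ᵐ p : ℝ × ℝ, p.2 ≠ Y := ae_snd (P := fun y => y ≠ Y) (by simp [ae_iff])
    filter_upwards [h1] with p hp
    apply propext
    change (p.1 < v p.2 ∧ ((0:ℤ):ℝ) * Y < p.2 ∧ p.2 ≤ (((0:ℤ):ℝ) + 1) * Y) ↔ (p.1 < v p.2 ∧ 0 < p.2 ∧ p.2 < Y)
    simp only [Int.cast_zero, zero_mul, zero_add, one_mul]
    exact ⟨fun h => ⟨h.1, h.2.1, lt_of_le_of_ne h.2.2 hp⟩, fun h => ⟨h.1, h.2.1, h.2.2.le⟩⟩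
  have hGper : ∀ (k : ℤ) (p : ℝ × ℝ), G (p + (0, k * Y)) = G p := by
    intro k p
    have h1 : v (p.2 + k * Y) = v p.2 := hper.int_mul k p.2
    have h2 : w (p + (0, k * Y)) = w p := by
      have : Function.Periodic (fun y => w (p.1, y)) Y := fun y => hw p.1 y
      have h3 := this.int_mul k p.2
      rw [show p + (0, k * Y) = (p.1, p.2 + k * Y) by ext <;> simp]
      exact h3
    by_cases hp : p ∈ Omg v
    · have hp' : p + (0, k * Y) ∈ Omg v := by
        change p.1 + 0 < v (p.2 + k * Y); rw [h1, add_zero]; exact hp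
      rw [hG, Set.indicator_of_mem hp, Set.indicator_of_mem hp', h2]
    · have hp' : p + (0, k * Y) ∉ Omg v := by
        change ¬ (p.1 + 0 < v (p.2 + k * Y)); rw [h1, add_zero]; exact hp
      rw [hG, Set.indicator_of_notMem hp, Set.indicator_of_notMem hp']
  have hCk : ∀ k : ℤ, IntegrableOn G (C k) := by
    intro k
    have hT := measurePreserving_add_right (volume : Measure (ℝ × ℝ)) ((0, k * Y) : ℝ × ℝ)
    rw [← hT.integrableOn_comp_preimage (measurableEmbedding_addRight _)]
    have e1 : G ∘ (fun p : ℝ × ℝ => p + (0, k * Y)) = G := funext fun p => hGper k p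
    have e2 : (fun p : ℝ × ℝ => p + (0, k * Y)) ⁻¹' (C k) = C 0 := by
      ext p
      change (k * Y < p.2 + k * Y ∧ p.2 + k * Y ≤ (k + 1) * Y) ↔ (((0:ℤ):ℝ) * Y < p.2 ∧ p.2 ≤ (((0:ℤ):ℝ) + 1) * Y)
      simp only [Int.cast_zero, zero_mul, zero_add, one_mul]
      constructor
      · rintro ⟨h1, h2⟩; constructor <;> linarith
      · rintro ⟨h1, h2⟩; constructor <;> linarith
    rw [e1, e2]; exact hC0
  have hU : IntegrableOn G {p : ℝ × ℝ | |p.2| < m} := by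
    set N := ⌈m / Y⌉
    refine IntegrableOn.mono_set
      ((integrableOn_finset_iUnion (s := Finset.Icc (-N) N)).2 fun k _ => hCk k) ?_
    intro p hp
    have hp' : |p.2| < m := hp
    rw [abs_lt] at hp'
    have h1 : m / Y ≤ N := Int.le_ceil _
    have h2 : m ≤ N * Y := by rwa [div_le_iff₀ hY] at h1
    have h3 := Int.le_ceil (p.2 / Y)
    have h4 := Int.ceil_lt_add_one (p.2 / Y)
    have h5 : p.2 / Y < N := by rw [div_lt_iff₀ hY]; linarith
    have h6 : -(N : ℝ) < p.2 / Y := by rw [lt_div_iff₀ hY]; linarith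
    simp only [Set.mem_iUnion, Finset.mem_Icc]
    refine ⟨⌈p.2 / Y⌉ - 1, ⟨?_, ?_⟩, ?_, ?_⟩
    · have : -(N : ℝ) < ⌈p.2 / Y⌉ := h6.trans_le h3
      have : -N < ⌈p.2 / Y⌉ := by exact_mod_cast this
      omega
    · have : ⌈p.2 / Y⌉ ≤ N := Int.ceil_le.2 h5.le
      omega
    · push_cast
      rw [← lt_div_iff₀ hY]; linarith
    · push_cast
      rw [← div_le_iff₀ hY]; linarith
  rw [memLp_indicator_iff_restrict (hΩ.inter hs),
    memLp_two_iff_integrable_sq (hwm.mono_set Set.inter_subset_left)]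
  rw [hG, IntegrableOn, integrable_indicator_iff hΩ, IntegrableOn,
    Measure.restrict_restrict hΩ] at hU
  exact hU

/-! ### Approximation up to the boundary -/

/-- The closed fresh region `{x ≤ v(y)}`. -/
def OmgC (v : ℝ → ℝ) : Set (ℝ × ℝ) := {p | p.1 ≤ v p.2}

lemma isClosed_OmgC {v : ℝ → ℝ} (hv : Continuous v) : IsClosed (OmgC v) :=
  isClosed_le continuous_fst (by fun_prop)

lemma locallyIntegrable_ext {v : ℝ → ℝ} (hv : Continuous v) {u : ℝ × ℝ → ℝ}
    (hu : ContinuousOn u (OmgC v)) : LocallyIntegrable ((OmgC v).indicator u) := by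
  rw [locallyIntegrable_iff]
  intro k hk
  rw [IntegrableOn, integrable_indicator_iff (isClosed_OmgC hv).measurableSet, IntegrableOn,
    Measure.restrict_restrict (isClosed_OmgC hv).measurableSet]
  exact (hu.mono Set.inter_subset_left).integrableOn_compact
    (hk.inter_left (isClosed_OmgC hv))

/-- The subgraph of a `K`-Lipschitz function is stable under translation by minus the cone
`{K |y| < x}`, starting even from the front. -/
lemma sub_mem_Omg {v : ℝ → ℝ} {K : NNReal} (hK : LipschitzWith K v) {p q : ℝ × ℝ}
    (hp : p ∈ OmgC v) (hq : K * |q.2| < q.1) : p - q ∈ Omg v := by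
  have h1 := hK.dist_le_mul p.2 (p.2 - q.2)
  rw [Real.dist_eq, Real.dist_eq, sub_sub_cancel] at h1
  have h2 := le_abs_self (v p.2 - v (p.2 - q.2))
  have h3 : p.1 ≤ v p.2 := hp
  change p.1 - q.1 < v (p.2 - q.2)
  linarith

open scoped Convolution in
/-- Derivatives of the cone mollification of `u` are mollifications of the weak derivatives. -/
lemma mollify_deriv {v : ℝ → ℝ} {K : NNReal} (hK : LipschitzWith K v) {u w : ℝ × ℝ → ℝ}
    (hu : ContinuousOn u (OmgC v)) {e : ℝ × ℝ}
    (hweak : ∀ φ : ℝ × ℝ → ℝ, ContDiff ℝ (⊤ : ℕ∞) φ → HasCompactSupport φ →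
      tsupport φ ⊆ Omg v →
      (∫ p in Omg v, u p * fderiv ℝ φ p e) = (-∫ p in Omg v, w p * φ p))
    {ρ : ℝ × ℝ → ℝ} (hρ : ContDiff ℝ (⊤ : ℕ∞) ρ) (hρs : HasCompactSupport ρ)
    (hcone : ∀ q ∈ tsupport ρ, K * |q.2| < q.1) (hone : ∀ q ∈ tsupport ρ, |q.2| < 1)
    {m : ℝ} {p : ℝ × ℝ} (hp : p ∈ Omg v) (hpm : |p.2| < m) :
    fderiv ℝ (((OmgC v).indicator u) ⋆[ContinuousLinearMap.lsmul ℝ ℝ, volume] ρ) p e =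
      ∫ q, ρ q * (Omg v ∩ {p | |p.2| < m + 1}).indicator w (p - q) := by
  have hv := hK.continuous
  have hpC : p ∈ OmgC v := le_of_lt (show p.1 < v p.2 from hp)
  have hloc := locallyIntegrable_ext hv hu
  have hρ1 : ContDiff ℝ 1 ρ := hρ.of_le (by exact_mod_cast le_top)
  rw [(hρs.hasFDerivAt_convolution_right (ContinuousLinearMap.lsmul ℝ ℝ) hloc hρ1 p).fderiv,
    convolution_precompR_apply _ hloc (hρs.fderiv ℝ) (hρ1.continuous_fderiv one_ne_zero)]
  simp only [convolution_def, ContinuousLinearMap.lsmul_apply, smul_eq_mul]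
  set ψ : ℝ × ℝ → ℝ := fun t => ρ (p - t) with hψ
  have hψs : HasCompactSupport ψ := hρs.comp_homeomorph (Homeomorph.subLeft p)
  have hψc : ContDiff ℝ (⊤ : ℕ∞) ψ := hρ.comp (contDiff_const.sub contDiff_id)
  have hts : tsupport ψ ⊆ {t | p - t ∈ tsupport ρ} := by
    apply closure_minimal
    · intro t ht; exact subset_closure ht
    · exact (isClosed_tsupport ρ).preimage (by fun_prop)
  have htΩ : ∀ t, p - t ∈ tsupport ρ → t ∈ Omg v := by
    intro t ht
    have := sub_mem_Omg hK hpC (hcone _ ht)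
    rwa [sub_sub_cancel] at this
  have hd : ∀ t, fderiv ℝ ψ t e = - fderiv ℝ ρ (p - t) e := by
    intro t
    have h1 := (hρ1.differentiable one_ne_zero (p - t)).hasFDerivAt.comp t
      ((hasFDerivAt_id t).const_sub p)
    have h2 : HasFDerivAt ψ ((fderiv ℝ ρ (p - t)).comp (-ContinuousLinearMap.id ℝ (ℝ × ℝ))) t := h1
    rw [h2.fderiv]; simp
  have h1 := hweak ψ hψc hψs (fun t ht => htΩ t (hts ht))
  simp only [hd, mul_neg, integral_neg, neg_inj] at h1
  calc _ = ∫ t in Omg v, u t * fderiv ℝ ρ (p - t) e := by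
        rw [← integral_indicator (measurableSet_Omg hv)]
        congr 1; ext t
        by_cases ht : t ∈ Omg v
        · rw [Set.indicator_of_mem ht,
            Set.indicator_of_mem (show t ∈ OmgC v from le_of_lt (show t.1 < v t.2 from ht))]
        · rw [Set.indicator_of_notMem ht]
          have : fderiv ℝ ρ (p - t) = 0 := by
            by_contra hne
            exact ht (htΩ t (support_fderiv_subset ℝ hne))
          simp [this]
    _ = ∫ t in Omg v, w t * ψ t := h1
    _ = ∫ t, ρ (p - t) * (Omg v ∩ {p | |p.2| < m + 1}).indicator w t := by
        rw [← integral_indicator (measurableSet_Omg hv)]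
        congr 1; ext t
        by_cases h0 : ρ (p - t) = 0
        · simp [hψ, h0]
        · have hm : p - t ∈ tsupport ρ := subset_closure h0
          have ht := htΩ t hm
          have ht2 : t ∈ Omg v ∩ {p | |p.2| < m + 1} := by
            refine ⟨ht, ?_⟩
            have h3 : |p.2 - t.2| < 1 := hone _ hm
            change |t.2| < m + 1
            rw [abs_lt] at *
            constructor <;> linarith [h3.1, h3.2]
          rw [Set.indicator_of_mem ht, Set.indicator_of_mem ht2, mul_comm]
    _ = _ := by
        rw [← integral_sub_left_eq_self _ volume p]
        simp

open scoped Convolution in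
/-- Approximation up to the boundary: convolving with a bump supported in a cone pointing in the
direction `(1, 0)` only samples `u` inside the subgraph, so the smooth function `U` it yields
converges to `u` uniformly on the front and its gradient converges in `L²` on strips, up to the
boundary `{x = v y}`. -/
lemma exists_approx {Y : ℝ} {v : ℝ → ℝ} {K : NNReal} (hK : LipschitzWith K v)
    (hper : Function.Periodic v Y) {u ux uy : ℝ × ℝ → ℝ}
    (hu : ContinuousOn u (OmgC v)) (hu0 : ∀ p ∈ OmgC v, 0 ≤ u p) (huY : PerY Y u)
    (hweak : IsWeakDeriv v u ux uy) {m : ℝ}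
    (hx : MemLp ((Omg v ∩ {p | |p.2| < m + 1}).indicator ux) 2 volume)
    (hy : MemLp ((Omg v ∩ {p | |p.2| < m + 1}).indicator uy) 2 volume) {ε : ℝ} (hε : 0 < ε) :
    ∃ U : ℝ × ℝ → ℝ, ContDiff ℝ 1 U ∧ (∀ p, 0 ≤ U p) ∧ PerY Y U ∧
      (∀ y, |y| ≤ m → |U (v y, y) - u (v y, y)| ≤ ε) ∧
      eLpNorm (fun p => fderiv ℝ U p (1, 0) - ux p) 2
        (volume.restrict (Omg v ∩ {p | |p.2| < m})) ≤ ENNReal.ofReal ε ∧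
      eLpNorm (fun p => fderiv ℝ U p (0, 1) - uy p) 2
        (volume.restrict (Omg v ∩ {p | |p.2| < m})) ≤ ENNReal.ofReal ε := by
  have hv := hK.continuous
  set f := (OmgC v).indicator u with hf
  have hloc : LocallyIntegrable f := locallyIntegrable_ext hv hu
  obtain ⟨r1, hr1, h1⟩ := mollify_L2 hx (ε := ENNReal.ofReal ε) (by simpa using hε)
  obtain ⟨r2, hr2, h2⟩ := mollify_L2 hy (ε := ENNReal.ofReal ε) (by simpa using hε)
  -- modulus of continuity of `u` near the front
  obtain ⟨B, hB⟩ := ((isCompact_Icc (a := -m) (b := m)).image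
    (show Continuous (fun y : ℝ => (v y, y)) by fun_prop)).isBounded.exists_norm_le
  have hcpt : IsCompact (OmgC v ∩ Metric.closedBall 0 (B + 1)) :=
    (isCompact_closedBall _ _).inter_left (isClosed_OmgC hv)
  have huc := hcpt.uniformContinuousOn_of_continuous (hu.mono Set.inter_subset_left)
  obtain ⟨r3, hr3, h3⟩ := Metric.uniformContinuousOn_iff.1 huc ε hε
  obtain ⟨r, hr, hrr1, hrr2, hrr3, hrone⟩ : ∃ r : ℝ, 0 < r ∧ r ≤ r1 ∧ r ≤ r2 ∧ r ≤ r3 ∧ r ≤ 1 :=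
    ⟨min (min r1 r2) (min r3 1), by positivity,
      (min_le_left _ _).trans (min_le_left _ _), (min_le_left _ _).trans (min_le_right _ _),
      (min_le_right _ _).trans (min_le_left _ _), (min_le_right _ _).trans (min_le_right _ _)⟩
  set d : ℝ := (r / 3) / (K + 2) with hd
  have hd0 : 0 < d := by positivity
  have hdr : d * (K + 2) = r / 3 := by rw [hd]; field_simp
  have hK0 : (0:ℝ) ≤ K := K.2
  let β : ContDiffBump ((r / 3, 0) : ℝ × ℝ) := ⟨d / 2, d, by positivity, by linarith⟩
  set ρ : ℝ × ℝ → ℝ := β.normed volume with hρdef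
  have hρ : ContDiff ℝ (⊤ : ℕ∞) ρ := β.contDiff_normed
  have hρs : HasCompactSupport ρ := β.hasCompactSupport_normed
  have hρ0 : ∀ q, 0 ≤ ρ q := fun q => β.nonneg_normed q
  have hρ1 : ∫ q, ρ q = 1 := β.integral_normed
  have hts : ∀ q ∈ tsupport ρ, |q.1 - r / 3| ≤ d ∧ |q.2| ≤ d := by
    intro q hq
    rw [hρdef, β.tsupport_normed_eq, Metric.mem_closedBall, Prod.dist_eq, max_le_iff,
      Real.dist_eq, Real.dist_eq] at hq
    simpa using hq
  have hcone : ∀ q ∈ tsupport ρ, K * |q.2| < q.1 := by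
    intro q hq
    obtain ⟨ha, hb⟩ := hts q hq
    have := (abs_le.1 ha).1
    nlinarith [mul_le_mul_of_nonneg_left hb hK0]
  have hnorm : ∀ q ∈ tsupport ρ, ‖q‖ < r := by
    intro q hq
    obtain ⟨ha, hb⟩ := hts q hq
    have h4 := abs_le.1 ha
    rw [Prod.norm_def, max_lt_iff, Real.norm_eq_abs, Real.norm_eq_abs]
    constructor
    · rw [abs_lt]; constructor <;> nlinarith
    · nlinarith
  have hone : ∀ q ∈ tsupport ρ, |q.2| < 1 := fun q hq =>
    ((norm_snd_le q).trans_lt (hnorm q hq)).trans_le hrone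
  set U := f ⋆[ContinuousLinearMap.lsmul ℝ ℝ, volume] ρ with hU
  have hUe : ∀ p, U p = ∫ t, f (p - t) * ρ t := by
    intro p
    rw [hU, convolution_eq_swap]
    simp only [ContinuousLinearMap.lsmul_apply, smul_eq_mul]
  have hf0 : ∀ p, 0 ≤ f p := fun p => Set.indicator_nonneg hu0 p
  have hfY : ∀ x y : ℝ, f (x, y + Y) = f (x, y) := by
    intro x y
    by_cases hp : x ≤ v y
    · rw [hf, Set.indicator_of_mem (show (x, y) ∈ OmgC v from hp),
        Set.indicator_of_mem (show (x, y + Y) ∈ OmgC v from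
          hp.trans (hper y).ge), huY]
    · rw [hf, Set.indicator_of_notMem (show (x, y) ∉ OmgC v from hp),
        Set.indicator_of_notMem (show (x, y + Y) ∉ OmgC v from fun h : x ≤ v (y + Y) =>
          hp (h.trans (hper y).le))]
  refine ⟨U, ?_, ?_, ?_, ?_, ?_, ?_⟩
  · exact hρs.contDiff_convolution_right _ hloc (hρ.of_le (by exact_mod_cast le_top))
  · intro p
    rw [hUe]
    exact integral_nonneg fun t => mul_nonneg (hf0 _) (hρ0 _)
  · intro x y
    rw [hUe, hUe]
    congr 1; ext t
    have : (x, y + Y) - t = (x - t.1, (y - t.2) + Y) := by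
      ext
      · simp
      · simp; ring
    rw [this, hfY]
    rfl
  · intro y hym
    have hpC : (v y, y) ∈ OmgC v := le_refl (v y)
    have hintg : Integrable (fun t => f ((v y, y) - t) * ρ t) :=
      (hρs.convolutionExists_right (ContinuousLinearMap.lsmul ℝ ℝ) hloc hρ.continuous
        (v y, y)).integrable_swap
    have hρi : Integrable ρ := β.integrable_normed
    have e : U (v y, y) - u (v y, y) =
        ∫ t, (f ((v y, y) - t) - f (v y, y)) * ρ t := by
      simp only [sub_mul]
      rw [integral_sub hintg (hρi.const_mul _), integral_const_mul, hρ1, hUe, hf,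
        Set.indicator_of_mem hpC, mul_one]
    rw [e, ← Real.norm_eq_abs]
    have h5 : ∫ t, ε * ρ t = ε := by rw [integral_const_mul, hρ1, mul_one]
    refine (norm_integral_le_of_norm_le (hρi.const_mul ε) (ae_of_all _ fun t => ?_)).trans h5.le
    rw [norm_mul, Real.norm_eq_abs (ρ t), abs_of_nonneg (hρ0 t)]
    by_cases h0 : ρ t = 0
    · simp [h0]
    · refine mul_le_mul_of_nonneg_right ?_ (hρ0 t)
      have htt : t ∈ tsupport ρ := subset_closure h0
      have hq : (v y, y) - t ∈ OmgC v := by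
        have h6 := sub_mem_Omg hK hpC (hcone t htt)
        exact le_of_lt (show ((v y, y) - t).1 < v ((v y, y) - t).2 from h6)
      have hpB : ‖((v y, y) : ℝ × ℝ)‖ ≤ B := hB _ ⟨y, abs_le.1 hym, rfl⟩
      rw [hf, Set.indicator_of_mem hpC, Set.indicator_of_mem hq, ← dist_eq_norm]
      refine (h3 _ ⟨hq, ?_⟩ _ ⟨hpC, ?_⟩ ?_).le
      · rw [mem_closedBall_zero_iff]
        have := norm_sub_le ((v y, y) : ℝ × ℝ) t
        linarith [hnorm t htt]
      · rw [mem_closedBall_zero_iff]; linarith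
      · rw [dist_eq_norm, sub_sub_cancel_left, norm_neg]
        exact (hnorm t htt).trans_le hrr3
  · refine le_trans ?_ (h1 ρ hρ.continuous hρs hρ0 hρ1
      fun q hq => (hnorm q (subset_closure hq)).trans_le hrr1)
    refine le_trans (le_of_eq ?_) (eLpNorm_mono_measure _
      (Measure.restrict_le_self (s := Omg v ∩ {p | |p.2| < m})))
    refine eLpNorm_congr_ae ?_
    filter_upwards [ae_restrict_mem ((measurableSet_Omg hv).inter
      (measurableSet_lt (by fun_prop) measurable_const))] with p hp
    have hpm : |p.2| < m := hp.2
    rw [mollify_deriv hK hu (fun φ a b c => (hweak φ a b c).1) hρ hρs hcone hone hp.1 hpm,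
      Set.indicator_of_mem (show p ∈ Omg v ∩ {p | |p.2| < m + 1} from
        ⟨hp.1, show |p.2| < m + 1 by linarith⟩)]
  · refine le_trans ?_ (h2 ρ hρ.continuous hρs hρ0 hρ1
      fun q hq => (hnorm q (subset_closure hq)).trans_le hrr2)
    refine le_trans (le_of_eq ?_) (eLpNorm_mono_measure _
      (Measure.restrict_le_self (s := Omg v ∩ {p | |p.2| < m})))
    refine eLpNorm_congr_ae ?_
    filter_upwards [ae_restrict_mem ((measurableSet_Omg hv).inter
      (measurableSet_lt (by fun_prop) measurable_const))] with p hp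
    have hpm : |p.2| < m := hp.2
    rw [mollify_deriv hK hu (fun φ a b c => (hweak φ a b c).2) hρ hρs hcone hone hp.1 hpm,
      Set.indicator_of_mem (show p ∈ Omg v ∩ {p | |p.2| < m + 1} from
        ⟨hp.1, show |p.2| < m + 1 by linarith⟩)]

/-! ### Test functions and cutoffs -/

lemma sq_integral_le {ν : Measure (ℝ × ℝ)} {f : ℝ × ℝ → ℝ} {ε : ℝ} (hε : 0 ≤ ε)
    (hf : AEStronglyMeasurable f ν) (h : eLpNorm f 2 ν ≤ ENNReal.ofReal ε) :
    Integrable (fun p => f p ^ 2) ν ∧ ∫ p, f p ^ 2 ∂ν ≤ ε ^ 2 := by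
  have hm : MemLp f 2 ν := ⟨hf, h.trans_lt ENNReal.ofReal_lt_top⟩
  refine ⟨hm.integrable_sq, ?_⟩
  rw [hm.eLpNorm_eq_integral_rpow_norm (by norm_num) (by norm_num),
    ENNReal.ofReal_le_ofReal_iff hε] at h
  simp only [ENNReal.toReal_ofNat, Real.rpow_two, Real.norm_eq_abs, sq_abs] at h
  have h0 : 0 ≤ ∫ p, f p ^ 2 ∂ν := integral_nonneg fun p => sq_nonneg _
  rw [← one_div, ← Real.sqrt_eq_rpow] at h
  exact (Real.sqrt_le_left hε).1 h

/-- A function `w` of `x` alone with `c b w ≤ a w'` and `a w ≤ c g` on the front satisfies the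
variational identity as an inequality against nonnegative test functions. -/
lemma sub_ineq {v a b g w : ℝ → ℝ} {c aM bM gM : ℝ} (hv : Continuous v) (ha : Measurable a)
    (hb : Measurable b) (hg : Measurable g) (haB : ∀ᵐ y : ℝ, |a y| ≤ aM)
    (hbB : ∀ᵐ y : ℝ, |b y| ≤ bM) (hgB : ∀ᵐ y : ℝ, |g y| ≤ gM)
    (hw : ContDiff ℝ 2 w) (hw1 : ∀ᵐ y : ℝ, ∀ x, c * b y * w x ≤ a y * deriv w x)
    (hw2 : ∀ᵐ y : ℝ, a y * w (v y) ≤ c * g y)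
    {φ : ℝ × ℝ → ℝ} (hφ : ContDiff ℝ 1 φ) (hφs : HasCompactSupport φ) (hφ0 : ∀ p, 0 ≤ φ p) :
    IntegrableOn (fun p => c * b p.2 * w p.1 * φ p + a p.2 * (w p.1 * fderiv ℝ φ p (1, 0)))
      (Omg v) ∧
    ∫ p in Omg v, (c * b p.2 * w p.1 * φ p + a p.2 * (w p.1 * fderiv ℝ φ p (1, 0))) ≤
      ∫ y : ℝ, c * g y * φ (v y, y) := by
  have hw' : ContDiff ℝ 1 w := hw.of_le (by norm_num)
  have hwc : Continuous (fun p : ℝ × ℝ => w p.1) := hw.continuous.comp continuous_fst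
  set Ψ : ℝ × ℝ → ℝ := fun p => w p.1 * φ p with hΨ
  have hΨc : ContDiff ℝ 1 Ψ := (hw'.comp contDiff_fst).mul hφ
  have hΨs : HasCompactSupport Ψ := hφs.mul_left
  have hd : ∀ p, fderiv ℝ Ψ p (1, 0) = deriv w p.1 * φ p + w p.1 * fderiv ℝ φ p (1, 0) := by
    intro p
    have h1 : HasFDerivAt (fun p : ℝ × ℝ => w p.1)
        (deriv w p.1 • ContinuousLinearMap.fst ℝ ℝ ℝ) p :=
      (hw'.differentiable one_ne_zero p.1).hasDerivAt.comp_hasFDerivAt p hasFDerivAt_fst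
    have h2 := h1.mul (hφ.differentiable one_ne_zero p).hasFDerivAt
    rw [show fderiv ℝ Ψ p = _ from h2.fderiv]
    simp
    ring
  have i1 : Integrable (fun p : ℝ × ℝ => b p.2 * (c * (w p.1 * φ p))) :=
    integrable_coeff_mul hb hbB (continuous_const.mul hΨc.continuous) hΨs.mul_left
  have i2 : Integrable (fun p : ℝ × ℝ => a p.2 * (w p.1 * fderiv ℝ φ p (1, 0))) :=
    integrable_coeff_mul ha haB (hwc.mul (continuous_fderiv_apply' hφ _))
      (hφs.fderiv_apply (𝕜 := ℝ) _).mul_left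
  have i3 : Integrable (fun p : ℝ × ℝ => a p.2 * fderiv ℝ Ψ p (1, 0)) :=
    integrable_coeff_mul ha haB (continuous_fderiv_apply' hΨc _)
      (hΨs.fderiv_apply (𝕜 := ℝ) _)
  have i4 : Integrable
      (fun p => c * b p.2 * w p.1 * φ p + a p.2 * (w p.1 * fderiv ℝ φ p (1, 0))) := by
    refine (i1.add i2).congr (ae_of_all _ fun p => ?_)
    simp only [Pi.add_apply]; ring
  refine ⟨i4.integrableOn, ?_⟩
  calc _ ≤ ∫ p in Omg v, a p.2 * fderiv ℝ Ψ p (1, 0) := by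
        refine integral_mono_ae i4.integrableOn i3.integrableOn (ae_restrict_of_ae ?_)
        filter_upwards [ae_snd hw1] with p hp
        have := mul_le_mul_of_nonneg_right (hp p.1) (hφ0 p)
        rw [hd]
        linarith
    _ = ∫ y : ℝ, a y * Ψ (v y, y) := fubini_dx hv ha haB hΨc hΨs
    _ ≤ _ := by
        refine integral_mono_ae (integrable_front hv ha haB hΨc.continuous hΨs) ?_ ?_
        · refine integrable_front hv (hg.const_mul c) (B := |c| * gM) ?_ hφ.continuous hφs
          filter_upwards [hgB] with y hy
          rw [abs_mul]; gcongr
        · filter_upwards [hw2] with y hy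
          have := mul_le_mul_of_nonneg_right hy (hφ0 (v y, y))
          simp only [hΨ]
          linarith

/-- The truncated test function `χ(y) κ(x) h(W(x) - U(x,y))`. -/
def tst (χ κ h W : ℝ → ℝ) (U : ℝ × ℝ → ℝ) (p : ℝ × ℝ) : ℝ := χ p.2 * κ p.1 * h (W p.1 - U p)

lemma tst_contDiff {χ κ h W : ℝ → ℝ} {U : ℝ × ℝ → ℝ} (hχ : ContDiff ℝ 1 χ) (hκ : ContDiff ℝ 1 κ)
    (hh : ContDiff ℝ 1 h) (hW : ContDiff ℝ 1 W) (hU : ContDiff ℝ 1 U) :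
    ContDiff ℝ 1 (tst χ κ h W U) :=
  ((hχ.comp contDiff_snd).mul (hκ.comp contDiff_fst)).mul
    (hh.comp ((hW.comp contDiff_fst).sub hU))

lemma tst_hasCompactSupport {χ κ h W : ℝ → ℝ} {U : ℝ × ℝ → ℝ} {y0 y1 x0 x1 : ℝ}
    (hχ : ∀ y, y ∉ Set.Icc y0 y1 → χ y = 0) (hκ : ∀ x, x1 < x → κ x = 0)
    (hh : ∀ t ≤ 0, h t = 0) (hW : ∀ x < x0, W x ≤ 0) (hU : ∀ p, 0 ≤ U p) :
    HasCompactSupport (tst χ κ h W U) := by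
  refine HasCompactSupport.intro (isCompact_Icc.prod isCompact_Icc : IsCompact
    (Set.Icc x0 x1 ×ˢ Set.Icc y0 y1)) fun p hp => ?_
  unfold tst
  by_cases h1 : p.2 ∈ Set.Icc y0 y1
  · by_cases h2 : p.1 ≤ x1
    · have h3 : p.1 < x0 := by
        by_contra h4
        exact hp ⟨⟨not_lt.1 h4, h2⟩, h1⟩
      rw [hh _ (by linarith [hW _ h3, hU p]), mul_zero]
    · rw [hκ _ (not_le.1 h2)]; simp
  · rw [hχ _ h1]; simp

lemma tst_fderiv {χ κ h W : ℝ → ℝ} {U : ℝ × ℝ → ℝ} (hχ : ContDiff ℝ 1 χ)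
    (hh : ContDiff ℝ 1 h) (hW : ContDiff ℝ 1 W) (hU : ContDiff ℝ 1 U) {M : ℝ}
    (hκ : ∀ x < M, κ x = 1) {p : ℝ × ℝ} (hp : p.1 < M) (e : ℝ × ℝ) :
    tst χ κ h W U p = χ p.2 * h (W p.1 - U p) ∧
    fderiv ℝ (tst χ κ h W U) p e = deriv χ p.2 * e.2 * h (W p.1 - U p) +
      χ p.2 * (deriv h (W p.1 - U p) * (deriv W p.1 * e.1 - fderiv ℝ U p e)) := by
  have e1 : tst χ κ h W U =ᶠ[nhds p] fun p => χ p.2 * h (W p.1 - U p) := by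
    filter_upwards [(isOpen_lt continuous_fst continuous_const).mem_nhds hp] with q hq
    rw [tst, hκ _ hq, mul_one]
  refine ⟨e1.eq_of_nhds, ?_⟩
  rw [e1.fderiv_eq]
  have d1 : HasFDerivAt (fun p : ℝ × ℝ => χ p.2)
      (deriv χ p.2 • ContinuousLinearMap.snd ℝ ℝ ℝ) p :=
    (hχ.differentiable one_ne_zero p.2).hasDerivAt.comp_hasFDerivAt p hasFDerivAt_snd
  have d2 : HasFDerivAt (fun p : ℝ × ℝ => W p.1)
      (deriv W p.1 • ContinuousLinearMap.fst ℝ ℝ ℝ) p :=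
    (hW.differentiable one_ne_zero p.1).hasDerivAt.comp_hasFDerivAt p hasFDerivAt_fst
  have d3 := d2.sub (hU.differentiable one_ne_zero p).hasFDerivAt
  have d4 := (hh.differentiable one_ne_zero (W p.1 - U p)).hasDerivAt.comp_hasFDerivAt p d3
  have d5 := d1.mul d4
  rw [show fderiv ℝ (fun p : ℝ × ℝ => χ p.2 * h (W p.1 - U p)) p = _ from d5.fderiv]
  simp
  ring

/-- The difference of an integrable function and its translate by one period integrates to zero over
the periodic subgraph. -/
lemma trans_zero {Y : ℝ} {v : ℝ → ℝ} (hv : Continuous v) (hper : Function.Periodic v Y)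
    {F : ℝ × ℝ → ℝ} (hF : IntegrableOn F (Omg v)) :
    IntegrableOn (fun p => F p - F (p - (0, Y))) (Omg v) ∧
    ∫ p in Omg v, (F p - F (p - (0, Y))) = 0 := by
  have hΩ := measurableSet_Omg hv
  have hi : Integrable ((Omg v).indicator F) := hF.integrable_indicator hΩ
  have e : (Omg v).indicator (fun p => F p - F (p - (0, Y))) =
      fun p => (Omg v).indicator F p - (Omg v).indicator F (p - (0, Y)) := by
    ext p
    have hiff : p - (0, Y) ∈ Omg v ↔ p ∈ Omg v := by
      change p.1 - 0 < v (p.2 - Y) ↔ p.1 < v p.2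
      rw [sub_zero, hper.sub_eq]
    by_cases hp : p ∈ Omg v
    · simp [hp, hiff.2 hp]
    · rw [Set.indicator_of_notMem hp, Set.indicator_of_notMem hp,
        Set.indicator_of_notMem (fun h => hp (hiff.1 h)), sub_zero]
  rw [← integrable_indicator_iff hΩ, ← integral_indicator hΩ, e]
  refine ⟨hi.sub (hi.comp_sub_right _), ?_⟩
  rw [integral_sub hi (hi.comp_sub_right _), integral_sub_right_eq_self, sub_self]

lemma smoothTransition_deriv_bound : ∃ Ce : ℝ, 0 ≤ Ce ∧
    ∀ t, 0 ≤ deriv smoothTransition t ∧ deriv smoothTransition t ≤ Ce := by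
  have hc : Continuous (deriv smoothTransition) :=
    (smoothTransition.contDiff (n := 1)).continuous_deriv le_rfl
  have hs : HasCompactSupport (deriv smoothTransition) := by
    refine HasCompactSupport.intro (isCompact_Icc : IsCompact (Set.Icc (0:ℝ) 1)) fun x hx => ?_
    rw [Set.mem_Icc, not_and_or, not_le, not_le] at hx
    rcases hx with hx | hx
    · have : smoothTransition =ᶠ[nhds x] fun _ => 0 := by
        filter_upwards [gt_mem_nhds hx] with y hy using smoothTransition.zero_of_nonpos hy.le
      rw [this.deriv_eq]; simp
    · have : smoothTransition =ᶠ[nhds x] fun _ => 1 := by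
        filter_upwards [lt_mem_nhds hx] with y hy using smoothTransition.one_of_one_le hy.le
      rw [this.deriv_eq]; simp
  obtain ⟨C, hC⟩ := hs.exists_bound_of_continuous hc
  refine ⟨C, (norm_nonneg _).trans (hC 0), fun t => ⟨smoothTransition.monotone.deriv_nonneg, ?_⟩⟩
  exact (le_abs_self _).trans (hC t)

lemma deriv_smoothTransition_of_nonpos {t : ℝ} (ht : t ≤ 0) : deriv smoothTransition t = 0 := by
  apply IsLocalMin.deriv_eq_zero
  refine Eventually.of_forall fun s => ?_
  rw [smoothTransition.zero_of_nonpos ht]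
  exact smoothTransition.nonneg s

/-- The primitive of `smoothTransition` vanishing on `(-∞, 0]`, a smooth substitute for the
positive part. -/
def Hs (s : ℝ) : ℝ := ∫ t in (0:ℝ)..s, smoothTransition t

lemma Hs_hasDerivAt (s : ℝ) : HasDerivAt Hs (smoothTransition s) s :=
  intervalIntegral.integral_hasDerivAt_right (smoothTransition.continuous.intervalIntegrable _ _)
    (smoothTransition.continuous.stronglyMeasurableAtFilter _ _) smoothTransition.continuousAt

lemma Hs_deriv : deriv Hs = smoothTransition := funext fun s => (Hs_hasDerivAt s).deriv

lemma Hs_contDiff : ContDiff ℝ 1 Hs := by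
  rw [contDiff_one_iff_deriv, Hs_deriv]
  exact ⟨fun s => (Hs_hasDerivAt s).differentiableAt, smoothTransition.continuous⟩

lemma Hs_monotone : Monotone Hs :=
  monotone_of_deriv_nonneg (fun s => (Hs_hasDerivAt s).differentiableAt)
    fun s => by rw [Hs_deriv]; exact smoothTransition.nonneg s

lemma Hs_of_nonpos {s : ℝ} (hs : s ≤ 0) : Hs s = 0 := by
  rw [Hs, intervalIntegral.integral_symm, neg_eq_zero]
  refine intervalIntegral.integral_zero_ae (ae_of_all _ fun t ht => ?_)
  rw [Set.uIoc_of_le hs] at ht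
  exact smoothTransition.zero_of_nonpos ht.2

lemma Hs_pos {s : ℝ} (hs : 0 < s) : 0 < Hs s :=
  intervalIntegral.intervalIntegral_pos_of_pos_on
    (smoothTransition.continuous.intervalIntegrable _ _)
    (fun _ ht => smoothTransition.pos_of_pos ht.1) hs

/-- A smooth step rising from `0` to `1` on `[0, Y]`. -/
def stp (Y y : ℝ) : ℝ := smoothTransition (y / Y)

/-- A cutoff supported in `[0, 2Y]` and positive on `(0, Y]`. Being the difference of a step and
its translate by one period, its derivative integrates to zero against every `Y`-periodic
function. -/
def chi (Y y : ℝ) : ℝ := stp Y y - stp Y (y - Y)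

lemma stp_contDiff (Y : ℝ) : ContDiff ℝ 2 (stp Y) :=
  (smoothTransition.contDiff (n := 2)).comp (contDiff_id.div_const Y)

lemma chi_contDiff (Y : ℝ) : ContDiff ℝ 1 (chi Y) :=
  ((stp_contDiff Y).sub ((stp_contDiff Y).comp (contDiff_id.sub contDiff_const))).of_le
    (by norm_num)

lemma chi_deriv (Y y : ℝ) : deriv (chi Y) y = deriv (stp Y) y - deriv (stp Y) (y - Y) := by
  have hd : Differentiable ℝ (stp Y) := (stp_contDiff Y).differentiable (by norm_num)
  have h1 : HasDerivAt (fun y => stp Y (y - Y)) (deriv (stp Y) (y - Y)) y :=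
    (hd (y - Y)).hasDerivAt.comp_sub_const y Y
  exact ((hd y).hasDerivAt.sub h1).deriv

lemma stp_deriv_zero {Y : ℝ} (hY : 0 < Y) {y : ℝ} (hy : y ∉ Set.Icc 0 Y) :
    deriv (stp Y) y = 0 := by
  rw [Set.mem_Icc, not_and_or, not_le, not_le] at hy
  rcases hy with hy | hy
  · have : stp Y =ᶠ[nhds y] fun _ => 0 := by
      filter_upwards [gt_mem_nhds hy] with z hz using
        smoothTransition.zero_of_nonpos (div_nonpos_of_nonpos_of_nonneg hz.le hY.le)
    rw [this.deriv_eq]; simp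
  · have : stp Y =ᶠ[nhds y] fun _ => 1 := by
      filter_upwards [lt_mem_nhds hy] with z hz using
        smoothTransition.one_of_one_le ((one_le_div hY).2 hz.le)
    rw [this.deriv_eq]; simp

lemma chi_nonneg {Y : ℝ} (hY : 0 < Y) (y : ℝ) : 0 ≤ chi Y y := by
  have : stp Y (y - Y) ≤ stp Y y := smoothTransition.monotone (by gcongr; linarith)
  unfold chi; linarith

lemma chi_le_one (Y y : ℝ) : chi Y y ≤ 1 := by
  have h1 : stp Y y ≤ 1 := smoothTransition.le_one _
  have h2 : 0 ≤ stp Y (y - Y) := smoothTransition.nonneg _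
  unfold chi; linarith

lemma chi_zero {Y : ℝ} (hY : 0 < Y) {y : ℝ} (hy : y ∉ Set.Icc 0 (2 * Y)) : chi Y y = 0 := by
  rw [Set.mem_Icc, not_and_or, not_le, not_le] at hy
  unfold chi stp
  rcases hy with hy | hy
  · rw [smoothTransition.zero_of_nonpos (div_nonpos_of_nonpos_of_nonneg hy.le hY.le),
      smoothTransition.zero_of_nonpos (div_nonpos_of_nonpos_of_nonneg (by linarith) hY.le),
      sub_zero]
  · rw [smoothTransition.one_of_one_le ((one_le_div hY).2 (by linarith)),
      smoothTransition.one_of_one_le ((one_le_div hY).2 (by linarith)), sub_self]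

lemma chi_pos {Y : ℝ} (hY : 0 < Y) {y : ℝ} (hy : 0 < y) (hy' : y ≤ Y) : 0 < chi Y y := by
  unfold chi stp
  rw [smoothTransition.zero_of_nonpos (x := (y - Y) / Y)
    (div_nonpos_of_nonpos_of_nonneg (by linarith) hY.le), sub_zero]
  exact smoothTransition.pos_of_pos (by positivity)

/-! ### The energy estimate -/

/-- The pointwise algebra behind the energy estimate: the two products of gradients are bounded
below by completing the square. -/
lemma core_pointwise {A aM B BM χ χ' h H d Ce w X Z p q ε : ℝ} (hA : 0 ≤ A) (hAM : A ≤ aM)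
    (hB : 0 ≤ B) (hBM : B ≤ BM) (hχ : 0 ≤ χ) (hχ1 : χ ≤ 1) (hh : 0 ≤ h) (hh1 : h ≤ 1)
    (hd : 0 ≤ d) (hdC : d ≤ Ce) (hε : 0 < ε) :
    B * (χ' * 0 * H + χ * (h * (w * 1 - X))) ≤
      B * w * (χ * h) + A * (w * (χ' * 0 * h + χ * (d * (w * 1 - X)))) -
        (B * p * (χ * h) + A * (p * (χ' * 0 * h + χ * (d * (w * 1 - X))) +
          q * (χ' * 1 * h + χ * (d * (w * 0 - Z))))) + A * (χ' * h * q) +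
      (BM * (ε + (X - p) ^ 2 / ε) + aM * Ce * ((X - p) ^ 2 + (Z - q) ^ 2)) := by
  have h1 : |X - p| ≤ ε + (X - p) ^ 2 / ε := by
    have e : ε + (X - p) ^ 2 / ε = (ε ^ 2 + |X - p| ^ 2) / ε := by rw [sq_abs]; field_simp
    rw [e, le_div_iff₀ hε]
    nlinarith [sq_nonneg (ε - |X - p|), sq_nonneg (ε + |X - p|)]
  have h2 : |B * (χ * h) * (X - p)| ≤ BM * (ε + (X - p) ^ 2 / ε) := by
    rw [abs_mul, abs_of_nonneg (by positivity)]
    have : χ * h ≤ 1 := mul_le_one₀ hχ1 hh hh1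
    have h3 : B * (χ * h) ≤ BM := (mul_le_of_le_one_right hB this).trans hBM
    gcongr
    exact hB.trans hBM
  have h4 := (abs_le.1 h2).1
  have h5 : A * (χ * d) ≤ aM * Ce := by
    have : χ * d ≤ Ce := (mul_le_of_le_one_left hd hχ1).trans hdC
    have := hA.trans hAM
    gcongr
  have h6 : A * (χ * d) * ((X - p) ^ 2 + (Z - q) ^ 2) ≤
      aM * Ce * ((X - p) ^ 2 + (Z - q) ^ 2) := by gcongr
  have h7 : 0 ≤ A * (χ * d) * ((w - p) * (w - X) + q * Z + (X - p) ^ 2 + (Z - q) ^ 2) := by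
    apply mul_nonneg (by positivity)
    nlinarith [sq_nonneg (w - X + (X - p) / 2), sq_nonneg (Z - (Z - q) / 2), sq_nonneg (X - p),
      sq_nonneg (Z - q)]
  linarith

/-- The energy estimate for `W - U`, where `U` is an `ε`-approximation of the temperature `u`
with gradient `(ux, uy)`.  Testing with `χ η(W - U)`, completing squares and discarding the
nonnegative terms bounds the front integral of `χ H(W - U)`; the term carrying `χ'` vanishes by
periodicity. -/
lemma core {Y : ℝ} {v a b g W w : ℝ → ℝ} {c aM bM gm gM Ce x0 M ε : ℝ} {U ux uy : ℝ × ℝ → ℝ}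
    (hY : 0 < Y) (hv : Continuous v) (hper : Function.Periodic v Y)
    (ha : Measurable a) (hb : Measurable b) (hg : Measurable g)
    (haY : Function.Periodic a Y) (hgm : 0 < gm) (hc : 0 < c)
    (hab : ∀ᵐ y : ℝ, 0 ≤ a y ∧ a y ≤ aM) (hbb : ∀ᵐ y : ℝ, 0 ≤ b y ∧ b y ≤ bM)
    (hgb : ∀ᵐ y : ℝ, gm ≤ g y ∧ g y ≤ gM) (hbM : 0 ≤ bM) (haM : 0 ≤ aM)
    (hvar : ∀ φ : ℝ × ℝ → ℝ, ContDiff ℝ 1 φ → HasCompactSupport φ →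
      ∫ p in Omg v, varInt a b c ux uy φ p = ∫ y : ℝ, c * g y * φ (v y, y))
    (hx : MemLp ((Omg v ∩ {p | |p.2| < 2 * Y + 1}).indicator ux) 2 volume)
    (hy : MemLp ((Omg v ∩ {p | |p.2| < 2 * Y + 1}).indicator uy) 2 volume)
    (huyY : PerY Y uy)
    (hW : ContDiff ℝ 1 W) (hw : ContDiff ℝ 2 w) (hWw : deriv W = w)
    (hW0 : ∀ x < x0, W x ≤ 0) (hM : ∀ y, v y ≤ M)
    (hw1 : ∀ᵐ y : ℝ, ∀ x, c * b y * w x ≤ a y * deriv w x)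
    (hw2 : ∀ᵐ y : ℝ, a y * w (v y) ≤ c * g y)
    (hCe : 0 ≤ Ce ∧ ∀ t, 0 ≤ deriv smoothTransition t ∧ deriv smoothTransition t ≤ Ce)
    (hU : ContDiff ℝ 1 U) (hU0 : ∀ p, 0 ≤ U p) (hUY : PerY Y U) (hε : 0 < ε) (hε1 : ε ≤ 1)
    (hex : eLpNorm (fun p => fderiv ℝ U p (1, 0) - ux p) 2
        (volume.restrict (Omg v ∩ {p | |p.2| < 2 * Y + 1})) ≤ ENNReal.ofReal ε)
    (hey : eLpNorm (fun p => fderiv ℝ U p (0, 1) - uy p) 2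
        (volume.restrict (Omg v ∩ {p | |p.2| < 2 * Y + 1})) ≤ ENNReal.ofReal ε) :
    ∫ y : ℝ, c * b y * (chi Y y * Hs (W (v y) - U (v y, y))) ≤
      (c * bM * ((volume (Set.Icc x0 M ×ˢ Set.Icc 0 (2 * Y))).toReal + 1) + 2 * (aM * Ce)) * ε := by
  have hΩ := measurableSet_Omg hv
  have hst : MeasurableSet (Omg v ∩ {p | |p.2| < 2 * Y + 1}) :=
    hΩ.inter (measurableSet_lt (by fun_prop) measurable_const)
  set κ : ℝ → ℝ := fun x => smoothTransition (M + 1 - x) with hκ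
  have hκc : ContDiff ℝ 1 κ := (smoothTransition.contDiff (n := 1)).comp
    (contDiff_const.sub contDiff_id)
  have hκ1 : ∀ x < M, κ x = 1 := fun x hx => smoothTransition.one_of_one_le (by linarith)
  have hκ0 : ∀ x, M + 1 < x → κ x = 0 := fun x hx => smoothTransition.zero_of_nonpos (by linarith)
  have hη : ContDiff ℝ 1 smoothTransition := smoothTransition.contDiff (n := 1)
  have hη0 : ∀ t ≤ (0:ℝ), smoothTransition t = 0 := fun t ht => smoothTransition.zero_of_nonpos ht
  have hχ := chi_contDiff Y
  have hχ0 : ∀ y, y ∉ Set.Icc 0 (2 * Y) → chi Y y = 0 := fun y hy => chi_zero hY hy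
  have haB : ∀ᵐ y : ℝ, |a y| ≤ aM := by
    filter_upwards [hab] with y h; rw [abs_of_nonneg h.1]; exact h.2
  have hbB : ∀ᵐ y : ℝ, |b y| ≤ bM := by
    filter_upwards [hbb] with y h; rw [abs_of_nonneg h.1]; exact h.2
  have hgB : ∀ᵐ y : ℝ, |g y| ≤ gM := by
    filter_upwards [hgb] with y h; rw [abs_of_nonneg (hgm.le.trans h.1)]; exact h.2
  have hcbB : ∀ᵐ y : ℝ, |c * b y| ≤ c * bM := by
    filter_upwards [hbB] with y h; rw [abs_mul, abs_of_pos hc]; gcongr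
  set φ := tst (chi Y) κ smoothTransition W U with hφ
  have hφc : ContDiff ℝ 1 φ := tst_contDiff hχ hκc hη hW hU
  have hφs : HasCompactSupport φ := tst_hasCompactSupport hχ0 hκ0 hη0 hW0 hU0
  have hφ0 : ∀ p, 0 ≤ φ p := fun p =>
    mul_nonneg (mul_nonneg (chi_nonneg hY _) (smoothTransition.nonneg _))
      (smoothTransition.nonneg _)
  obtain ⟨i1, h1⟩ := sub_ineq hv ha hb hg haB hbB hgB hw hw1 hw2 hφc hφs hφ0
  have i2 := varInt_integrable hv hg hgm hc hgb hvar hφc hφs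
  have h2 := hvar φ hφc hφs
  set Φ := tst (chi Y) κ Hs W U with hΦ
  have hΦc : ContDiff ℝ 1 Φ := tst_contDiff hχ hκc Hs_contDiff hW hU
  have hΦs : HasCompactSupport Φ :=
    tst_hasCompactSupport hχ0 hκ0 (fun t ht => Hs_of_nonpos ht) hW0 hU0
  have h3 := fubini_dx hv (hb.const_mul c) hcbB hΦc hΦs
  have i3 : IntegrableOn (fun p => c * b p.2 * fderiv ℝ Φ p (1, 0)) (Omg v) :=
    (integrable_coeff_mul (hb.const_mul c) hcbB (continuous_fderiv_apply' hΦc (1, 0))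
      (hΦs.fderiv_apply (𝕜 := ℝ) _)).integrableOn
  -- the term carrying the derivative of `chi`
  set F : ℝ × ℝ → ℝ := fun p => a p.2 * (tst (deriv (stp Y)) κ smoothTransition W U p * uy p)
    with hF
  have hSc : Continuous (deriv (stp Y)) := (stp_contDiff Y).continuous_deriv (by norm_num)
  have hFi : IntegrableOn F (Omg v) := by
    have hc1 : Continuous (tst (deriv (stp Y)) κ smoothTransition W U) :=
      ((hSc.comp continuous_snd).mul (hκc.continuous.comp continuous_fst)).mul
        (hη.continuous.comp ((hW.continuous.comp continuous_fst).sub hU.continuous))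
    have hs1 : HasCompactSupport (tst (deriv (stp Y)) κ smoothTransition W U) :=
      tst_hasCompactSupport (fun y hy => stp_deriv_zero hY hy) hκ0 hη0 hW0 hU0
    have hm1 : MemLp (tst (deriv (stp Y)) κ smoothTransition W U) 2 volume :=
      hc1.memLp_of_hasCompactSupport hs1
    have hi := (hm1.integrable_mul hy).bdd_mul (f := fun p : ℝ × ℝ => a p.2) (c := aM)
      (ha.comp measurable_snd).aestronglyMeasurable (ae_snd haB)
    refine hi.integrableOn.congr_fun (s := Omg v) (fun p hp => ?_) hΩ
    simp only [hF, Pi.mul_apply]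
    congr 1
    by_cases hp2 : |p.2| < 2 * Y + 1
    · rw [Set.indicator_of_mem (show p ∈ Omg v ∩ {p | |p.2| < 2 * Y + 1} from ⟨hp, hp2⟩)]
    · have : deriv (stp Y) p.2 = 0 := stp_deriv_zero hY fun h => hp2 <| by
        rw [abs_of_nonneg h.1]; linarith [h.2]
      simp [tst, this]
  obtain ⟨i4, h4⟩ := trans_zero hv hper hFi
  have hF4 : ∀ p ∈ Omg v, F p - F (p - (0, Y)) =
      a p.2 * (deriv (chi Y) p.2 * smoothTransition (W p.1 - U p) * uy p) := by
    intro p hp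
    have e0 : p - (0, Y) = (p.1, p.2 - Y) := by ext <;> simp
    have e1 : a (p.2 - Y) = a p.2 := haY.sub_eq p.2
    have e2 : U (p.1, p.2 - Y) = U p := by
      have := hUY p.1 (p.2 - Y); rw [sub_add_cancel] at this; exact this.symm
    have e3 : uy (p.1, p.2 - Y) = uy p := by
      have := huyY p.1 (p.2 - Y); rw [sub_add_cancel] at this; exact this.symm
    have e4 : κ p.1 = 1 := hκ1 _ ((show p.1 < v p.2 from hp).trans_le (hM _))
    simp only [hF, tst, e0, e1, e2, e3, e4, chi_deriv]
    ring
  -- the error region and the error terms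
  set D : Set (ℝ × ℝ) := Omg v ∩ (Set.Icc x0 M ×ˢ Set.Icc 0 (2 * Y)) with hD
  have hDm : MeasurableSet D := hΩ.inter (measurableSet_Icc.prod measurableSet_Icc)
  have hDsub : D ⊆ Omg v ∩ {p | |p.2| < 2 * Y + 1} := fun p hp => ⟨hp.1, by
    have := hp.2.2
    change |p.2| < _
    rw [abs_of_nonneg this.1]; linarith [this.2]⟩
  have hDbox : volume (Set.Icc x0 M ×ˢ Set.Icc 0 (2 * Y)) < ⊤ :=
    (isCompact_Icc.prod isCompact_Icc).measure_lt_top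
  have hDfin : volume D < ⊤ := (measure_mono Set.inter_subset_right).trans_lt hDbox
  have hrest := Measure.restrict_mono_set (volume : Measure (ℝ × ℝ)) hDsub
  have mx : AEStronglyMeasurable (fun p => fderiv ℝ U p (1, 0) - ux p)
      (volume.restrict (Omg v ∩ {p | |p.2| < 2 * Y + 1})) :=
    (continuous_fderiv_apply' hU _).aestronglyMeasurable.sub
      ((memLp_indicator_iff_restrict hst).1 hx).1
  have my : AEStronglyMeasurable (fun p => fderiv ℝ U p (0, 1) - uy p)
      (volume.restrict (Omg v ∩ {p | |p.2| < 2 * Y + 1})) :=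
    (continuous_fderiv_apply' hU _).aestronglyMeasurable.sub
      ((memLp_indicator_iff_restrict hst).1 hy).1
  obtain ⟨ix, sx⟩ := sq_integral_le hε.le (mx.mono_measure hrest)
    ((eLpNorm_mono_measure _ hrest).trans hex)
  obtain ⟨iy, sy⟩ := sq_integral_le hε.le (my.mono_measure hrest)
    ((eLpNorm_mono_measure _ hrest).trans hey)
  set G : ℝ × ℝ → ℝ := fun p =>
    c * bM * (ε + (fderiv ℝ U p (1, 0) - ux p) ^ 2 / ε) +
      aM * Ce * ((fderiv ℝ U p (1, 0) - ux p) ^ 2 + (fderiv ℝ U p (0, 1) - uy p) ^ 2) with hG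
  have ic : Integrable (fun _ : ℝ × ℝ => ε) (volume.restrict D) := by
    have : IsFiniteMeasure (volume.restrict D) := ⟨by simpa using hDfin⟩
    exact integrable_const ε
  have iG1 : Integrable (fun p => c * bM * (ε + (fderiv ℝ U p (1, 0) - ux p) ^ 2 / ε))
    (volume.restrict D) := (ic.add (ix.div_const ε)).const_mul _
  have iG2 : Integrable (fun p => aM * Ce * ((fderiv ℝ U p (1, 0) - ux p) ^ 2 +
    (fderiv ℝ U p (0, 1) - uy p) ^ 2)) (volume.restrict D) := (ix.add iy).const_mul _
  have iG : IntegrableOn G D := iG1.add iG2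
  have hGint : ∫ p in D, G p ≤
      (c * bM * ((volume (Set.Icc x0 M ×ˢ Set.Icc 0 (2 * Y))).toReal + 1) + 2 * (aM * Ce)) * ε := by
    have hVle : (volume D).toReal ≤ (volume (Set.Icc x0 M ×ˢ Set.Icc 0 (2 * Y))).toReal :=
      ENNReal.toReal_mono hDbox.ne (measure_mono Set.inter_subset_right)
    have e : ∫ p in D, G p = c * bM * ((volume D).toReal * ε +
        (∫ p in D, (fderiv ℝ U p (1, 0) - ux p) ^ 2) / ε) +
        aM * Ce * ((∫ p in D, (fderiv ℝ U p (1, 0) - ux p) ^ 2) +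
          ∫ p in D, (fderiv ℝ U p (0, 1) - uy p) ^ 2) := by
      simp only [hG]
      rw [integral_add iG1 iG2, integral_const_mul, integral_const_mul, integral_add ix iy,
        integral_add ic (ix.div_const ε), integral_div, integral_const]
      simp [Measure.real]
    have sx' : (∫ p in D, (fderiv ℝ U p (1, 0) - ux p) ^ 2) / ε ≤ ε := by
      rw [div_le_iff₀ hε]; linarith
    have hεε : ε ^ 2 ≤ ε := by nlinarith
    rw [e]
    have t1 : c * bM * ((volume D).toReal * ε +
        (∫ p in D, (fderiv ℝ U p (1, 0) - ux p) ^ 2) / ε) ≤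
        c * bM * ((volume (Set.Icc x0 M ×ˢ Set.Icc 0 (2 * Y))).toReal * ε + ε) := by gcongr
    have t2 : aM * Ce * ((∫ p in D, (fderiv ℝ U p (1, 0) - ux p) ^ 2) +
          ∫ p in D, (fderiv ℝ U p (0, 1) - uy p) ^ 2) ≤ aM * Ce * (ε + ε) := by
      have := hCe.1
      gcongr <;> linarith
    linarith
  have iGi : IntegrableOn (D.indicator G) (Omg v) :=
    ((integrable_indicator_iff hDm).2 iG).integrableOn
  have hGi : ∫ p in Omg v, D.indicator G p = ∫ p in D, G p := by
    rw [integral_indicator hDm, Measure.restrict_restrict hDm,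
      Set.inter_eq_left.2 (Set.inter_subset_left)]
  have hpt : ∀ᵐ p ∂(volume.restrict (Omg v)), c * b p.2 * fderiv ℝ Φ p (1, 0) ≤
      ((c * b p.2 * w p.1 * φ p + a p.2 * (w p.1 * fderiv ℝ φ p (1, 0))) -
        varInt a b c ux uy φ p) + (F p - F (p - (0, Y))) + D.indicator G p := by
    filter_upwards [ae_restrict_mem hΩ, ae_restrict_of_ae (ae_snd hab),
      ae_restrict_of_ae (ae_snd hbb)] with p hp hap hbp
    have hpv : p.1 < v p.2 := hp
    have hpM : p.1 < M := hpv.trans_le (hM _)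
    rw [hF4 p hp, (tst_fderiv hχ Hs_contDiff hW hU hκ1 hpM (1, 0)).2, varInt, hφ,
      (tst_fderiv hχ hη hW hU hκ1 hpM (1, 0)).2, (tst_fderiv hχ hη hW hU hκ1 hpM (0, 1)).2,
      (tst_fderiv hχ hη hW hU hκ1 hpM (1, 0)).1, Hs_deriv, hWw]
    have hχn := chi_nonneg hY p.2
    have hχ1 := chi_le_one Y p.2
    have hh0 := smoothTransition.nonneg (W p.1 - U p)
    have hh1 := smoothTransition.le_one (W p.1 - U p)
    obtain ⟨hh'0, hh'1⟩ := hCe.2 (W p.1 - U p)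
    by_cases hpD : p ∈ D
    · rw [Set.indicator_of_mem hpD]
      exact core_pointwise hap.1 hap.2 (mul_nonneg hc.le hbp.1)
        (mul_le_mul_of_nonneg_left hbp.2 hc.le) hχn hχ1 hh0 hh1 hh'0 hh'1 hε
    · rw [Set.indicator_of_notMem hpD]
      have hz : chi Y p.2 = 0 ∨ W p.1 - U p ≤ 0 := by
        by_contra! hcon
        refine hpD ⟨hp, ⟨?_, hpM.le⟩, ?_⟩
        · by_contra! hlt
          linarith [hW0 _ hlt, hU0 p, hcon.2]
        · by_contra! hlt
          exact hcon.1 (chi_zero hY hlt)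
      rcases hz with hz | hz
      · rw [hz]; linarith
      · rw [deriv_smoothTransition_of_nonpos hz, hη0 _ hz]; linarith
  have hfin := integral_mono_ae i3 (((i1.sub i2).add i4).add iGi) hpt
  have hsum : ∫ p in Omg v, (((c * b p.2 * w p.1 * φ p + a p.2 * (w p.1 * fderiv ℝ φ p (1, 0))) -
        varInt a b c ux uy φ p) + (F p - F (p - (0, Y))) + D.indicator G p) =
      (∫ p in Omg v, (c * b p.2 * w p.1 * φ p + a p.2 * (w p.1 * fderiv ℝ φ p (1, 0)))) -
        (∫ p in Omg v, varInt a b c ux uy φ p) + (∫ p in Omg v, (F p - F (p - (0, Y)))) +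
        ∫ p in Omg v, D.indicator G p := by
    have e1 := integral_add ((i1.sub i2).add i4) iGi
    have e2 := integral_add (i1.sub i2) i4
    have e3 := integral_sub i1 i2
    simp only [Pi.add_apply, Pi.sub_apply] at e1 e2 e3
    rw [e1, e2, e3]
  have hΦv : ∀ y, Φ (v y, y) = chi Y y * Hs (W (v y) - U (v y, y)) := by
    intro y
    have : κ (v y) = 1 := smoothTransition.one_of_one_le (by linarith [hM y])
    simp only [hΦ, tst, this, mul_one]
  simp only [hΦv] at h3
  rw [← h3]
  refine hfin.trans (le_of_eq_of_le hsum ?_)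
  linarith

/-! ### Comparison with an exponential -/

/-- Comparison at the front with the exponential subsolution `A e^{λx}`. -/
lemma front_lower {Y : ℝ} {v a b g : ℝ → ℝ} {K : NNReal} {c am aM bm bM gm gM A l : ℝ}
    {u ux uy : ℝ × ℝ → ℝ} (hY : 0 < Y) (hK : LipschitzWith K v) (hper : Function.Periodic v Y)
    (ha : Measurable a) (hb : Measurable b) (hg : Measurable g) (haY : Function.Periodic a Y)
    (ham : 0 < am) (hbm : 0 < bm) (hgm : 0 < gm) (hc : 0 < c) (haM : 0 < aM) (hbM : 0 < bM)
    (hab : ∀ᵐ y : ℝ, am ≤ a y ∧ a y ≤ aM) (hbb : ∀ᵐ y : ℝ, bm ≤ b y ∧ b y ≤ bM)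
    (hgb : ∀ᵐ y : ℝ, gm ≤ g y ∧ g y ≤ gM)
    (hu : ContinuousOn u (OmgC v)) (hu0 : ∀ p ∈ OmgC v, 0 ≤ u p)
    (hsol : IsVarSolWith Y a b g c v u ux uy) (hA : 0 < A) (hl : 0 < l)
    (hlc : c * bM ≤ am * l) (hAl : ∀ y, aM * (A * l * Real.exp (l * v y)) ≤ c * gm) (y : ℝ) :
    A * Real.exp (l * v y) ≤ u (v y, y) := by
  obtain ⟨huY, huxY, huyY, -, hux2, huy2, hweak, hvar⟩ := hsol
  have hv := hK.continuous
  obtain ⟨msx, msy⟩ := aesm_grad ha hb ham hbm hc (hab.mono fun _ h => h.1)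
    (hbb.mono fun _ h => h.1)
    (fun φ hφ hφs => varInt_integrable hv hg hgm hc hgb hvar hφ hφs)
  have hx := strip_memLp hY hv hper huxY hux2 msx
  have hy := strip_memLp hY hv hper huyY huy2 msy
  have huf : Continuous (fun y => u (v y, y)) :=
    hu.comp_continuous (by fun_prop) fun y => le_refl (v y)
  obtain ⟨M, hM⟩ : ∃ M, ∀ y, v y ≤ M := by
    obtain ⟨M, hM⟩ := (isCompact_Icc (a := 0) (b := 0 + Y)).bddAbove_image hv.continuousOn
    refine ⟨M, fun y => ?_⟩
    obtain ⟨z, hz, e⟩ := hper.exists_mem_Ico hY y 0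
    rw [e]
    exact hM ⟨z, Set.Ico_subset_Icc_self hz, rfl⟩
  obtain ⟨Ce, hCe⟩ := smoothTransition_deriv_bound
  set w : ℝ → ℝ := fun x => A * l * Real.exp (l * x) with hwdef
  have hexp : ∀ x, HasDerivAt (fun x => Real.exp (l * x)) (Real.exp (l * x) * l) x := fun x => by
    simpa using ((hasDerivAt_id x).const_mul l).exp
  -- the shifted subsolution, lowered by `θ` to have bounded positivity set, stays below `u + s`
  have key : ∀ θ > 0, ∀ s > 0, ∀ y, 0 < y → y ≤ Y → A * Real.exp (l * v y) - θ - u (v y, y) ≤ s := by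
    intro θ hθ s hs
    set W : ℝ → ℝ := fun x => A * Real.exp (l * x) - θ with hWdef
    have hW : ContDiff ℝ 1 W := by fun_prop
    have hw : ContDiff ℝ 2 w := by fun_prop
    have hWw : deriv W = w := by
      ext x
      rw [(((hexp x).const_mul A).sub_const θ).deriv, hwdef]; ring
    have hw' : ∀ x, deriv w x = l * w x := fun x => by
      rw [((hexp x).const_mul (A * l)).deriv, hwdef]; ring
    have hwpos : ∀ x, 0 ≤ w x := fun x => by positivity
    have hW0 : ∀ x < Real.log (θ / A) / l, W x ≤ 0 := by
      intro x hx
      rw [lt_div_iff₀ hl] at hx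
      have : Real.exp (l * x) < θ / A := by
        rw [← Real.exp_log (show 0 < θ / A by positivity)]
        exact Real.exp_lt_exp.2 (by linarith)
      rw [lt_div_iff₀ hA] at this
      simp only [hWdef]; linarith
    have hw1 : ∀ᵐ y : ℝ, ∀ x, c * b y * w x ≤ a y * deriv w x := by
      filter_upwards [hab, hbb] with y h1 h2 x
      rw [hw', ← mul_assoc (a y)]
      refine mul_le_mul_of_nonneg_right ?_ (hwpos x)
      calc c * b y ≤ c * bM := by gcongr; exact h2.2
        _ ≤ am * l := hlc
        _ ≤ a y * l := by gcongr; exact h1.1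
    have hw2 : ∀ᵐ y : ℝ, a y * w (v y) ≤ c * g y := by
      filter_upwards [hab, hgb] with y h1 h2
      calc a y * w (v y) ≤ aM * w (v y) := mul_le_mul_of_nonneg_right h1.2 (hwpos _)
        _ ≤ c * gm := hAl y
        _ ≤ c * g y := by gcongr; exact h2.1
    set C1 : ℝ := c * bM * ((volume (Set.Icc (Real.log (θ / A) / l) M ×ˢ
      Set.Icc 0 (2 * Y))).toReal + 1) + 2 * (aM * Ce) with hC1
    have hχc : Continuous (chi Y) := (chi_contDiff Y).continuous
    have hχs : HasCompactSupport (chi Y) :=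
      HasCompactSupport.intro isCompact_Icc fun x hx => chi_zero hY hx
    have hHc : Continuous Hs := Hs_contDiff.continuous
    have hHn : ∀ t, 0 ≤ Hs t := fun t => by
      rcases le_total t 0 with h | h
      · rw [Hs_of_nonpos h]
      · rw [← Hs_of_nonpos le_rfl]; exact Hs_monotone h
    set Q : ℝ → ℝ := fun y => chi Y y * Hs (W (v y) - u (v y, y) - s) with hQ
    have hQc : Continuous Q :=
      hχc.mul (hHc.comp (((hW.continuous.comp hv).sub huf).sub continuous_const))
    have hQs : HasCompactSupport Q := hχs.mul_right
    have hQ0 : ∀ y, 0 ≤ Q y := fun y => mul_nonneg (chi_nonneg hY y) (hHn _)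
    have hQε : ∀ ε, 0 < ε → ε ≤ 1 → ε ≤ s → c * bm * ∫ y, Q y ≤ C1 * ε := by
      intro ε hε hε1 hεs
      obtain ⟨U, hU, hU0, hUY, hUf, hex, hey⟩ := exists_approx hK hper hu hu0 huY hweak
        (hx (2 * Y + 1 + 1)) (hy (2 * Y + 1 + 1)) hε
      have h1 := core hY hv hper ha hb hg haY hgm hc
        (hab.mono fun _ h => ⟨ham.le.trans h.1, h.2⟩) (hbb.mono fun _ h => ⟨hbm.le.trans h.1, h.2⟩)
        hgb hbM.le haM.le hvar (hx _) (hy _) huyY hW hw hWw hW0 hM hw1 hw2 hCe hU hU0 hUY hε hε1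
        hex hey
      refine le_trans ?_ h1
      rw [← integral_const_mul]
      have hc2 : Continuous (fun y => chi Y y * Hs (W (v y) - U (v y, y))) := by
        have := hW.continuous
        have := hU.continuous
        fun_prop
      refine integral_mono_ae ((hQc.integrable_of_hasCompactSupport hQs).const_mul _)
        ((hc2.integrable_of_hasCompactSupport hχs.mul_right).bdd_mul (c := c * bM)
          (hb.const_mul c).aestronglyMeasurable ?_) ?_
      · filter_upwards [hbb] with y h
        rw [Real.norm_eq_abs, abs_of_nonneg (mul_nonneg hc.le (hbm.le.trans h.1))]
        gcongr; exact h.2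
      · filter_upwards [hbb] with y h
        have h2 : Q y ≤ chi Y y * Hs (W (v y) - U (v y, y)) := by
          by_cases hyI : y ∈ Set.Icc 0 (2 * Y)
          · refine mul_le_mul_of_nonneg_left (Hs_monotone ?_) (chi_nonneg hY y)
            have := hUf y (by rw [abs_of_nonneg hyI.1]; linarith [hyI.2])
            linarith [(abs_le.1 this).2]
          · simp [hQ, chi_zero hY hyI]
        calc c * bm * Q y ≤ c * b y * Q y := by
              have := hQ0 y
              gcongr; exact h.1
          _ ≤ _ := mul_le_mul_of_nonneg_left h2 (mul_nonneg hc.le (hbm.le.trans h.1))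
    have hQle : ∫ y, Q y ≤ 0 := by
      by_contra! hpos
      have hlim : Tendsto (fun ε : ℝ => C1 * ε) (nhdsWithin 0 (Set.Ioi 0)) (nhds (C1 * 0)) :=
        (tendsto_nhdsWithin_of_tendsto_nhds tendsto_id).const_mul C1
      have h1 : ∀ᶠ ε : ℝ in nhdsWithin 0 (Set.Ioi 0), c * bm * ∫ y, Q y ≤ C1 * ε := by
        filter_upwards [Ioc_mem_nhdsGT (show (0:ℝ) < min 1 s by positivity)] with ε hε
        exact hQε ε hε.1 (hε.2.trans (min_le_left _ _)) (hε.2.trans (min_le_right _ _))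
      have h2 := ge_of_tendsto hlim h1
      have : 0 < c * bm * ∫ y, Q y := by positivity
      linarith
    intro y hy0 hyY
    by_contra! hgt
    have hQy : Q y ≠ 0 := by
      refine (mul_pos (chi_pos hY hy0 hyY) (Hs_pos ?_)).ne'
      simp only [hWdef]; linarith
    have := hQc.integral_pos_of_hasCompactSupport_nonneg_nonzero (μ := volume) hQs hQ0 hQy
    linarith
  have hperu : Function.Periodic (fun y => A * Real.exp (l * v y) - u (v y, y)) Y := by
    intro y
    simp only [hper y]
    rw [huY]
  obtain ⟨z, hz, e⟩ := hperu.exists_mem_Ioc hY y 0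
  have h0 : A * Real.exp (l * v z) - u (v z, z) ≤ 0 := by
    refine le_of_forall_pos_le_add fun ε hε => ?_
    have := key (ε / 2) (by positivity) (ε / 2) (by positivity) z hz.1 (by linarith [hz.2])
    linarith
  linarith

/-! ### The lower bound -/

/-- A priori positive lower bound for the temperature at the front: there is a constant
`C ≥ 0`, depending only on `a_m, g_m, a_M, b_M, R_M`, such that for every travelling wave
solution with positive speed (under the slow-decay condition on `R`),
`u(v(y), y) ≥ T_* := inf {T > 0 : ln T · essinf_z R(z,T) ≥ -C(1+Y)} > 0`. -/
theorem temperature_lower_bound_at_front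
    (am aM bM gm RM : ℝ)
    (ham : 0 < am) (haM : am ≤ aM) (hbM : 0 < bM) (hgm : 0 < gm) (hRM : 0 < RM) :
    ∃ C : ℝ, 0 ≤ C ∧
      ∀ (Y μ bm gM : ℝ) (a b g : ℝ → ℝ) (R : ℝ → ℝ → ℝ) (c : ℝ) (v : ℝ → ℝ)
        (u : ℝ × ℝ → ℝ),
        0 < Y → 0 < μ →
        Measurable a → Measurable b → Measurable g →
        Function.Periodic a Y → Function.Periodic b Y → Function.Periodic g Y →
        0 < bm → bm ≤ bM → gm ≤ gM →
        (∀ᵐ y : ℝ, am ≤ a y ∧ a y ≤ aM) →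
        (∀ᵐ y : ℝ, bm ≤ b y ∧ b y ≤ bM) →
        (∀ᵐ y : ℝ, gm ≤ g y ∧ g y ≤ gM) →
        StandingR Y RM R →
        Tendsto (fun T => |Real.log T| * essInf (fun y => R y T) volume)
          (nhdsWithin 0 (Set.Ioi 0)) atTop →
        0 < c → IsTW Y μ a b g R c v u →
        0 < sInf {T : ℝ | 0 < T ∧
            -C * (1 + Y) ≤ Real.log T * essInf (fun z => R z T) volume} ∧
        ∀ y : ℝ, sInf {T : ℝ | 0 < T ∧
            -C * (1 + Y) ≤ Real.log T * essInf (fun z => R z T) volume} ≤ u (v y, y) := by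
  have haM0 : 0 < aM := ham.trans_le haM
  set K0 : ℝ := gm * am / (aM * bM) with hK0
  have hK0p : 0 < K0 := by positivity
  refine ⟨RM * |Real.log K0| + bM * RM ^ 2 / am, by positivity, ?_⟩
  set C : ℝ := RM * |Real.log K0| + bM * RM ^ 2 / am with hC
  intro Y μ bm gM a b g R c v u hY hμ ha hb hg haY hbY hgY hbm hbmM hgmM hab hbb hgb hR hlim hc hTW
  obtain ⟨hvd, hvL, hper, hu, hu0, huY, ⟨ux, uy, hsol⟩, heq⟩ := hTW
  have hv : Continuous v := continuous_iff_continuousAt.2 fun y => (hvd y).continuousAt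
  obtain ⟨hR1, -, hR3, hR4⟩ := hR
  -- `v` is Lipschitz, its derivative being continuous and periodic
  have hv'per : Function.Periodic (deriv v) Y := by
    intro y
    have e : (fun z => v (z + Y)) = v := funext hper
    have := deriv_comp_add_const v Y y
    rw [← this, e]
  obtain ⟨Kv, hKv⟩ : ∃ Kv : NNReal, LipschitzWith Kv v := by
    obtain ⟨K', hK'⟩ := hvL
    obtain ⟨B, hB⟩ := (isCompact_Icc (a := 0) (b := 0 + Y)).bddAbove_image
      (hK'.continuous.abs).continuousOn
    refine ⟨B.toNNReal, lipschitzWith_of_nnnorm_deriv_le (fun y => hvd y) fun y => ?_⟩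
    obtain ⟨z, hz, e⟩ := hv'per.exists_mem_Ico hY y 0
    rw [e]
    have h1 : |deriv v z| ≤ B := hB ⟨z, Set.Ico_subset_Icc_self hz, rfl⟩
    rw [← NNReal.coe_le_coe, Real.coe_toNNReal _ ((abs_nonneg _).trans h1)]
    exact h1
  have huf : Continuous (fun y => u (v y, y)) :=
    hu.comp_continuous (by fun_prop) fun y => le_refl (v y)
  have hufper : Function.Periodic (fun y => u (v y, y)) Y := by
    intro y
    simp only [hper y]
    rw [huY]
  obtain ⟨zM, -, hzM⟩ := (isCompact_Icc (a := 0) (b := 0 + Y)).exists_isMaxOn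
    (Set.nonempty_Icc.2 (by linarith)) hv.continuousOn
  have hmax : ∀ y, v y ≤ v zM := by
    intro y
    obtain ⟨z, hz, e⟩ := hper.exists_mem_Ico hY y 0
    rw [e]
    exact hzM (Set.Ico_subset_Icc_self hz)
  obtain ⟨y0, -, hy0⟩ := (isCompact_Icc (a := 0) (b := 0 + Y)).exists_isMinOn
    (Set.nonempty_Icc.2 (by linarith)) huf.continuousOn
  have hmin : ∀ y, u (v y0, y0) ≤ u (v y, y) := by
    intro y
    obtain ⟨z, hz, e⟩ := hufper.exists_mem_Ico hY y 0
    rw [e]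
    exact hy0 (Set.Ico_subset_Icc_self hz)
  set T := u (v y0, y0) with hT
  set l : ℝ := c * bM / am with hl
  have hl0 : 0 < l := by positivity
  have hTlow : K0 * Real.exp (-(l * (v zM - v y0))) ≤ T := by
    have h1 := front_lower (A := K0 * Real.exp (-(l * v zM))) (l := l) hY hKv hper ha hb hg haY ham
      hbm hgm hc haM0 hbM hab hbb hgb hu (fun p hp => hu0 p hp) hsol (by positivity) hl0
      (by rw [hl]; field_simp; rfl) (fun y => ?_) y0
    · refine le_trans (le_of_eq ?_) h1
      rw [mul_assoc, ← Real.exp_add]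
      ring_nf
    · have e : aM * (K0 * Real.exp (-(l * v zM)) * l * Real.exp (l * v y)) =
          c * gm * Real.exp (l * (v y - v zM)) := by
        rw [show l * (v y - v zM) = -(l * v zM) + l * v y by ring, Real.exp_add, hl, hK0]
        field_simp
      rw [e]
      refine mul_le_of_le_one_right (by positivity) (Real.exp_le_one_iff.2 ?_)
      exact mul_nonpos_of_nonneg_of_nonpos hl0.le (by linarith [hmax y])
  have hTpos : 0 < T := lt_of_lt_of_le (by positivity) hTlow
  set r := essInf (fun y => R y T) volume with hr
  have hr0 : 0 < r := hR4 T hTpos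
  have hrle : ∀ᵐ y : ℝ, r ≤ R y T := by
    refine ae_essInf_le ⟨0, ?_⟩
    rw [eventually_map]
    filter_upwards [hR3] with y h using (h T hTpos).1.le
  have hrRM : r ≤ RM := by
    obtain ⟨y, h1, h2⟩ := (hrle.and hR3).exists
    exact h1.trans (h2 T hTpos).2
  have hup : ∀ y, 0 < u (v y, y) := fun y => hTpos.trans_le (hmin y)
  have hρlow : ∀ᵐ y : ℝ, r ≤ R y (u (v y, y)) := by
    filter_upwards [hrle, hR1] with y h1 h2
    exact h1.trans (h2.2 hTpos (hup y) (hmin y))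
  have hρup : ∀ᵐ y : ℝ, R y (u (v y, y)) ≤ RM := by
    filter_upwards [hR3] with y h using (h _ (hup y)).2
  have hcRM : c ≤ RM := front_speed_le hY hμ hvd hvL hper hρup heq
  have hosc : v zM - v y0 ≤ c / r * Y :=
    front_osc_le hY hvd hper (fun y => front_slope_le hY hμ hr0 hvL hper hρlow heq y) zM y0
  have hlog : Real.log K0 - l * (c / r * Y) ≤ Real.log T := by
    have h1 := Real.log_le_log (by positivity) hTlow
    rw [Real.log_mul hK0p.ne' (Real.exp_pos _).ne', Real.log_exp] at h1
    have := mul_le_mul_of_nonneg_left hosc hl0.le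
    linarith
  have hTmem : -C * (1 + Y) ≤ Real.log T * r := by
    have h1 := mul_le_mul_of_nonneg_right hlog hr0.le
    have h2 : (Real.log K0 - l * (c / r * Y)) * r = Real.log K0 * r - bM * c ^ 2 / am * Y := by
      rw [hl]; field_simp
    have h3 : -(|Real.log K0| * RM) ≤ Real.log K0 * r := by
      have h4 : |Real.log K0 * r| ≤ |Real.log K0| * RM := by
        rw [abs_mul, abs_of_pos hr0]; gcongr
      exact (abs_le.1 h4).1
    have h5 : bM * c ^ 2 / am * Y ≤ bM * RM ^ 2 / am * Y := by gcongr
    have h6 : 0 ≤ RM * |Real.log K0| * Y := by positivity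
    have h7 : 0 ≤ bM * RM ^ 2 / am := by positivity
    rw [hC]
    nlinarith
  set S : Set ℝ := {T : ℝ | 0 < T ∧
    -C * (1 + Y) ≤ Real.log T * essInf (fun z => R z T) volume} with hS
  have hTS : T ∈ S := ⟨hTpos, hTmem⟩
  have hbdd : BddBelow S := ⟨0, fun t ht => ht.1.le⟩
  refine ⟨?_, fun y => (csInf_le hbdd hTS).trans (hmin y)⟩
  -- near `0` the logarithm is negative, so the decay hypothesis excludes small `T` from `S`
  have hev := hlim.eventually_gt_atTop (C * (1 + Y))
  rw [eventually_nhdsWithin_iff, Metric.eventually_nhds_iff] at hev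
  obtain ⟨δ, hδ, hev⟩ := hev
  refine lt_of_lt_of_le (show 0 < min δ 1 by positivity) (le_csInf ⟨T, hTS⟩ fun t ht => ?_)
  by_contra! hlt
  have ht0 : 0 < t := ht.1
  have h1 := hev (y := t) (by
    rw [Real.dist_eq, sub_zero, abs_of_pos ht0]; exact hlt.trans_le (min_le_left _ _)) ht0
  have h2 : Real.log t ≤ 0 := Real.log_nonpos ht0.le (hlt.le.trans (min_le_right _ _))
  rw [abs_of_nonpos h2] at h1
  linarith [ht.2]
end
end

section
/- Let Y > 0, μ > 0, let H : ℝ → ℝ be measurable, Y-periodic, essentially bounded and nonnegative, and suppose c > 0 and v ∈ W^{2,∞}(ℝ) is Y-periodic with −c + H(y)·√(1 + v'(y)²) = μ·v''(y)/(1 + v'(y)²) for almost every y ∈ ℝ. Then sup_y |arctan(v'(y))| ≤ 2·c·Y/μ. -/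
/-!
Put `g = arctan ∘ v'`, a Lipschitz function with `g' = v'' / (1 + v'²)` almost everywhere. As
`H ≥ 0` and `μ > 0`, the equation gives `g' ≥ -c / μ` almost everywhere, so `y ↦ g y + (c / μ) y`
is monotone (`monotone_of_lipschitz_of_ae_deriv_nonneg`). By Rolle's theorem and periodicity of
`v`, the function `g` vanishes somewhere in `(y - Y, y)` and somewhere in `(y, y + Y)`; comparing
`g y` with these zeros gives `|g y| ≤ c * Y / μ`, which is half of the claimed bound.
-/

open MeasureTheory Real Filter

/-- A Lipschitz function is absolutely continuous, hence is the integral of its almost-everywhere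
derivative; if that derivative is nonnegative, the function is monotone. -/
theorem monotone_of_lipschitz_of_ae_deriv_nonneg {f : ℝ → ℝ} {K : NNReal}
    (hf : LipschitzWith K f) (hderiv : ∀ᵐ x : ℝ, 0 ≤ deriv f x) : Monotone f := by
  intro a b hab
  have hac : AbsolutelyContinuousOnInterval f a b :=
    (hf.lipschitzOnWith (s := Set.uIcc a b)).absolutelyContinuousOnInterval
  have hint : 0 ≤ ∫ x in a..b, deriv f x :=
    intervalIntegral.integral_nonneg_of_ae hab hderiv
  rw [hac.integral_deriv_eq_sub] at hint
  linarith

theorem lipschitzWith_arctan : LipschitzWith 1 Real.arctan := by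
  refine lipschitzWith_of_nnnorm_deriv_le Real.differentiable_arctan fun x => ?_
  rw [← NNReal.coe_le_coe, coe_nnnorm, Real.norm_eq_abs, Real.deriv_arctan,
    abs_of_nonneg (by positivity), NNReal.coe_one]
  exact (div_le_one (by positivity)).2 (by nlinarith [sq_nonneg x])

/-- Estimate on the front's slope: if `(c, v)` solves the front equation with `c > 0`
and `H` measurable, `Y`-periodic, essentially bounded and nonnegative, then
`sup_y |arctan(v'(y))| ≤ 2·c·Y/μ`. -/
theorem front_slope_estimate (Y μ c : ℝ) (H v : ℝ → ℝ)
    (hY : 0 < Y) (hμ : 0 < μ)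
    (hmeas : Measurable H) (hper : Function.Periodic H Y)
    (hbdd : ∃ M : ℝ, ∀ᵐ y : ℝ, |H y| ≤ M)
    (hnonneg : ∀ᵐ y : ℝ, 0 ≤ H y)
    (hc : 0 < c)
    (hv : ∀ y, DifferentiableAt ℝ v y) (hlip : ∃ K, LipschitzWith K (deriv v))
    (hvper : Function.Periodic v Y)
    (heq : ∀ᵐ y : ℝ, -c + H y * Real.sqrt (1 + deriv v y ^ 2) =
        μ * deriv (deriv v) y / (1 + deriv v y ^ 2)) :
    ∀ y, |Real.arctan (deriv v y)| ≤ 2 * c * Y / μ := by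
  obtain ⟨K, hK⟩ := hlip
  have hcμ : 0 < c / μ := by positivity
  have hlin : LipschitzWith (c / μ).toNNReal fun y : ℝ => c / μ * y := by
    refine LipschitzWith.of_dist_le_mul fun x y => ?_
    rw [Real.coe_toNNReal _ hcμ.le, Real.dist_eq, Real.dist_eq, ← mul_sub, abs_mul,
      abs_of_pos hcμ]
  have hmono : Monotone fun y => Real.arctan (deriv v y) + c / μ * y := by
    refine monotone_of_lipschitz_of_ae_deriv_nonneg ((lipschitzWith_arctan.comp hK).add hlin) ?_
    filter_upwards [hnonneg, heq, hK.ae_differentiableAt_real] with y hH he hd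
    have hg := hd.hasDerivAt.arctan.add ((hasDerivAt_id y).const_mul (c / μ))
    have hg' : deriv (fun y => Real.arctan (deriv v y) + c / μ * y) y
        = 1 / (1 + deriv v y ^ 2) * deriv (deriv v) y + c / μ * 1 := hg.deriv
    refine le_of_le_of_eq ?_ hg'.symm
    have h1 : 1 / (1 + deriv v y ^ 2) * deriv (deriv v) y + c / μ * 1
        = (μ * deriv (deriv v) y / (1 + deriv v y ^ 2) + c) / μ := by
      field_simp
    rw [h1, ← he]
    have : 0 ≤ H y * Real.sqrt (1 + deriv v y ^ 2) := by positivity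
    exact div_nonneg (by linarith) hμ.le
  have hrolle : ∀ a, ∃ z ∈ Set.Ioo a (a + Y), deriv v z = 0 := fun a =>
    exists_deriv_eq_zero (by linarith) (fun x _ => (hv x).continuousAt.continuousWithinAt)
      (hvper a).symm
  intro y
  obtain ⟨z, ⟨hz1, hz2⟩, hz⟩ := hrolle (y - Y)
  obtain ⟨w, ⟨hw1, hw2⟩, hw⟩ := hrolle y
  have hlow := hmono (show z ≤ y by linarith)
  have hupp := hmono hw1.le
  simp only [hz, hw, Real.arctan_zero] at hlow hupp
  have e : 2 * c * Y / μ = 2 * (c / μ * Y) := by ring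
  have h1 : c / μ * (y - z) ≤ c / μ * Y := by gcongr; linarith
  have h2 : c / μ * (w - y) ≤ c / μ * Y := by gcongr; linarith
  have h3 : 0 < c / μ * Y := by positivity
  rw [e, abs_le]
  constructor <;> linarith
end

section
/- Let ℛ : ℝ → ℝ be measurable, 1-periodic, with constants 0 < ℛ_m ≤ ℛ(z) ≤ ℛ_M for almost every z, let λ > 0, and let (c, h) solve the corrector system for λ. Then ∫₀¹ ℛ(z)·h(z)·√(1 + h(z)²) dz = 0. -/
/-!
Write `G t = log (1 + t²)`. Multiplying the equation by `h` gives, almost everywhere,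
`R h √(1 + h²) = c h + λ h h' / (1 + h²) = c h + (λ / 2) (G ∘ h)'`.
The mean of `c h` vanishes by hypothesis. Since `G` is `1`-Lipschitz and `h` is Lipschitz, `G ∘ h`
is absolutely continuous, so the fundamental theorem of calculus applies to it, and the
integral of its derivative over a period is `G (h 1) - G (h 0) = 0`.
-/

open MeasureTheory Real Filter

noncomputable section

/-- `(c, h)` solves the corrector system for the curvature regime `λ`: `h` is Lipschitz,
`1`-periodic, has zero mean on `(0,1)` and
`-c + ℛ(z)·√(1 + h(z)²) = λ·h'(z)/(1 + h(z)²)` for a.e. `z`. -/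
def SolvesCorr (R : ℝ → ℝ) (lam c : ℝ) (h : ℝ → ℝ) : Prop :=
  (∃ K, LipschitzWith K h) ∧ Function.Periodic h 1 ∧ (∫ z in (0:ℝ)..1, h z) = 0 ∧
  ∀ᵐ z : ℝ, -c + R z * Real.sqrt (1 + h z ^ 2) = lam * deriv h z / (1 + h z ^ 2)

theorem hasDerivAt_log_one_add_sq (t : ℝ) :
    HasDerivAt (fun t : ℝ => Real.log (1 + t ^ 2)) (2 * t / (1 + t ^ 2)) t := by
  have h1 : HasDerivAt (fun t : ℝ => 1 + t ^ 2) (2 * t) t := by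
    simpa using (hasDerivAt_pow 2 t).const_add 1
  exact h1.log (by positivity)

/-- The derivative `2t / (1 + t²)` is bounded by `1` because `2|t| ≤ 1 + t²`. -/
theorem lipschitzWith_log_one_add_sq :
    LipschitzWith 1 (fun t : ℝ => Real.log (1 + t ^ 2)) := by
  refine lipschitzWith_of_nnnorm_deriv_le
    (fun t => (hasDerivAt_log_one_add_sq t).differentiableAt) fun t => ?_
  rw [(hasDerivAt_log_one_add_sq t).deriv, ← NNReal.coe_le_coe, coe_nnnorm, Real.norm_eq_abs,
    NNReal.coe_one, abs_le]
  have hp : 0 < 1 + t ^ 2 := by positivity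
  constructor
  · rw [le_div_iff₀ hp]
    nlinarith [sq_nonneg (t + 1)]
  · rw [div_le_one hp]
    nlinarith [sq_nonneg (t - 1)]

/-- The weighted mean `∫₀¹ ℛ·h·√(1+h²)` vanishes for any solution of the corrector
system. -/
theorem corrector_mean_zero (Rm RM lam c : ℝ) (R h : ℝ → ℝ)
    (hmeas : Measurable R) (hper : Function.Periodic R 1)
    (hRm : 0 < Rm) (hbd : ∀ᵐ z : ℝ, Rm ≤ R z ∧ R z ≤ RM)
    (hlam : 0 < lam) (hsol : SolvesCorr R lam c h) :
    (∫ z in (0:ℝ)..1, R z * h z * Real.sqrt (1 + h z ^ 2)) = 0 := by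
  obtain ⟨⟨K, hK⟩, hhper, hmean, hode⟩ := hsol
  have hac : AbsolutelyContinuousOnInterval (fun z => Real.log (1 + h z ^ 2)) 0 1 :=
    ((lipschitzWith_log_one_add_sq.comp hK).lipschitzOnWith
      (s := Set.uIcc 0 1)).absolutelyContinuousOnInterval
  have hae : ∀ᵐ z : ℝ, R z * h z * Real.sqrt (1 + h z ^ 2) =
      c * h z + lam / 2 * deriv (fun z => Real.log (1 + h z ^ 2)) z := by
    filter_upwards [hode, hK.ae_differentiableAt_real] with z hz hd
    have hderiv : deriv (fun z => Real.log (1 + h z ^ 2)) z =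
        2 * h z / (1 + h z ^ 2) * deriv h z :=
      ((hasDerivAt_log_one_add_sq (h z)).comp z hd.hasDerivAt).deriv
    rw [hderiv]
    linear_combination h z * hz
  have h1 : h 1 = h 0 := by simpa using hhper 0
  rw [intervalIntegral.integral_congr_ae (hae.mono fun z hz _ => hz),
    intervalIntegral.integral_add ((hK.continuous.intervalIntegrable 0 1).const_mul c)
      (hac.intervalIntegrable_deriv.const_mul (lam / 2)),
    intervalIntegral.integral_const_mul, intervalIntegral.integral_const_mul, hmean,
    hac.integral_deriv_eq_sub, h1]
  simp
end
end

section
/- Let ℛ : ℝ → ℝ be measurable, 1-periodic, with constants 0 < ℛ_m ≤ ℛ(z) ≤ ℛ_M for almost every z. Suppose 0 < λ₁ < λ₂, and that (c₁, h₁) solves the corrector system for λ₁ while (c₂, h₂) solves the corrector system for λ₂. Then c₂ ≤ c₁; and if moreover ℛ is not almost everywhere equal to a constant, then c₂ < c₁. -/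
/-!
Write `s = h / √(1 + h²)` and `κ = 1 / √(1 + h²)` (sine and cosine of the slope angle). The corrector
equation becomes `λ s' = R - c κ`. Let `w = exp (-(c₂/λ₂) ∫₀ᶻ h₂)`, a positive `C¹` function which is
`1`-periodic because `h₂` has zero mean. Then, almost everywhere,

`(w (λ₁ s₁ - λ₂ s₂))' = w (c₂ √(1 + h₂²) - c₁ κ₁ - (λ₁/λ₂) c₂ h₂ s₁)`;

the function `R` cancels, and the right-hand side is continuous. By periodicity it has zero integral
over a period. Moreover `c₂ > 0`, since otherwise `h₂` would be strictly increasing. If `c₁ ≤ c₂`, the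
Cauchy–Schwarz inequality in the plane (`κ₁² + s₁² = 1`) together with `λ₁/λ₂ < 1` shows that the
right-hand side is nonnegative, and positive where `h₂ ≠ 0`. So it vanishes identically, whence
`h₂ = 0`, `c₂ = c₁ κ₁ ≤ c₁` and `R = c₂` almost everywhere. Both claims follow.

The underlying variational fact is that `c` is the value for which the convex functional
`w ↦ ∫ √(c² w² + λ² w'²) - R w` on positive periodic functions has infimum zero.
-/

open MeasureTheory Real Filter

noncomputable section

open Set

/-- The sine of the slope angle, `h / √(1 + h²)`, is absolutely continuous for Lipschitz `h`. -/
lemma ac_sine {h : ℝ → ℝ} {K : NNReal} (hK : LipschitzWith K h) :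
    AbsolutelyContinuousOnInterval (fun z => h z / √(1 + h z ^ 2)) 0 1 := by
  have hφ : ContDiff ℝ 1 (fun t : ℝ => t / √(1 + t ^ 2)) := by
    refine contDiff_id.div (ContDiff.sqrt (by fun_prop) fun t => by positivity)
      fun t => by positivity
  obtain ⟨M, hM⟩ := (isCompact_uIcc (a := (0 : ℝ)) (b := 1)).exists_bound_of_continuousOn
    hK.continuous.continuousOn
  obtain ⟨L, hL⟩ := hφ.contDiffOn.exists_lipschitzOnWith (s := Icc (-M) M) (by decide)
    (convex_Icc _ _) isCompact_Icc
  have := hL.comp (hK.lipschitzOnWith (s := uIcc 0 1)) (fun z hz => abs_le.1 (hM z hz))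
  exact this.absolutelyContinuousOnInterval

lemma hasDerivAt_sine {h : ℝ → ℝ} {z h' : ℝ} (hd : HasDerivAt h h' z) :
    HasDerivAt (fun z => h z / √(1 + h z ^ 2)) (h' / (1 + h z ^ 2) / √(1 + h z ^ 2)) z := by
  have hp : 0 < 1 + h z ^ 2 := by positivity
  have h1 : HasDerivAt (fun z => 1 + h z ^ 2) (2 * h z * h') z := by
    simpa using (hd.pow 2).const_add 1
  have h2 := hd.div (h1.sqrt hp.ne') (by positivity)
  refine h2.congr_deriv ?_
  have hs : √(1 + h z ^ 2) ^ 2 = 1 + h z ^ 2 := Real.sq_sqrt hp.le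
  have hs0 : 0 < √(1 + h z ^ 2) := by positivity
  rw [hs]
  field_simp
  rw [hs]
  ring

/-- The speed is positive: otherwise `h' ≥ Rm / λ` almost everywhere, contradicting periodicity. -/
lemma speed_pos {Rm RM lam c : ℝ} {R h : ℝ → ℝ} (hRm : 0 < Rm)
    (hbd : ∀ᵐ z : ℝ, Rm ≤ R z ∧ R z ≤ RM) (hlam : 0 < lam) (hs : SolvesCorr R lam c h) :
    0 < c := by
  obtain ⟨⟨K, hK⟩, hp, -, heq⟩ := hs
  by_contra! hc
  have hac : AbsolutelyContinuousOnInterval h 0 1 :=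
    (hK.lipschitzOnWith (s := uIcc 0 1)).absolutelyContinuousOnInterval
  have hint := hac.integral_deriv_eq_sub
  have h01 : h 1 = h 0 := by simpa using hp 0
  have hle : ∫ _ in (0 : ℝ)..1, Rm / lam ≤ ∫ z in (0 : ℝ)..1, deriv h z := by
    refine intervalIntegral.integral_mono_ae zero_le_one (by simp) hac.intervalIntegrable_deriv ?_
    filter_upwards [heq, hbd] with z hz hb
    have hq : 1 ≤ √(1 + h z ^ 2) := Real.one_le_sqrt.2 (by nlinarith [sq_nonneg (h z)])
    have hA : Rm ≤ lam * deriv h z / (1 + h z ^ 2) := by rw [← hz]; nlinarith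
    rw [le_div_iff₀ (by positivity)] at hA
    rw [div_le_iff₀ hlam]
    nlinarith [sq_nonneg (h z)]
  rw [hint, h01] at hle
  have : 0 < Rm / lam := by positivity
  simp at hle
  linarith

/-- Strict Cauchy–Schwarz estimate for the unit vector `(1, a) / √(1 + a²)` paired with `(1, r b)`. -/
lemma cauchy_strict {a b r : ℝ} (hr0 : 0 < r) (hr : r < 1) (hb : b ≠ 0) :
    1 / √(1 + a ^ 2) + r * b * (a / √(1 + a ^ 2)) < √(1 + b ^ 2) := by
  have hqa : 0 < √(1 + a ^ 2) := by positivity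
  have : 1 / √(1 + a ^ 2) + r * b * (a / √(1 + a ^ 2)) = (1 + r * b * a) / √(1 + a ^ 2) := by
    ring
  rw [this, div_lt_iff₀ hqa, ← Real.sqrt_mul (by positivity)]
  apply Real.lt_sqrt_of_sq_lt
  have hb2 : 0 < b ^ 2 := by positivity
  have h1 : 0 < (1 - r ^ 2) * b ^ 2 * (1 + a ^ 2) := by
    have : 0 < 1 - r ^ 2 := by nlinarith
    positivity
  nlinarith [sq_nonneg (a - r * b)]

/-- If `c₁ ≤ c₂`, then `c₂ ≤ c₁` and `R` is almost everywhere equal to `c₂`. -/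
lemma rigidity {Rm RM lam₁ lam₂ c₁ c₂ : ℝ} {R h₁ h₂ : ℝ → ℝ} (hRm : 0 < Rm)
    (hbd : ∀ᵐ z : ℝ, Rm ≤ R z ∧ R z ≤ RM) (hlam₁ : 0 < lam₁) (hlt : lam₁ < lam₂)
    (hsol₁ : SolvesCorr R lam₁ c₁ h₁) (hsol₂ : SolvesCorr R lam₂ c₂ h₂) (hc : c₁ ≤ c₂) :
    c₂ ≤ c₁ ∧ ∀ᵐ z : ℝ, R z = c₂ := by
  have hlam₂ : 0 < lam₂ := hlam₁.trans hlt
  have hc₁ := speed_pos hRm hbd hlam₁ hsol₁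
  have hc₂ := speed_pos hRm hbd hlam₂ hsol₂
  obtain ⟨⟨K₁, hK₁⟩, hp₁, -, heq₁⟩ := hsol₁
  obtain ⟨⟨K₂, hK₂⟩, hp₂, hm₂, heq₂⟩ := hsol₂
  have hcont₁ := hK₁.continuous
  have hcont₂ := hK₂.continuous
  set r := lam₁ / lam₂ with hr
  have hr0 : 0 < r := by positivity
  have hr1 : r < 1 := (div_lt_one hlam₂).2 hlt
  set w : ℝ → ℝ := fun z => Real.exp (-(c₂ / lam₂) * ∫ t in (0 : ℝ)..z, h₂ t) with hw
  have hwd : ∀ z, HasDerivAt w (w z * (-(c₂ / lam₂) * h₂ z)) z := fun z =>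
    ((hcont₂.integral_hasStrictDerivAt 0 z).hasDerivAt.const_mul _).exp
  have hwc : Continuous w := continuous_iff_continuousAt.2 fun z => (hwd z).continuousAt
  have hwpos : ∀ z, 0 < w z := fun z => Real.exp_pos _
  have hwC1 : ContDiff ℝ 1 w := by
    refine contDiff_one_iff_deriv.2 ⟨fun z => (hwd z).differentiableAt, ?_⟩
    have : deriv w = fun z => w z * (-(c₂ / lam₂) * h₂ z) := funext fun z => (hwd z).deriv
    rw [this]
    fun_prop
  have hw01 : w 1 = w 0 := by simp [hw, hm₂]
  set s₁ : ℝ → ℝ := fun z => h₁ z / √(1 + h₁ z ^ 2) with hs₁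
  set s₂ : ℝ → ℝ := fun z => h₂ z / √(1 + h₂ z ^ 2) with hs₂
  -- `G` is the derivative of `F` almost everywhere; it no longer involves `R`.
  set F : ℝ → ℝ := w * ((fun z => lam₁ * s₁ z) - fun z => lam₂ * s₂ z) with hF
  set G : ℝ → ℝ := fun z => w z * (c₂ * √(1 + h₂ z ^ 2) - c₁ * (1 / √(1 + h₁ z ^ 2))
    - c₂ * (r * h₂ z * (h₁ z / √(1 + h₁ z ^ 2)))) with hG
  have hFac : AbsolutelyContinuousOnInterval F 0 1 :=
    hwC1.contDiffOn.absolutelyContinuousOnInterval.mul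
      (((ac_sine hK₁).const_mul _).sub ((ac_sine hK₂).const_mul _))
  have hFG : ∀ᵐ z : ℝ, deriv F z = G z := by
    filter_upwards [heq₁, heq₂, hK₁.ae_differentiableAt_real, hK₂.ae_differentiableAt_real]
      with z e₁ e₂ d₁ d₂
    have D := (hwd z).mul (((hasDerivAt_sine d₁.hasDerivAt).const_mul lam₁).sub
      ((hasDerivAt_sine d₂.hasDerivAt).const_mul lam₂))
    have D' : deriv F z = _ := D.deriv
    rw [D']
    have hq₁ : 0 < √(1 + h₁ z ^ 2) := by positivity
    have hq₂ : 0 < √(1 + h₂ z ^ 2) := by positivity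
    have hsq₂ : √(1 + h₂ z ^ 2) ^ 2 = 1 + h₂ z ^ 2 := Real.sq_sqrt (by positivity)
    have a₁ : lam₁ * (deriv h₁ z / (1 + h₁ z ^ 2) / √(1 + h₁ z ^ 2))
        = R z - c₁ / √(1 + h₁ z ^ 2) := by
      rw [← div_mul_eq_mul_div] at e₁
      calc _ = (lam₁ / (1 + h₁ z ^ 2) * deriv h₁ z) / √(1 + h₁ z ^ 2) := by ring
        _ = _ := by
          rw [← e₁]; field_simp; ring
    have a₂ : lam₂ * (deriv h₂ z / (1 + h₂ z ^ 2) / √(1 + h₂ z ^ 2))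
        = R z - c₂ / √(1 + h₂ z ^ 2) := by
      rw [← div_mul_eq_mul_div] at e₂
      calc _ = (lam₂ / (1 + h₂ z ^ 2) * deriv h₂ z) / √(1 + h₂ z ^ 2) := by ring
        _ = _ := by
          rw [← e₂]; field_simp; ring
    -- The identity `κ₂ + h₂ s₂ = √(1 + h₂²)`.
    have a₃ : √(1 + h₂ z ^ 2) = 1 / √(1 + h₂ z ^ 2) + h₂ z * (h₂ z / √(1 + h₂ z ^ 2)) := by
      field_simp
      linarith
    simp only [Pi.sub_apply, hG, a₁, a₂]
    rw [show c₂ * √(1 + h₂ z ^ 2)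
      = c₂ * (1 / √(1 + h₂ z ^ 2) + h₂ z * (h₂ z / √(1 + h₂ z ^ 2))) by rw [← a₃]]
    simp only [hr]
    field_simp
    ring
  have hGc : Continuous G := by
    have p₁ : ∀ z, √(1 + h₁ z ^ 2) ≠ 0 := fun z => by positivity
    have q₁ : Continuous fun z => √(1 + h₁ z ^ 2) := by fun_prop
    have q₂ : Continuous fun z => √(1 + h₂ z ^ 2) := by fun_prop
    exact hwc.mul (((q₂.const_mul _).sub ((continuous_const.div q₁ p₁).const_mul _)).sub
      (((hcont₂.const_mul _).mul (hcont₁.div q₁ p₁)).const_mul _))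
  have hGint : ∫ z in (0 : ℝ)..1, G z = 0 := by
    rw [← intervalIntegral.integral_congr_ae (hFG.mono fun z hz _ => hz),
      hFac.integral_deriv_eq_sub]
    have e₁ : h₁ 1 = h₁ 0 := by simpa using hp₁ 0
    have e₂ : h₂ 1 = h₂ 0 := by simpa using hp₂ 0
    simp [hF, hs₁, hs₂, hw01, e₁, e₂]
  have hκ : ∀ z, 0 < 1 / √(1 + h₁ z ^ 2) := fun z => by positivity
  have hGpos : ∀ z, h₂ z ≠ 0 → 0 < G z := fun z hz => by
    refine mul_pos (hwpos z) ?_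
    have := cauchy_strict (a := h₁ z) hr0 hr1 hz
    have := mul_lt_mul_of_pos_left this hc₂
    have := mul_le_mul_of_nonneg_right hc (hκ z).le
    linarith
  have hκ1 : ∀ z, 1 / √(1 + h₁ z ^ 2) ≤ 1 := fun z => by
    rw [div_le_one (by positivity)]
    exact Real.one_le_sqrt.2 (by nlinarith [sq_nonneg (h₁ z)])
  have hGnn : ∀ z, 0 ≤ G z := fun z => by
    by_cases hz : h₂ z = 0
    · refine mul_nonneg (hwpos z).le ?_
      simp only [hz]
      have := mul_le_mul_of_nonneg_left (hκ1 z) hc₁.le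
      simp at this ⊢
      linarith
    · exact (hGpos z hz).le
  have hG0 : ∀ z ∈ Icc (0 : ℝ) 1, G z = 0 := by
    intro z hz
    by_contra hne
    have := intervalIntegral.integral_pos zero_lt_one hGc.continuousOn (fun x _ => hGnn x)
      ⟨z, hz, lt_of_le_of_ne (hGnn z) (Ne.symm hne)⟩
    linarith
  have hh₂ : ∀ z, h₂ z = 0 := by
    intro z
    obtain ⟨y, hy, hzy⟩ := hp₂.exists_mem_Ico₀ zero_lt_one z
    rw [hzy]
    by_contra hne
    exact (hGpos y hne).ne' (hG0 y ⟨hy.1, hy.2.le⟩)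
  constructor
  · have h0 := hG0 0 (by simp)
    have h1 := (mul_eq_zero.1 h0).resolve_left (hwpos 0).ne'
    have := mul_le_mul_of_nonneg_left (hκ1 0) hc₁.le
    simp only [hh₂] at h1
    simp at h1 this
    linarith
  · filter_upwards [heq₂] with z hz
    have : h₂ = fun _ => 0 := funext hh₂
    simp [this] at hz
    linarith

/-- Monotonicity of the homogenized speed: the speed is nonincreasing in the curvature
regime `λ`, and strictly decreasing as soon as `ℛ` is not a.e. constant. -/
theorem corrector_speed_monotone (Rm RM lam₁ lam₂ c₁ c₂ : ℝ) (R h₁ h₂ : ℝ → ℝ)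
    (hmeas : Measurable R) (hper : Function.Periodic R 1)
    (hRm : 0 < Rm) (hbd : ∀ᵐ z : ℝ, Rm ≤ R z ∧ R z ≤ RM)
    (hlam₁ : 0 < lam₁) (hlt : lam₁ < lam₂)
    (hsol₁ : SolvesCorr R lam₁ c₁ h₁) (hsol₂ : SolvesCorr R lam₂ c₂ h₂) :
    c₂ ≤ c₁ ∧ (¬(∃ k : ℝ, ∀ᵐ z : ℝ, R z = k) → c₂ < c₁) := by
  have key := rigidity hRm hbd hlam₁ hlt hsol₁ hsol₂
  refine ⟨?_, fun hR => ?_⟩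
  · by_contra! h
    exact absurd (key h.le).1 (not_le.2 h)
  · by_contra! h
    exact hR ⟨c₂, (key h).2⟩
end
end

section
/- Let ℛ : ℝ → ℝ be measurable, 1-periodic, with constants 0 < ℛ_m ≤ ℛ(z) ≤ ℛ_M for almost every z. Then for every ε > 0 there exists Λ > 0 such that for every λ ≥ Λ and every pair (c, h) solving the corrector system for λ, one has |c − ∫₀¹ ℛ(z) dz| ≤ ε. -/
/-!
Let `θ = arctan ∘ h`. Multiplying the corrector equation by `cos θ` turns it into
`λ (sin θ)' = R - c cos θ`. Integrating over a period gives `c ∫ cos θ = M` with `M = ∫ R`, so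
`c > 0` and the `L¹` norm of `λ (sin θ)'` over a period is at most `2 M`. As `h` has zero mean, it
vanishes somewhere, hence `|sin θ| ≤ 2 M / λ` on `[0, 1]`, a bound that does not depend on the
Lipschitz constant of `h`. From `cos θ ≥ 1 - sin² θ` it follows that
`c (1 - (2 M / λ)²) ≤ M ≤ c`, and `λ → ∞` gives the claim.

The fundamental theorem of calculus is applied to `sin θ`, which is Lipschitz, hence absolutely
continuous; its derivative is only known almost everywhere.
-/

open MeasureTheory Real Filter

noncomputable section

theorem hasDerivAt_sin_arctan (x : ℝ) :
    HasDerivAt (fun x : ℝ => sin (arctan x)) (cos (arctan x) * (1 / (1 + x ^ 2))) x :=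
  (hasDerivAt_arctan x).sin

theorem lipschitzWith_sin_arctan : LipschitzWith 1 (fun x : ℝ => sin (arctan x)) := by
  refine lipschitzWith_of_nnnorm_deriv_le
    (fun x => (hasDerivAt_sin_arctan x).differentiableAt) fun x => ?_
  rw [(hasDerivAt_sin_arctan x).deriv, ← NNReal.coe_le_coe, coe_nnnorm, norm_mul, NNReal.coe_one]
  refine mul_le_one₀ (abs_cos_le_one _) (norm_nonneg _) ?_
  rw [Real.norm_eq_abs, abs_of_nonneg (by positivity), div_le_one (by positivity)]
  nlinarith [sq_nonneg x]

/-- The corrector equation multiplied by `cos θ`, where `θ = arctan ∘ h`. -/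
theorem ae_deriv_sin_arctan {R h : ℝ → ℝ} {lam c : ℝ} (H : SolvesCorr R lam c h) :
    ∀ᵐ z : ℝ, lam * deriv (fun z => sin (arctan (h z))) z = R z - c * cos (arctan (h z)) := by
  obtain ⟨⟨K, hK⟩, -, -, heq⟩ := H
  filter_upwards [heq, hK.ae_differentiableAt_real] with z hz hd
  have hder := ((hasDerivAt_sin_arctan (h z)).comp z hd.hasDerivAt).deriv
  simp only [Function.comp_def] at hder
  have hs : 0 < √(1 + h z ^ 2) := Real.sqrt_pos.2 (by positivity)
  have hinv : cos (arctan (h z)) * √(1 + h z ^ 2) = 1 := by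
    rw [cos_arctan]; field_simp
  have e : lam * deriv h z / (1 + h z ^ 2) = lam * (1 / (1 + h z ^ 2) * deriv h z) := by ring
  rw [e] at hz
  rw [hder]
  linear_combination (-cos (arctan (h z))) * hz + R z * hinv

/-- Integrated form of the equation for `sin θ`; the right-hand side is an integral over a
possibly reversed interval. -/
theorem lam_mul_sin_sub {R h : ℝ → ℝ} {lam c : ℝ} (H : SolvesCorr R lam c h) (a b : ℝ) :
    lam * (sin (arctan (h b)) - sin (arctan (h a))) =
      ∫ z in a..b, (R z - c * cos (arctan (h z))) := by
  obtain ⟨K, hK⟩ := H.1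
  have hac : AbsolutelyContinuousOnInterval (fun z => sin (arctan (h z))) a b :=
    (lipschitzWith_sin_arctan.comp hK).lipschitzOnWith.absolutelyContinuousOnInterval
  rw [← hac.integral_deriv_eq_sub, ← intervalIntegral.integral_const_mul]
  refine intervalIntegral.integral_congr_ae ?_
  filter_upwards [ae_deriv_sin_arctan H] with z hz _ using hz

/-- A continuous function of zero mean on `(0, 1)` vanishes somewhere on `[0, 1]`. -/
theorem exists_zero_of_mean_zero {h : ℝ → ℝ} (hc : Continuous h)
    (h0 : (∫ z in (0:ℝ)..1, h z) = 0) : ∃ z ∈ Set.Icc (0:ℝ) 1, h z = 0 := by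
  obtain ⟨z, hz, e⟩ := exists_eq_interval_average (f := h) (a := 0) (b := 1) (by norm_num)
    hc.continuousOn
  refine ⟨z, ?_, ?_⟩
  · rw [Set.uIoo_of_le zero_le_one] at hz
    exact Set.Ioo_subset_Icc_self hz
  · rw [e, interval_average_eq, h0, smul_zero]

/-- The quantitative estimate `c (1 - (2 M / λ)²) ≤ M ≤ c`, with `M = ∫₀¹ R`. -/
theorem speed_bounds {R h : ℝ → ℝ} {lam c M : ℝ} (H : SolvesCorr R lam c h) (hlam : 0 < lam)
    (hR : IntervalIntegrable R volume 0 1) (hpos : ∀ᵐ z : ℝ, 0 ≤ R z)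
    (hM : ∫ z in (0:ℝ)..1, R z = M) (hM0 : 0 < M) :
    M ≤ c ∧ c * (1 - (2 * M / lam) ^ 2) ≤ M := by
  obtain ⟨K, hK⟩ := H.1
  have hcont : Continuous fun z => cos (arctan (h z)) :=
    continuous_cos.comp (continuous_arctan.comp hK.continuous)
  have hwi : IntervalIntegrable (fun z => cos (arctan (h z))) volume 0 1 :=
    hcont.intervalIntegrable _ _
  have hwpos : ∀ z, 0 < cos (arctan (h z)) := fun z => cos_arctan_pos _
  have hh : h 1 = h 0 := by simpa using H.2.1 0
  have hcM : c * ∫ z in (0:ℝ)..1, cos (arctan (h z)) = M := by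
    have e := lam_mul_sin_sub H 0 1
    rw [hh, sub_self, mul_zero, intervalIntegral.integral_sub hR (hwi.const_mul c),
      intervalIntegral.integral_const_mul, hM] at e
    linarith
  set W := ∫ z in (0:ℝ)..1, cos (arctan (h z)) with hW
  have hW0 : 0 ≤ W := intervalIntegral.integral_nonneg zero_le_one fun z _ => (hwpos z).le
  have hW1 : W ≤ 1 := by
    have := intervalIntegral.integral_mono_on (zero_le_one) hwi
      (intervalIntegrable_const (c := (1:ℝ))) fun z _ => cos_le_one (arctan (h z))
    simpa using this
  have hc : 0 < c := by
    by_contra! hc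
    nlinarith [mul_nonneg (neg_nonneg.2 hc) hW0]
  refine ⟨by nlinarith, ?_⟩
  obtain ⟨z₀, hz₀, hz₀'⟩ := exists_zero_of_mean_zero hK.continuous H.2.2.1
  have hsin : ∀ z ∈ Set.Icc (0:ℝ) 1, |sin (arctan (h z))| ≤ 2 * M / lam := by
    intro z hz
    have e := lam_mul_sin_sub H z₀ z
    rw [hz₀', arctan_zero, sin_zero, sub_zero] at e
    have hsub : Set.uIoc z₀ z ⊆ Set.uIoc 0 1 := by
      rw [Set.uIoc_of_le zero_le_one]
      exact Set.Ioc_subset_Ioc (le_min hz₀.1 hz.1) (max_le hz₀.2 hz.2)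
    have hgi : IntervalIntegrable (fun z => R z + c * cos (arctan (h z))) volume 0 1 :=
      hR.add (hwi.const_mul c)
    have hle : |∫ z in z₀..z, (R z - c * cos (arctan (h z)))| ≤
        |∫ z in z₀..z, (R z + c * cos (arctan (h z)))| := by
      rw [← Real.norm_eq_abs]
      refine intervalIntegral.norm_integral_le_abs_of_norm_le (ae_restrict_of_ae ?_) ?_
      · filter_upwards [hpos] with t ht
        have := mul_pos hc (hwpos t)
        rw [Real.norm_eq_abs, abs_le]
        constructor <;> linarith
      · exact intervalIntegrable_iff.2 ((intervalIntegrable_iff.1 hgi).mono_set hsub)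
    have hmono : |∫ z in z₀..z, (R z + c * cos (arctan (h z)))| ≤
        |∫ z in (0:ℝ)..1, (R z + c * cos (arctan (h z)))| := by
      refine intervalIntegral.abs_integral_mono_interval hsub (ae_restrict_of_ae ?_) hgi
      filter_upwards [hpos] with t ht
      exact add_nonneg ht (mul_pos hc (hwpos t)).le
    rw [intervalIntegral.integral_add hR (hwi.const_mul c), intervalIntegral.integral_const_mul,
      hM, hcM, abs_of_pos (show 0 < M + M by linarith)] at hmono
    rw [← e, abs_mul, abs_of_pos hlam] at hle
    rw [le_div_iff₀ hlam]
    linarith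
  have hWlow : 1 - (2 * M / lam) ^ 2 ≤ W := by
    have := intervalIntegral.integral_mono_on (zero_le_one)
      (intervalIntegrable_const (c := 1 - (2 * M / lam) ^ 2)) hwi fun z hz => by
        have h1 := sq_le_sq' (abs_le.1 (hsin z hz)).1 (abs_le.1 (hsin z hz)).2
        have h2 := sin_sq_add_cos_sq (arctan (h z))
        nlinarith [hwpos z, cos_le_one (arctan (h z))]
    simpa using this
  calc c * (1 - (2 * M / lam) ^ 2) ≤ c * W := by gcongr
    _ = M := hcM

/-- In the large-curvature regime the speed of the corrector system converges to the
mean value of `ℛ`: for every `ε > 0` there is `Λ > 0` such that any solution for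
`λ ≥ Λ` has speed within `ε` of `∫₀¹ ℛ`. -/
theorem corrector_speed_limit_at_infinity (Rm RM : ℝ) (R : ℝ → ℝ)
    (hmeas : Measurable R) (hper : Function.Periodic R 1)
    (hRm : 0 < Rm) (hbd : ∀ᵐ z : ℝ, Rm ≤ R z ∧ R z ≤ RM) :
    ∀ ε > (0:ℝ), ∃ Λ > (0:ℝ), ∀ lam ≥ Λ, ∀ (c : ℝ) (h : ℝ → ℝ),
      SolvesCorr R lam c h → |c - ∫ z in (0:ℝ)..1, R z| ≤ ε := by
  intro ε hε
  have hR : IntervalIntegrable R volume 0 1 := by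
    refine (intervalIntegrable_const (c := RM)).mono_fun hmeas.aestronglyMeasurable
      (ae_restrict_of_ae ?_)
    filter_upwards [hbd] with z hz
    rw [Real.norm_eq_abs, Real.norm_eq_abs, abs_of_nonneg (by linarith),
      abs_of_nonneg (by linarith)]
    exact hz.2
  obtain ⟨M, hM⟩ : ∃ M, ∫ z in (0:ℝ)..1, R z = M := ⟨_, rfl⟩
  have hM0 : 0 < M := by
    have := intervalIntegral.integral_mono_ae (zero_le_one)
      (intervalIntegrable_const (c := Rm)) hR (hbd.mono fun z hz => hz.1)
    simp only [intervalIntegral.integral_const, sub_zero, one_smul, hM] at this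
    linarith
  -- `δ = 2 M / λ` satisfies `δ ≤ 1 / 2` and `M δ ≤ ε`, so that
  -- `c - M ≤ c δ² ≤ 2 M δ² ≤ M δ ≤ ε`.
  refine ⟨4 * M + 2 * M ^ 2 / ε, by positivity, fun lam hlam c h H => ?_⟩
  have hq : 0 < 2 * M ^ 2 / ε := by positivity
  have hl : 0 < lam := by linarith
  obtain ⟨h1, h2⟩ := speed_bounds H hl hR (hbd.mono fun z hz => hRm.le.trans hz.1) hM hM0
  have hδ0 : 0 < 2 * M / lam := by positivity
  have hδ1 : 2 * M / lam ≤ 1 / 2 := by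
    rw [div_le_iff₀ hl]; linarith
  have hδ2 : M * (2 * M / lam) ≤ ε := by
    have h3 : 2 * M ^ 2 / ε ≤ lam := by linarith
    rw [div_le_iff₀ hε] at h3
    rw [← mul_div_assoc, div_le_iff₀ hl]
    linarith
  rw [hM, abs_of_nonneg (by linarith)]
  generalize 2 * M / lam = δ at *
  have hδsq : δ ^ 2 ≤ δ / 2 := by nlinarith
  have hc2 : c ≤ 2 * M := by nlinarith
  nlinarith [mul_le_mul hc2 hδsq (sq_nonneg δ) (by linarith)]
end
end

section
/- Let ℛ : ℝ → ℝ be measurable, 1-periodic, with constants 0 < ℛ_m ≤ ℛ(z) ≤ ℛ_M for almost every z. Then there exists a constant C, depending only on ℛ_m and ℛ_M, such that for every λ > 0 and every pair (c, h) solving the corrector system for λ, one has sup_z |h(z)| ≤ C/λ and |h'(z)| ≤ C/λ for almost every z. -/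
/-!
Let `h` be a corrector with speed `c`. Wherever `ℛ_M √(1 + h²) < c` the equation forces `h' < 0`,
uniformly near such a point, and wherever `c < ℛ_m √(1 + h²)` it forces `h' > 0`; the fundamental
theorem of calculus for Lipschitz functions turns this into strict local monotonicity
(`SolvesCorr.falls_near`, `SolvesCorr.rises_near`).

* If `ℛ_M < c`, then `h` is strictly decreasing near each of its zeros. One zero `x₀` exists because
  `h` has mean zero, and continuous induction gives `h ≤ 0` on `[x₀, x₀ + 1]`. Just before `x₀ + 1`,
  however, `h` is positive by periodicity. Hence `c ≤ ℛ_M` (`SolvesCorr.speed_le`).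
* At a maximum or a minimum `x` of `h`, strict increase is impossible, so
  `ℛ_m √(1 + h(x)²) ≤ c ≤ ℛ_M`. Therefore `√(1 + h²) ≤ Q := ℛ_M / ℛ_m` everywhere, and
  `0 ≤ c` (`SolvesCorr.mul_sqrt_le_speed`).

The equation now gives `|h'| = (1 + h²) |ℛ √(1 + h²) - c| / λ ≤ Q² (ℛ_M Q + ℛ_M) / λ`
a.e., and integrating `h'` over at most one period from a zero of `h` gives the same bound for `|h|`.
-/

open MeasureTheory Real Filter

noncomputable section

/-- The fundamental theorem of calculus for Lipschitz functions, as a one-sided bound. -/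
lemma lipschitz_sub_le_of_ae_deriv_le {f : ℝ → ℝ} {K : NNReal} (hf : LipschitzWith K f)
    {a b η : ℝ} (hab : a ≤ b) (hd : ∀ᵐ z : ℝ, z ∈ Set.Icc a b → deriv f z ≤ η) :
    f b - f a ≤ η * (b - a) := by
  have hac : AbsolutelyContinuousOnInterval f a b :=
    (hf.lipschitzOnWith).absolutelyContinuousOnInterval
  rw [← hac.integral_deriv_eq_sub]
  have := intervalIntegral.integral_mono_ae_restrict (μ := volume) hab
    hac.intervalIntegrable_deriv (g := fun _ => η) (by simp)
    ((ae_restrict_iff' measurableSet_Icc).2 hd)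
  simpa [mul_comm] using this

lemma lipschitz_abs_sub_le_of_ae_deriv_le {f : ℝ → ℝ} {K : NNReal} (hf : LipschitzWith K f)
    {B : ℝ} (hd : ∀ᵐ z : ℝ, |deriv f z| ≤ B) (a b : ℝ) : |f b - f a| ≤ B * |b - a| := by
  have hac : AbsolutelyContinuousOnInterval f a b :=
    (hf.lipschitzOnWith).absolutelyContinuousOnInterval
  rw [← hac.integral_deriv_eq_sub]
  refine intervalIntegral.norm_integral_le_of_norm_le_const_ae (E := ℝ) ?_
  filter_upwards [hd] with z hz _ using hz

namespace SolvesCorr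

variable {R h : ℝ → ℝ} {Rm RM lam c : ℝ}

lemma continuous (H : SolvesCorr R lam c h) : Continuous h := by
  obtain ⟨⟨K, hK⟩, -⟩ := H
  exact hK.continuous

/-- The corrector equation solved for the derivative. -/
lemma ae_mul_deriv_eq (H : SolvesCorr R lam c h) :
    ∀ᵐ z : ℝ, lam * deriv h z = (1 + h z ^ 2) * (R z * √(1 + h z ^ 2) - c) := by
  filter_upwards [H.2.2.2] with z hz
  have : (1 + h z ^ 2) ≠ 0 := by positivity
  field_simp at hz
  linarith

lemma falls_near (H : SolvesCorr R lam c h) (hlam : 0 < lam)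
    (hR : ∀ᵐ z : ℝ, Rm ≤ R z ∧ R z ≤ RM) {x : ℝ} (hx : RM * √(1 + h x ^ 2) < c) :
    ∃ δ > 0, ∀ a b, x - δ < a → a < b → b < x + δ → h b < h a := by
  obtain ⟨m, hm, hmc⟩ := exists_between hx
  have hcont : Continuous fun z => RM * √(1 + h z ^ 2) := by
    have := H.continuous
    fun_prop
  obtain ⟨δ, hδ, hball⟩ := Metric.eventually_nhds_iff.1
    (hcont.continuousAt.eventually_lt_const hm)
  obtain ⟨K, hK⟩ := H.1
  refine ⟨δ, hδ, fun a b ha hab hb => ?_⟩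
  have key := lipschitz_sub_le_of_ae_deriv_le hK hab.le (η := -((c - m) / lam)) (by
    filter_upwards [H.ae_mul_deriv_eq, hR] with z hz hRz hzI
    have hlt : RM * √(1 + h z ^ 2) < m := hball (by
      rw [Real.dist_eq, abs_lt]
      constructor <;> linarith [hzI.1, hzI.2])
    have hRle : R z * √(1 + h z ^ 2) ≤ RM * √(1 + h z ^ 2) := by
      gcongr
      exact hRz.2
    rw [← neg_div, le_div_iff₀ hlam]
    nlinarith [sq_nonneg (h z)])
  have : 0 < (c - m) / lam * (b - a) :=
    mul_pos (div_pos (by linarith) hlam) (by linarith)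
  linarith

lemma rises_near (H : SolvesCorr R lam c h) (hlam : 0 < lam)
    (hR : ∀ᵐ z : ℝ, Rm ≤ R z ∧ R z ≤ RM) {x : ℝ} (hx : c < Rm * √(1 + h x ^ 2)) :
    ∃ δ > 0, ∀ a b, x - δ < a → a < b → b < x + δ → h a < h b := by
  obtain ⟨m, hmc, hm⟩ := exists_between hx
  have hcont : Continuous fun z => Rm * √(1 + h z ^ 2) := by
    have := H.continuous
    fun_prop
  obtain ⟨δ, hδ, hball⟩ := Metric.eventually_nhds_iff.1
    (hcont.continuousAt.eventually_const_lt hm)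
  obtain ⟨K, hK⟩ := H.1
  refine ⟨δ, hδ, fun a b ha hab hb => ?_⟩
  have key := lipschitz_sub_le_of_ae_deriv_le hK.neg hab.le (η := -((m - c) / lam)) (by
    filter_upwards [H.ae_mul_deriv_eq, hR] with z hz hRz hzI
    have hlt : m < Rm * √(1 + h z ^ 2) := hball (by
      rw [Real.dist_eq, abs_lt]
      constructor <;> linarith [hzI.1, hzI.2])
    have hRle : Rm * √(1 + h z ^ 2) ≤ R z * √(1 + h z ^ 2) := by
      gcongr
      exact hRz.1
    rw [← neg_div, le_div_iff₀ hlam, deriv.neg]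
    nlinarith [sq_nonneg (h z)])
  have : 0 < (m - c) / lam * (b - a) :=
    mul_pos (div_pos (by linarith) hlam) (by linarith)
  simp only [Pi.neg_apply] at key
  linarith

lemma exists_zero (H : SolvesCorr R lam c h) : ∃ x, h x = 0 := by
  obtain ⟨x, -, hx⟩ := exists_eq_interval_average (f := h) (a := 0) (b := 1) (by norm_num)
    H.continuous.continuousOn
  exact ⟨x, by rw [hx, interval_average_eq, H.2.2.1, smul_zero]⟩

/-- The corrector must cross zero upwards somewhere, which bounds its speed from above. -/
lemma speed_le (H : SolvesCorr R lam c h) (hlam : 0 < lam)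
    (hR : ∀ᵐ z : ℝ, Rm ≤ R z ∧ R z ≤ RM) : c ≤ RM := by
  by_contra! hc
  have hfall : ∀ x, h x = 0 → ∃ δ > 0, ∀ a b, x - δ < a → a < b → b < x + δ → h b < h a :=
    fun x hx => H.falls_near hlam hR (by simpa [hx] using hc)
  obtain ⟨x₀, hx₀⟩ := H.exists_zero
  have hnonpos : Set.Icc x₀ (x₀ + 1) ⊆ {z | h z ≤ 0} := by
    refine IsClosed.Icc_subset_of_forall_exists_gt
      ((isClosed_le H.continuous continuous_const).inter isClosed_Icc) hx₀.le ?_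
    rintro x ⟨hx, -⟩ y hy
    obtain ⟨δ, hδ, hle⟩ : ∃ δ > 0, ∀ t, x < t → t < x + δ → h t ≤ 0 := by
      rcases (show h x ≤ 0 from hx).lt_or_eq with hneg | hzero
      · obtain ⟨δ, hδ, hball⟩ := Metric.eventually_nhds_iff.1
          (H.continuous.continuousAt.eventually_lt_const hneg)
        refine ⟨δ, hδ, fun t ht ht' => (hball ?_).le⟩
        rw [Real.dist_eq, abs_lt]
        constructor <;> linarith
      · obtain ⟨δ, hδ, hd⟩ := hfall x hzero
        refine ⟨δ, hδ, fun t ht ht' => ?_⟩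
        linarith [hd x t (by linarith) ht ht']
    have hxy : x < y := hy
    have hpos : 0 < min (y - x) (δ / 2) := lt_min (by linarith) (by linarith)
    have h1 := min_le_left (y - x) (δ / 2)
    have h2 := min_le_right (y - x) (δ / 2)
    exact ⟨x + min (y - x) (δ / 2), hle _ (by linarith) (by linarith), by linarith, by linarith⟩
  obtain ⟨δ, hδ, hd⟩ := hfall x₀ hx₀
  have hpos : 0 < min 1 (δ / 2) := lt_min one_pos (by linarith)
  have h1 := min_le_left 1 (δ / 2)
  have h2 := min_le_right 1 (δ / 2)
  have hgt := hd (x₀ - min 1 (δ / 2)) x₀ (by linarith) (by linarith) (by linarith)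
  have hle : h (x₀ - min 1 (δ / 2) + 1) ≤ 0 := hnonpos ⟨by linarith, by linarith⟩
  rw [H.2.1] at hle
  linarith

/-- At the extrema of `h` the corrector cannot be strictly increasing; since `|h|` attains its
maximum at one of them, the resulting bound holds everywhere. -/
lemma mul_sqrt_le_speed (H : SolvesCorr R lam c h) (hlam : 0 < lam) (hRm : 0 < Rm)
    (hR : ∀ᵐ z : ℝ, Rm ≤ R z ∧ R z ≤ RM) (z : ℝ) : Rm * √(1 + h z ^ 2) ≤ c := by
  have hcpt := H.2.1.compact_of_continuous one_ne_zero H.continuous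
  obtain ⟨_, ⟨xM, rfl⟩, hM⟩ := hcpt.exists_isGreatest (Set.range_nonempty h)
  obtain ⟨_, ⟨xm, rfl⟩, hm⟩ := hcpt.exists_isLeast (Set.range_nonempty h)
  have hmax : Rm * √(1 + h xM ^ 2) ≤ c := by
    by_contra! hlt
    obtain ⟨δ, hδ, hd⟩ := H.rises_near hlam hR hlt
    have := hd xM (xM + δ / 2) (by linarith) (by linarith) (by linarith)
    linarith [hM (Set.mem_range_self (xM + δ / 2))]
  have hmin : Rm * √(1 + h xm ^ 2) ≤ c := by
    by_contra! hlt
    obtain ⟨δ, hδ, hd⟩ := H.rises_near hlam hR hlt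
    have := hd (xm - δ / 2) xm (by linarith) (by linarith) (by linarith)
    linarith [hm (Set.mem_range_self (xm - δ / 2))]
  have hzM := hM (Set.mem_range_self z)
  have hzm := hm (Set.mem_range_self z)
  rcases le_total 0 (h z) with h0 | h0
  · refine le_trans ?_ hmax
    gcongr
  · refine le_trans ?_ hmin
    have : h z ^ 2 ≤ h xm ^ 2 := by nlinarith
    gcongr

end SolvesCorr

/-- Uniform decay of the corrector: there is a constant `C`, depending only on the
bounds `ℛ_m ≤ ℛ ≤ ℛ_M`, such that every solution `(c, h)` of the corrector system for
`λ > 0` satisfies `sup |h| ≤ C/λ` and `|h'| ≤ C/λ` a.e. -/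
theorem corrector_decay (Rm RM : ℝ) (hRm : 0 < Rm) (hle : Rm ≤ RM) :
    ∃ C : ℝ, ∀ R : ℝ → ℝ,
      Measurable R → Function.Periodic R 1 → (∀ᵐ z : ℝ, Rm ≤ R z ∧ R z ≤ RM) →
      ∀ lam : ℝ, 0 < lam → ∀ (c : ℝ) (h : ℝ → ℝ), SolvesCorr R lam c h →
        (∀ z, |h z| ≤ C / lam) ∧ (∀ᵐ z : ℝ, |deriv h z| ≤ C / lam) := by
  have hRM : 0 < RM := hRm.trans_le hle
  refine ⟨(RM / Rm) ^ 2 * (RM * (RM / Rm) + RM), fun R _ _ hR lam hlam c h H => ?_⟩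
  set Q := RM / Rm with hQ
  have hcM : c ≤ RM := H.speed_le hlam hR
  have hsqrt : ∀ z, √(1 + h z ^ 2) ≤ Q := fun z => by
    rw [hQ, le_div_iff₀ hRm]
    linarith [H.mul_sqrt_le_speed hlam hRm hR z]
  have hc0 : 0 ≤ c := le_trans (by positivity) (H.mul_sqrt_le_speed hlam hRm hR 0)
  have hderiv : ∀ᵐ z : ℝ, |deriv h z| ≤ Q ^ 2 * (RM * Q + RM) / lam := by
    filter_upwards [H.ae_mul_deriv_eq, hR] with z hz hRz
    have hsq : 1 + h z ^ 2 ≤ Q ^ 2 := (Real.sqrt_le_left (by positivity)).1 (hsqrt z)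
    have hRs : R z * √(1 + h z ^ 2) ≤ RM * Q :=
      mul_le_mul hRz.2 (hsqrt z) (by positivity) hRM.le
    have hRs0 : 0 ≤ R z * √(1 + h z ^ 2) := mul_nonneg (hRm.le.trans hRz.1) (by positivity)
    have hbracket : |R z * √(1 + h z ^ 2) - c| ≤ RM * Q + RM := by
      rw [abs_le]
      constructor <;> linarith
    calc |deriv h z| = |lam * deriv h z| / lam := by
          rw [abs_mul, abs_of_pos hlam]
          field_simp
      _ ≤ Q ^ 2 * (RM * Q + RM) / lam := by
          rw [hz, abs_mul, abs_of_pos (show 0 < 1 + h z ^ 2 by positivity)]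
          gcongr
  refine ⟨fun z => ?_, hderiv⟩
  obtain ⟨x₀, hx₀⟩ := H.exists_zero
  obtain ⟨y, hy, hzy⟩ := H.2.1.exists_mem_Ico one_pos z x₀
  obtain ⟨K, hK⟩ := H.1
  have key := lipschitz_abs_sub_le_of_ae_deriv_le hK hderiv x₀ y
  rw [hx₀, sub_zero, ← hzy, abs_of_nonneg (sub_nonneg.2 hy.1)] at key
  refine key.trans (mul_le_of_le_one_right (by positivity) ?_)
  linarith [hy.2]
end
end

section
/- Let ℛ : ℝ → ℝ be measurable, 1-periodic, with constants 0 < ℛ_m ≤ ℛ(z) ≤ ℛ_M for almost every z, let λ₀ > 0, and let (c₀, h₀) solve the corrector system for λ₀. Set ℛ̃₀(z) := ℛ(z)·h₀(z)·√(1 + h₀(z)²). Then for every measurable, 1-periodic, essentially bounded f : ℝ → ℝ there exists a unique pair (𝒞, ℋ), where 𝒞 ∈ ℝ and ℋ : ℝ → ℝ is Lipschitz, 1-periodic, with ∫₀¹ ℋ = 0, such that, writing ℋ̃ := ℋ/(1 + h₀²), one has −𝒞 + ℛ̃₀(z)·ℋ̃(z) − λ₀·ℋ̃'(z) = f(z)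 for almost every z; moreover 𝒞 = −(∫₀¹ f(z)·exp((1/λ₀)·∫_z¹ ℛ̃₀(t) dt) dz) / (∫₀¹ exp((1/λ₀)·∫_z¹ ℛ̃₀(t) dt) dz). -/
/-!
Write `q = 1 + h₀²` and `a = ℛ̃₀/λ₀`. Multiplying the corrector equation by `h₀/λ₀` shows that
`a = (c₀/λ₀)·h₀ + h₀·h₀'/(1 + h₀²)` almost everywhere, so `a` has the explicit primitive
`P(z) = (c₀/λ₀)·∫₀ᶻ h₀ + ½·log (1 + h₀²)`, which is Lipschitz and, because `h₀` has zero mean,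
`1`-periodic (`SolvesCorr.exists_primitive`). Hence
`E(z) = exp ((1/λ₀)·∫_z¹ ℛ̃₀) = exp (P 1 - P z)` is a periodic Lipschitz integrating factor.

For a solution `(𝒞, ℋ)`, the function `w = (ℋ/q)·E` is periodic and Lipschitz with
`w' = -(f + 𝒞)/λ₀·E` almost everywhere (`LinearizedSol.hasDerivAt_weighted`). Integrating over a
period gives `∫₀¹ (f + 𝒞)·E = 0`, which is the formula for `𝒞`; it also shows that `w` is determined
up to an additive constant `k`, and the zero-mean condition fixes `k` since `∫₀¹ q/E > 0`.
Conversely, with this `𝒞`, a primitive of `-(f + 𝒞)/λ₀·E` is periodic and Lipschitz, and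
`ℋ = q·(w + k)/E` is a solution for the appropriate `k` (`exists_linearizedSol`).
-/

open MeasureTheory Real Filter

noncomputable section

/-- `(𝒞, ℋ) = p` solves the linearized corrector problem with data `f`:
`ℋ` is Lipschitz, `1`-periodic with zero mean, and writing `ℋ̃ = ℋ/(1 + h₀²)`,
`-𝒞 + ℛ̃₀·ℋ̃ - λ₀·ℋ̃' = f` a.e., where `ℛ̃₀ = ℛ·h₀·√(1+h₀²)`. -/
def LinearizedSol (lam₀ : ℝ) (R h₀ f : ℝ → ℝ) (p : ℝ × (ℝ → ℝ)) : Prop :=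
  (∃ K, LipschitzWith K p.2) ∧ Function.Periodic p.2 1 ∧
  (∫ z in (0:ℝ)..1, p.2 z) = 0 ∧
  ∀ᵐ z : ℝ,
    -p.1 + (R z * h₀ z * Real.sqrt (1 + h₀ z ^ 2)) * (p.2 z / (1 + h₀ z ^ 2)) -
        lam₀ * deriv (fun t => p.2 t / (1 + h₀ t ^ 2)) z = f z

/-- A `1`-periodic Lipschitz function on the line, with values in a normed space. -/
def PerLip {F : Type*} [NormedAddCommGroup F] (u : ℝ → F) : Prop :=
  (∃ K, LipschitzWith K u) ∧ Function.Periodic u 1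

namespace PerLip

lemma continuous {F : Type*} [NormedAddCommGroup F] {u : ℝ → F} (hu : PerLip u) :
    Continuous u :=
  hu.1.choose_spec.continuous

/-- A continuous periodic function has relatively compact range, on whose convex hull a `C¹`
function is Lipschitz. -/
lemma comp {F : Type*} [NormedAddCommGroup F] [NormedSpace ℝ F] [ProperSpace F]
    {u : ℝ → F} (hu : PerLip u) {φ : F → ℝ} (hφ : ContDiff ℝ 1 φ) :
    PerLip (fun z => φ (u z)) := by
  refine ⟨?_, fun z => by simp only [hu.2 z]⟩
  obtain ⟨r, hr⟩ := (hu.2.isBounded_of_continuous one_ne_zero hu.continuous).subset_closedBall 0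
  obtain ⟨K, hK⟩ := (hφ.contDiffOn (s := Metric.closedBall 0 r)).exists_lipschitzOnWith
    one_ne_zero (convex_closedBall 0 r) (isCompact_closedBall 0 r)
  obtain ⟨L, hL⟩ := hu.1
  refine ⟨K * L, ?_⟩
  rw [← lipschitzOnWith_univ] at hL ⊢
  exact hK.comp hL fun z _ => hr (Set.mem_range_self z)

lemma comp₂ {u v : ℝ → ℝ} (hu : PerLip u) (hv : PerLip v) {φ : ℝ × ℝ → ℝ}
    (hφ : ContDiff ℝ 1 φ) : PerLip (fun z => φ (u z, v z)) := by
  obtain ⟨⟨K, hK⟩, hpu⟩ := hu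
  obtain ⟨⟨L, hL⟩, hpv⟩ := hv
  exact comp (u := fun z => (u z, v z)) ⟨⟨_, hK.prodMk hL⟩, fun z => by simp [hpu z, hpv z]⟩ hφ

lemma mul {u v : ℝ → ℝ} (hu : PerLip u) (hv : PerLip v) : PerLip (fun z => u z * v z) :=
  hu.comp₂ hv (φ := fun p => p.1 * p.2) (by fun_prop)

lemma sub {u v : ℝ → ℝ} (hu : PerLip u) (hv : PerLip v) : PerLip (fun z => u z - v z) :=
  hu.comp₂ hv (φ := fun p => p.1 - p.2) (by fun_prop)

lemma inv_one_add_sq {u : ℝ → ℝ} (hu : PerLip u) : PerLip (fun z => (1 + u z ^ 2)⁻¹) :=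
  hu.comp (φ := fun x => (1 + x ^ 2)⁻¹)
    (ContDiff.inv (by fun_prop) fun x => by positivity)

lemma ae_hasDerivAt {u : ℝ → ℝ} (hu : PerLip u) : ∀ᵐ z : ℝ, HasDerivAt u (deriv u z) z := by
  filter_upwards [hu.1.choose_spec.ae_differentiableAt_real] with z hz using hz.hasDerivAt

lemma integral_eq_sub {u g : ℝ → ℝ} (hu : PerLip u) (hd : ∀ᵐ z : ℝ, HasDerivAt u (g z) z)
    (a b : ℝ) : ∫ z in a..b, g z = u b - u a := by
  rw [← (hu.1.choose_spec.lipschitzOnWith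
    (s := Set.uIcc a b)).absolutelyContinuousOnInterval.integral_deriv_eq_sub]
  apply intervalIntegral.integral_congr_ae
  filter_upwards [hd] with z hz _ using hz.deriv.symm

lemma const_of_ae_hasDerivAt_zero {u : ℝ → ℝ} (hu : PerLip u)
    (hd : ∀ᵐ z : ℝ, HasDerivAt u 0 z) (z : ℝ) : u z = u 0 := by
  have := hu.integral_eq_sub hd 0 z
  simp only [intervalIntegral.integral_zero] at this
  linarith

end PerLip

lemma locallyIntegrable_of_ae_bound {g : ℝ → ℝ} (hg : Measurable g) {M : ℝ}
    (hM : ∀ᵐ z : ℝ, |g z| ≤ M) : LocallyIntegrable g volume := by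
  have h : LocallyIntegrable (fun _ : ℝ => M) volume := continuous_const.locallyIntegrable
  refine h.mono hg.aestronglyMeasurable ?_
  filter_upwards [hM] with z hz
  exact hz.trans (le_abs_self M)

lemma intervalIntegrable_of_ae_bound {g : ℝ → ℝ} (hg : Measurable g) {M : ℝ}
    (hM : ∀ᵐ z : ℝ, |g z| ≤ M) (a b : ℝ) : IntervalIntegrable g volume a b :=
  intervalIntegrable_iff.mpr <|
    ((locallyIntegrable_of_ae_bound hg hM).integrableOn_isCompact isCompact_uIcc).mono_set
      Set.uIoc_subset_uIcc

lemma perLip_primitive {g : ℝ → ℝ} (hg : Measurable g) (hp : Function.Periodic g 1) {M : ℝ}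
    (hM : ∀ᵐ z : ℝ, |g z| ≤ M) (h0 : ∫ z in (0:ℝ)..1, g z = 0) :
    PerLip (fun z => ∫ t in (0:ℝ)..z, g t) ∧
      ∀ᵐ z : ℝ, HasDerivAt (fun z => ∫ t in (0:ℝ)..z, g t) (g z) z := by
  have hi := intervalIntegrable_of_ae_bound hg hM
  refine ⟨⟨⟨M.toNNReal, ?_⟩, fun z => ?_⟩, ?_⟩
  · refine LipschitzWith.of_dist_le_mul fun x y => ?_
    rw [Real.dist_eq, intervalIntegral.integral_interval_sub_left (hi 0 x) (hi 0 y), Real.dist_eq]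
    refine intervalIntegral.norm_integral_le_of_norm_le_const_ae (f := g) ?_
    filter_upwards [hM] with z hz _
    exact hz.trans (Real.le_coe_toNNReal M)
  · have := hp.intervalIntegral_add_eq z 0
    rw [zero_add, h0] at this
    simp only
    rw [← intervalIntegral.integral_add_adjacent_intervals (hi 0 z) (hi z (z + 1)), this, add_zero]
  · filter_upwards [LocallyIntegrable.ae_hasDerivAt_integral (locallyIntegrable_of_ae_bound hg hM)] with z hz
    exact hz 0

lemma PerLip.exists_abs_le {u : ℝ → ℝ} (hu : PerLip u) : ∃ M, ∀ z, |u z| ≤ M := by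
  obtain ⟨r, hr⟩ := (hu.2.isBounded_of_continuous one_ne_zero hu.continuous).exists_norm_le
  exact ⟨r, fun z => hr _ (Set.mem_range_self z)⟩

/-- The drift `ℛ̃₀/λ₀` has a periodic Lipschitz primitive; in particular `ℛ̃₀` has zero mean. -/
lemma SolvesCorr.exists_primitive {R h : ℝ → ℝ} {lam c : ℝ} (hlam : 0 < lam)
    (hsol : SolvesCorr R lam c h) :
    ∃ P : ℝ → ℝ, PerLip P ∧
      ∀ᵐ z : ℝ, HasDerivAt P ((1 / lam) * (R z * h z * Real.sqrt (1 + h z ^ 2))) z := by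
  obtain ⟨hL, hper, hmean, heq⟩ := hsol
  have hh : PerLip h := ⟨hL, hper⟩
  obtain ⟨M, hM⟩ := hh.exists_abs_le
  obtain ⟨hG, hGd⟩ := perLip_primitive hh.continuous.measurable hper (ae_of_all _ hM) hmean
  have hlog : PerLip (fun z => Real.log (1 + h z ^ 2)) :=
    hh.comp (φ := fun x => Real.log (1 + x ^ 2))
      (ContDiff.log (by fun_prop) fun x => by positivity)
  refine ⟨_, hG.comp₂ hlog (φ := fun p => c / lam * p.1 + 1 / 2 * p.2) (by fun_prop), ?_⟩
  filter_upwards [hGd, hh.ae_hasDerivAt, heq] with z hz1 hz2 hz3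
  have hq : 1 + h z ^ 2 ≠ 0 := by positivity
  have hd := (hz1.const_mul (c / lam)).add ((((hz2.pow 2).const_add 1).log hq).const_mul (1 / 2))
  convert! hd using 1
  have : R z * Real.sqrt (1 + h z ^ 2) = c + lam * deriv h z / (1 + h z ^ 2) := by linarith
  rw [show R z * h z * Real.sqrt (1 + h z ^ 2) = h z * (R z * Real.sqrt (1 + h z ^ 2)) by ring,
    this]
  simp only [Pi.pow_apply]
  field_simp
  ring

/-- The integrating factor turns the linearized equation into an equation for the derivative
of `(ℋ/(1 + h₀²))·E`. -/
lemma LinearizedSol.hasDerivAt_weighted {lam : ℝ} {R h f E : ℝ → ℝ} {p : ℝ × (ℝ → ℝ)}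
    (hlam : 0 < lam) (hh : PerLip h) (hE : PerLip E)
    (hEd : ∀ᵐ z : ℝ,
      HasDerivAt E (-((1 / lam) * (R z * h z * Real.sqrt (1 + h z ^ 2))) * E z) z)
    (hp : LinearizedSol lam R h f p) :
    PerLip (fun z => p.2 z / (1 + h z ^ 2) * E z) ∧
      ∀ᵐ z : ℝ, HasDerivAt (fun z => p.2 z / (1 + h z ^ 2) * E z)
        (-(1 / lam) * (f z * E z + p.1 * E z)) z := by
  obtain ⟨hL, hper, -, heq⟩ := hp
  have hH : PerLip p.2 := ⟨hL, hper⟩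
  have hv : PerLip (fun z => p.2 z / (1 + h z ^ 2)) := by
    simpa only [div_eq_mul_inv] using hH.mul hh.inv_one_add_sq
  refine ⟨hv.mul hE, ?_⟩
  filter_upwards [hv.ae_hasDerivAt, hEd, heq] with z hz1 hz2 hz3
  convert! hz1.mul hz2 using 1
  rw [← hz3]
  field_simp
  ring

lemma LinearizedSol.fst_eq {lam : ℝ} {R h f E : ℝ → ℝ} {p : ℝ × (ℝ → ℝ)}
    (hlam : 0 < lam) (hh : PerLip h) (hE : PerLip E) (hEpos : ∀ z, 0 < E z)
    (hEd : ∀ᵐ z : ℝ,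
      HasDerivAt E (-((1 / lam) * (R z * h z * Real.sqrt (1 + h z ^ 2))) * E z) z)
    (hfE : IntervalIntegrable (fun z => f z * E z) volume 0 1)
    (hp : LinearizedSol lam R h f p) :
    p.1 = -(∫ z in (0:ℝ)..1, f z * E z) / (∫ z in (0:ℝ)..1, E z) := by
  obtain ⟨hw, hwd⟩ := hp.hasDerivAt_weighted hlam hh hE hEd
  have hEi : IntervalIntegrable E volume 0 1 := hE.continuous.intervalIntegrable 0 1
  have hpos : 0 < ∫ z in (0:ℝ)..1, E z :=
    intervalIntegral.intervalIntegral_pos_of_pos hEi hEpos one_pos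
  have hmean := hw.integral_eq_sub hwd 0 1
  have hper := hw.2 0
  simp only [zero_add] at hper
  rw [hper, sub_self, intervalIntegral.integral_const_mul,
    intervalIntegral.integral_add hfE (hEi.const_mul _),
    intervalIntegral.integral_const_mul] at hmean
  have hzero := (mul_eq_zero.mp hmean).resolve_left (neg_ne_zero.mpr (one_div_ne_zero hlam.ne'))
  rw [eq_div_iff hpos.ne']
  linarith

lemma integral_one_add_sq_div_pos {h E : ℝ → ℝ} (hh : PerLip h) (hE : PerLip E)
    (hEpos : ∀ z, 0 < E z) : 0 < ∫ z in (0:ℝ)..1, (1 + h z ^ 2) / E z := by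
  have hc := hh.continuous
  refine intervalIntegral.intervalIntegral_pos_of_pos ?_
    (fun z => div_pos (by positivity) (hEpos z)) one_pos
  exact (Continuous.div (by fun_prop) hE.continuous fun z => (hEpos z).ne').intervalIntegrable 0 1

/-- Two solutions with the same speed differ by `k·(1 + h₀²)/E` for a constant `k`, and zero mean
forces `k = 0`. -/
lemma LinearizedSol.snd_eq {lam : ℝ} {R h f E : ℝ → ℝ} {p p' : ℝ × (ℝ → ℝ)}
    (hlam : 0 < lam) (hh : PerLip h) (hE : PerLip E) (hEpos : ∀ z, 0 < E z)
    (hEd : ∀ᵐ z : ℝ,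
      HasDerivAt E (-((1 / lam) * (R z * h z * Real.sqrt (1 + h z ^ 2))) * E z) z)
    (hp : LinearizedSol lam R h f p) (hp' : LinearizedSol lam R h f p') (h1 : p.1 = p'.1) :
    p.2 = p'.2 := by
  obtain ⟨hw, hwd⟩ := hp.hasDerivAt_weighted hlam hh hE hEd
  obtain ⟨hw', hwd'⟩ := hp'.hasDerivAt_weighted hlam hh hE hEd
  have hconst := (hw.sub hw').const_of_ae_hasDerivAt_zero (by
    filter_upwards [hwd, hwd'] with z hz hz'
    convert! hz.sub hz' using 1
    rw [h1, sub_self])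
  set k := p.2 0 / (1 + h 0 ^ 2) * E 0 - p'.2 0 / (1 + h 0 ^ 2) * E 0
  have hdiff : ∀ z, p.2 z - p'.2 z = k * ((1 + h z ^ 2) / E z) := by
    intro z
    rw [← hconst z]
    have := (hEpos z).ne'
    have : 1 + h z ^ 2 ≠ 0 := by positivity
    field_simp
  have hint : ∫ z in (0:ℝ)..1, (p.2 z - p'.2 z) = 0 := by
    rw [intervalIntegral.integral_sub
      (hp.1.choose_spec.continuous.intervalIntegrable 0 1)
      (hp'.1.choose_spec.continuous.intervalIntegrable 0 1), hp.2.2.1, hp'.2.2.1, sub_zero]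
  simp only [hdiff, intervalIntegral.integral_const_mul] at hint
  have hk : k = 0 :=
    (mul_eq_zero.mp hint).resolve_right (integral_one_add_sq_div_pos hh hE hEpos).ne'
  funext z
  have := hdiff z
  rw [hk, zero_mul] at this
  linarith

lemma exists_linearizedSol {lam : ℝ} {R h f E : ℝ → ℝ}
    (hlam : 0 < lam) (hh : PerLip h) (hE : PerLip E) (hEinv : PerLip (fun z => (E z)⁻¹))
    (hEpos : ∀ z, 0 < E z)
    (hEd : ∀ᵐ z : ℝ,
      HasDerivAt E (-((1 / lam) * (R z * h z * Real.sqrt (1 + h z ^ 2))) * E z) z)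
    (hf : Measurable f) (hfp : Function.Periodic f 1) {M : ℝ} (hM : ∀ᵐ z : ℝ, |f z| ≤ M)
    (hfE : IntervalIntegrable (fun z => f z * E z) volume 0 1) :
    ∃ p, LinearizedSol lam R h f p := by
  set C := -(∫ z in (0:ℝ)..1, f z * E z) / (∫ z in (0:ℝ)..1, E z) with hC
  have hEi : IntervalIntegrable E volume 0 1 := hE.continuous.intervalIntegrable 0 1
  have hpos : 0 < ∫ z in (0:ℝ)..1, E z :=
    intervalIntegral.intervalIntegral_pos_of_pos hEi hEpos one_pos
  obtain ⟨N, hN⟩ := hE.exists_abs_le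
  obtain ⟨hw, hwd⟩ := perLip_primitive (g := fun z => -(1 / lam) * ((f z + C) * E z))
    (M := |-(1 / lam)| * ((M + |C|) * N))
    (((hf.add_const C).mul hE.continuous.measurable).const_mul _)
    (fun z => by simp only [hfp z, hE.2 z])
    (by
      filter_upwards [hM] with z hz
      rw [abs_mul, abs_mul]
      have h1 : |f z + C| ≤ M + |C| := (abs_add_le _ _).trans (by gcongr)
      have h2 := hN z
      have : 0 ≤ M + |C| := (abs_nonneg _).trans h1
      gcongr)
    (by
      simp only [add_mul]
      rw [intervalIntegral.integral_const_mul,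
        intervalIntegral.integral_add hfE (hEi.const_mul _),
        intervalIntegral.integral_const_mul, hC, div_mul_cancel₀ _ hpos.ne']
      ring)
  set w : ℝ → ℝ := fun z => ∫ t in (0:ℝ)..z, -(1 / lam) * ((f t + C) * E t) with hwdef
  have hq : PerLip (fun z => (1 + h z ^ 2) / E z) := by
    simpa only [div_eq_mul_inv] using
      (hh.comp (φ := fun x => 1 + x ^ 2) (by fun_prop)).mul hEinv
  have hqpos := integral_one_add_sq_div_pos hh hE hEpos
  -- the constant making the mean of `q·(w + k)/E` vanish
  set k := -(∫ z in (0:ℝ)..1, w z * ((1 + h z ^ 2) / E z)) /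
    (∫ z in (0:ℝ)..1, (1 + h z ^ 2) / E z) with hk
  have hwk : PerLip (fun z => w z + k) := hw.comp (φ := fun x => x + k) (by fun_prop)
  have hH := hwk.mul hq
  refine ⟨(C, fun z => (w z + k) * ((1 + h z ^ 2) / E z)), hH.1, hH.2, ?_, ?_⟩
  · simp only [add_mul]
    rw [intervalIntegral.integral_add ((hw.mul hq).continuous.intervalIntegrable 0 1)
      ((hq.continuous.intervalIntegrable 0 1).const_mul _),
      intervalIntegral.integral_const_mul, hk, div_mul_cancel₀ _ hqpos.ne']
    ring
  · have hquot : ∀ z, (w z + k) * ((1 + h z ^ 2) / E z) / (1 + h z ^ 2) = (w z + k) / E z := by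
      intro z
      have : 1 + h z ^ 2 ≠ 0 := by positivity
      field_simp
    simp only [hquot]
    filter_upwards [hwd, hEd] with z hz1 hz2
    have hE0 := (hEpos z).ne'
    rw [((hz1.add_const k).fun_div hz2 hE0).deriv]
    field_simp
    ring

/-- The linearized corrector problem is uniquely solvable, and the speed component is
given by the explicit formula
`𝒞 = -(∫₀¹ f·exp((1/λ₀)∫_z¹ ℛ̃₀)) / (∫₀¹ exp((1/λ₀)∫_z¹ ℛ̃₀))`. -/
theorem linearized_corrector_well_posed (Rm RM lam₀ c₀ : ℝ) (R h₀ : ℝ → ℝ)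
    (hmeas : Measurable R) (hper : Function.Periodic R 1)
    (hRm : 0 < Rm) (hbd : ∀ᵐ z : ℝ, Rm ≤ R z ∧ R z ≤ RM)
    (hlam₀ : 0 < lam₀) (hsol : SolvesCorr R lam₀ c₀ h₀) :
    ∀ f : ℝ → ℝ, Measurable f → Function.Periodic f 1 →
      (∃ M : ℝ, ∀ᵐ z : ℝ, |f z| ≤ M) →
      (∃! p : ℝ × (ℝ → ℝ), LinearizedSol lam₀ R h₀ f p) ∧
      ∀ p : ℝ × (ℝ → ℝ), LinearizedSol lam₀ R h₀ f p →
        p.1 = -(∫ z in (0:ℝ)..1, f z *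
            Real.exp ((1 / lam₀) *
              ∫ t in z..(1:ℝ), R t * h₀ t * Real.sqrt (1 + h₀ t ^ 2))) /
          (∫ z in (0:ℝ)..1,
            Real.exp ((1 / lam₀) *
              ∫ t in z..(1:ℝ), R t * h₀ t * Real.sqrt (1 + h₀ t ^ 2))) := by
  intro f hf hfp ⟨M, hM⟩
  have hh : PerLip h₀ := ⟨hsol.1, hsol.2.1⟩
  obtain ⟨P, hP, hPd⟩ := hsol.exists_primitive hlam₀
  have hweight : ∀ z, Real.exp ((1 / lam₀) *
      ∫ t in z..(1:ℝ), R t * h₀ t * Real.sqrt (1 + h₀ t ^ 2)) = Real.exp (P 1 - P z) := by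
    intro z
    rw [← intervalIntegral.integral_const_mul, hP.integral_eq_sub hPd]
  simp only [hweight]
  set E : ℝ → ℝ := fun z => Real.exp (P 1 - P z) with hEdef
  have hE : PerLip E := hP.comp (φ := fun x => Real.exp (P 1 - x)) (by fun_prop)
  have hEinv : PerLip (fun z => (E z)⁻¹) := by
    simp only [hEdef, ← Real.exp_neg]
    exact hP.comp (φ := fun x => Real.exp (-(P 1 - x))) (by fun_prop)
  have hEpos : ∀ z, 0 < E z := fun z => Real.exp_pos _
  have hEd : ∀ᵐ z : ℝ,
      HasDerivAt E (-((1 / lam₀) * (R z * h₀ z * Real.sqrt (1 + h₀ z ^ 2))) * E z) z := by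
    filter_upwards [hPd] with z hz
    convert! (hz.const_sub (P 1)).exp using 1
    exact mul_comm _ _
  have hfE : IntervalIntegrable (fun z => f z * E z) volume 0 1 :=
    (intervalIntegrable_of_ae_bound hf hM 0 1).mul_continuousOn hE.continuous.continuousOn
  refine ⟨?_, fun p hp => hp.fst_eq hlam₀ hh hE hEpos hEd hfE⟩
  obtain ⟨p, hp⟩ := exists_linearizedSol hlam₀ hh hE hEinv hEpos hEd hf hfp hM hfE
  refine ⟨p, hp, fun p' hp' => ?_⟩
  have h1 : p'.1 = p.1 := by
    rw [hp.fst_eq hlam₀ hh hE hEpos hEd hfE, hp'.fst_eq hlam₀ hh hE hEpos hEd hfE]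
  exact Prod.ext h1 (hp'.snd_eq hlam₀ hh hE hEpos hEd hp h1)
end
end

section
/- Let c⁰, ā, b̄, ḡ be positive real numbers. Suppose u : ℝ → ℝ is continuous, bounded, even, tends to 0 at infinity, and satisfies ∫_{−∞}^0 (c⁰·b̄·u(x)·φ'(x) + ā·u(x)·φ''(x)) dx = c⁰·(b̄·u(0) − ḡ)·φ(0) + ā·u(0)·φ'(0) for every smooth compactly supported φ : ℝ → ℝ. Then u(x) = (ḡ/b̄)·exp(−(c⁰·b̄/ā)·|x|) for all x ∈ ℝ. -/
open MeasureTheory Real Filter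

/-!
The proof is by duality. For a smooth `η` with compact support in `(-∞, 0)` the adjoint equation
`c⁰ b̄ F' + ā F'' = η` has an explicit smooth solution vanishing near `-∞`
(`adjointSolution`). Its behaviour for `x > 0` is irrelevant to the weak formulation, so cutting it
off there gives an admissible test function, and the weak formulation becomes
`∫ (u(x) - (u(0) - ḡ/b̄ + (ḡ/b̄) exp(c⁰ b̄ x / ā))) η(x) dx = 0`
(`integral_profile_eq_zero`). The fundamental lemma of the calculus of variations then determines
`u` on `(-∞, 0)` up to the constant `u(0) - ḡ/b̄`, which vanishes because `u` tends to `0` at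
`-∞`; evenness gives the other half-line.
-/

/-- The solution of `β F' + a F'' = η` that vanishes to the left of `-R` when `η` does, obtained by
convolving `η` with the fundamental solution `(1 - exp(-(β / a) x)) / β` on `x > 0`. -/
noncomputable def adjointSolution (a β R : ℝ) (η : ℝ → ℝ) (x : ℝ) : ℝ :=
  β⁻¹ * ((∫ s in (-R)..x, η s)
    - Real.exp (-(β / a * x)) * ∫ s in (-R)..x, Real.exp (β / a * s) * η s)

lemma contDiff_primitive {η : ℝ → ℝ} (hη : ContDiff ℝ (⊤ : ℕ∞) η) (R : ℝ) :
    ContDiff ℝ (⊤ : ℕ∞) fun x => ∫ s in (-R)..x, η s := by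
  have hd (x : ℝ) : HasDerivAt (fun x => ∫ s in (-R)..x, η s) (η x) x :=
    hη.continuous.integral_hasStrictDerivAt (-R) x |>.hasDerivAt
  rw [contDiff_infty_iff_deriv]
  refine ⟨fun x => (hd x).differentiableAt, ?_⟩
  rwa [show deriv (fun x => ∫ s in (-R)..x, η s) = η from funext fun x => (hd x).deriv]

lemma contDiff_adjointSolution {a β R : ℝ} {η : ℝ → ℝ} (hη : ContDiff ℝ (⊤ : ℕ∞) η) :
    ContDiff ℝ (⊤ : ℕ∞) (adjointSolution a β R η) := by
  have h1 := contDiff_primitive hη R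
  have h2 : ContDiff ℝ (⊤ : ℕ∞) fun s => Real.exp (β / a * s) * η s := by fun_prop
  have h3 := contDiff_primitive h2 R
  unfold adjointSolution
  fun_prop

lemma hasDerivAt_adjointSolution {a β R : ℝ} (ha : a ≠ 0) (hβ : β ≠ 0) {η : ℝ → ℝ}
    (hη : Continuous η) (x : ℝ) :
    HasDerivAt (adjointSolution a β R η)
      (a⁻¹ * (Real.exp (-(β / a * x)) * ∫ s in (-R)..x, Real.exp (β / a * s) * η s)) x := by
  have h1 := (hη.integral_hasStrictDerivAt (-R) x).hasDerivAt
  have h2 := ((show Continuous fun s => Real.exp (β / a * s) * η s by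
    fun_prop).integral_hasStrictDerivAt (-R) x).hasDerivAt
  have h3 : HasDerivAt (fun x => Real.exp (-(β / a * x)))
      (Real.exp (-(β / a * x)) * (-(β / a * 1))) x :=
    (((hasDerivAt_id x).const_mul (β / a)).neg).exp
  refine ((h1.sub (h3.mul h2)).const_mul β⁻¹).congr_deriv ?_
  have h4 : Real.exp (-(β / a * x)) * Real.exp (β / a * x) = 1 := by
    rw [← Real.exp_add]; simp
  rw [← mul_assoc (Real.exp (-(β / a * x))) (Real.exp (β / a * x)), h4]
  field_simp
  ring

lemma adjointSolution_equation {a β R : ℝ} (ha : a ≠ 0) (hβ : β ≠ 0) {η : ℝ → ℝ}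
    (hη : Continuous η) (x : ℝ) :
    β * deriv (adjointSolution a β R η) x + a * deriv (deriv (adjointSolution a β R η)) x
      = η x := by
  have hd : deriv (adjointSolution a β R η) = fun x =>
      a⁻¹ * (Real.exp (-(β / a * x)) * ∫ s in (-R)..x, Real.exp (β / a * s) * η s) :=
    funext fun x => (hasDerivAt_adjointSolution ha hβ hη x).deriv
  have h2 := ((show Continuous fun s => Real.exp (β / a * s) * η s by
    fun_prop).integral_hasStrictDerivAt (-R) x).hasDerivAt
  have h3 : HasDerivAt (fun x => Real.exp (-(β / a * x)))
      (Real.exp (-(β / a * x)) * (-(β / a * 1))) x :=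
    (((hasDerivAt_id x).const_mul (β / a)).neg).exp
  have h4 : Real.exp (-(β / a * x)) * Real.exp (β / a * x) = 1 := by
    rw [← Real.exp_add]; simp
  have h5 := ((h3.mul h2).const_mul a⁻¹).deriv
  rw [← mul_assoc (Real.exp (-(β / a * x))) (Real.exp (β / a * x)), h4] at h5
  rw [hd]
  refine (congrArg (fun t => _ + a * t) h5).trans ?_
  field_simp
  ring

lemma adjointSolution_eq_zero {a β R : ℝ} {η : ℝ → ℝ} (hη : ∀ x ≤ -R, η x = 0)
    {x : ℝ} (hx : x ≤ -R) : adjointSolution a β R η x = 0 := by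
  have key (h : ℝ → ℝ) (hh : ∀ x ≤ -R, h x = 0) : ∫ s in (-R)..x, h s = 0 := by
    rw [intervalIntegral.integral_congr (g := fun _ => 0), intervalIntegral.integral_zero]
    intro s hs
    rw [Set.uIcc_of_ge hx] at hs
    exact hh s hs.2
  rw [adjointSolution, key η hη, key _ fun s hs => by rw [hη s hs, mul_zero]]
  simp

/-- The weak formulation tested against the adjoint solution with right-hand side `η`, cut off on
the positive half-line. -/
lemma integral_profile_eq_zero
    {c₀ aBar bBar gBar : ℝ} {u : ℝ → ℝ}
    (hc₀ : 0 < c₀) (ha : 0 < aBar) (hb : 0 < bBar) (hcont : Continuous u)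
    (heq : ∀ φ : ℝ → ℝ, ContDiff ℝ (⊤ : ℕ∞) φ → HasCompactSupport φ →
      (∫ x in Set.Iic (0:ℝ),
          (c₀ * bBar * u x * deriv φ x + aBar * u x * deriv (deriv φ) x)) =
        c₀ * (bBar * u 0 - gBar) * φ 0 + aBar * u 0 * deriv φ 0)
    {η : ℝ → ℝ} (hη : ContDiff ℝ (⊤ : ℕ∞) η) (hsupp : HasCompactSupport η)
    (hneg : tsupport η ⊆ Set.Iio 0) :
    ∫ x, η x * (u x - (u 0 - gBar / bBar
      + gBar / bBar * Real.exp (c₀ * bBar / aBar * x))) = 0 := by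
  obtain ⟨R, hR0, hR⟩ : ∃ R : ℝ, 0 < R ∧ ∀ x ≤ -R, η x = 0 := by
    obtain ⟨m, hm⟩ := hsupp.isCompact.bddBelow
    refine ⟨|m| + 1, by positivity, fun x hx => image_eq_zero_of_notMem_tsupport fun h => ?_⟩
    have := hm h
    have := neg_abs_le m
    linarith
  have hpos : ∀ x, 0 ≤ x → η x = 0 := fun x hx =>
    image_eq_zero_of_notMem_tsupport fun h => not_lt.2 hx (hneg h)
  set β := c₀ * bBar with hβdef
  have hβ : 0 < β := mul_pos hc₀ hb
  have hηc := hη.continuous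
  set F := adjointSolution aBar β R η with hF
  -- The cutoff equals `1` on `(-∞, 1]` and `0` on `[2, ∞)`.
  set φ : ℝ → ℝ := fun x => (1 - Real.smoothTransition (x - 1)) * F x with hφ
  have hφF {x : ℝ} (hx : x < 1) : φ =ᶠ[nhds x] F := by
    filter_upwards [Iio_mem_nhds hx] with y hy
    have hy' : y - 1 ≤ 0 := by
      have : y < 1 := hy
      linarith
    simp [hφ, Real.smoothTransition.zero_of_nonpos hy']
  have hφsm : ContDiff ℝ (⊤ : ℕ∞) φ := by
    have h1 : ContDiff ℝ (⊤ : ℕ∞) fun x : ℝ => Real.smoothTransition (x - 1) :=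
      Real.smoothTransition.contDiff.comp (contDiff_id.sub contDiff_const)
    exact (contDiff_const.sub h1).mul (contDiff_adjointSolution hη)
  have hφc : HasCompactSupport φ := by
    refine HasCompactSupport.intro (isCompact_Icc (a := -R) (b := 2)) fun x hx => ?_
    rcases le_or_gt x (-R) with h | h
    · simp [hφ, hF, adjointSolution_eq_zero hR h]
    · have h2 : 1 ≤ x - 1 := by
        by_contra h3
        exact hx ⟨h.le, by linarith⟩
      simp [hφ, Real.smoothTransition.one_of_one_le h2]
  have hweak := heq φ hφsm hφc
  have hlhs : (∫ x in Set.Iic (0:ℝ),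
      (β * u x * deriv φ x + aBar * u x * deriv (deriv φ) x)) = ∫ x, η x * u x := by
    rw [← setIntegral_eq_integral_of_forall_compl_eq_zero (s := Set.Iic (0:ℝ))
      (f := fun x => η x * u x) fun x hx => by rw [hpos x (not_le.1 hx).le, zero_mul]]
    refine setIntegral_congr_fun measurableSet_Iic fun x hx => ?_
    have hx1 : x < 1 := lt_of_le_of_lt hx one_pos
    have he := adjointSolution_equation (R := R) ha.ne' hβ.ne' hηc x
    simp only [(hφF hx1).deriv_eq, (hφF hx1).deriv.deriv_eq]
    rw [← he]
    ring
  have hint (h : ℝ → ℝ) (h0 : ∀ x, η x = 0 → h x = 0) :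
      ∫ s in (-R)..0, h s = ∫ s, h s := by
    rw [intervalIntegral.integral_of_le (by linarith)]
    refine setIntegral_eq_integral_of_forall_compl_eq_zero fun x hx => h0 x ?_
    rcases le_or_gt x (-R) with h | h
    · exact hR x h
    · exact hpos x (not_lt.1 fun h' => hx ⟨h, h'.le⟩)
  have hφ0 : φ 0 = β⁻¹ * ((∫ s, η s) - ∫ s, Real.exp (β / aBar * s) * η s) := by
    rw [(hφF one_pos).eq_of_nhds, hF, adjointSolution, hint η fun _ h => h,
      hint _ fun x h => by rw [h, mul_zero]]
    simp
  have hdφ0 : deriv φ 0 = aBar⁻¹ * ∫ s, Real.exp (β / aBar * s) * η s := by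
    rw [(hφF one_pos).deriv_eq, (hasDerivAt_adjointSolution ha.ne' hβ.ne' hηc 0).deriv,
      hint _ fun x h => by rw [h, mul_zero]]
    simp
  rw [hlhs, hφ0, hdφ0] at hweak
  have i1 : Integrable fun x => η x * u x :=
    (hηc.mul hcont).integrable_of_hasCompactSupport hsupp.mul_right
  have i2 : Integrable η := hηc.integrable_of_hasCompactSupport hsupp
  have i3 : Integrable fun x => Real.exp (β / aBar * x) * η x :=
    Continuous.integrable_of_hasCompactSupport (by fun_prop) hsupp.mul_left
  have i12 : Integrable fun x => η x * u x - (u 0 - gBar / bBar) * η x :=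
    i1.sub (i2.const_mul _)
  have hsplit : (fun x => η x * (u x - (u 0 - gBar / bBar
      + gBar / bBar * Real.exp (β / aBar * x)))) = fun x => (η x * u x
      - (u 0 - gBar / bBar) * η x) - gBar / bBar * (Real.exp (β / aBar * x) * η x) := by
    funext x; ring
  rw [hsplit, integral_sub i12 (i3.const_mul _),
    integral_sub i1 (i2.const_mul _), integral_const_mul, integral_const_mul, hweak, hβdef]
  field_simp
  ring

/-- Identification of the homogenized temperature: a continuous, bounded, even function
vanishing at infinity that satisfies the weak formulation of the homogenized problem
is the explicit exponential profile `u(x) = (ḡ/b̄)·exp(-(c⁰·b̄/ā)·|x|)`. -/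
theorem homogenized_temperature_identification
    (c₀ aBar bBar gBar : ℝ) (u : ℝ → ℝ)
    (hc₀ : 0 < c₀) (ha : 0 < aBar) (hb : 0 < bBar) (hg : 0 < gBar)
    (hcont : Continuous u) (hbdd : ∃ M : ℝ, ∀ x, |u x| ≤ M)
    (heven : ∀ x, u (-x) = u x)
    (hlim : Tendsto u (cocompact ℝ) (nhds 0))
    (heq : ∀ φ : ℝ → ℝ, ContDiff ℝ (⊤ : ℕ∞) φ → HasCompactSupport φ →
      (∫ x in Set.Iic (0:ℝ),
          (c₀ * bBar * u x * deriv φ x + aBar * u x * deriv (deriv φ) x)) =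
        c₀ * (bBar * u 0 - gBar) * φ 0 + aBar * u 0 * deriv φ 0) :
    ∀ x : ℝ, u x = gBar / bBar * Real.exp (-(c₀ * bBar / aBar) * |x|) := by
  set v : ℝ → ℝ := fun x => u 0 - gBar / bBar
    + gBar / bBar * Real.exp (c₀ * bBar / aBar * x) with hv
  have hvc : Continuous v := by fun_prop
  have hae : ∀ᵐ x, x ∈ Set.Iio (0:ℝ) → u x - v x = 0 :=
    isOpen_Iio.ae_eq_zero_of_integral_contDiff_smul_eq_zero
      ((hcont.sub hvc).locallyIntegrable.locallyIntegrableOn _)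
      fun η h1 h2 h3 => integral_profile_eq_zero hc₀ ha hb hcont heq h1 h2 h3
  have hEqOn : Set.EqOn u v (Set.Iio 0) := by
    refine Measure.eqOn_open_of_ae_eq (μ := volume) ?_ isOpen_Iio hcont.continuousOn
      hvc.continuousOn
    refine (ae_restrict_iff' measurableSet_Iio).2 ?_
    filter_upwards [hae] with x hx hx'
    exact sub_eq_zero.1 (hx hx')
  have hk : 0 < c₀ * bBar / aBar := by positivity
  have hconst : u 0 - gBar / bBar = 0 := by
    have h1 : Tendsto u atBot (nhds 0) := hlim.mono_left atBot_le_cocompact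
    have h2 : Tendsto v atBot (nhds (u 0 - gBar / bBar + gBar / bBar * 0)) :=
      tendsto_const_nhds.add (tendsto_const_nhds.mul
        (Real.tendsto_exp_atBot.comp (tendsto_id.const_mul_atBot hk)))
    have h3 : Tendsto u atBot (nhds (u 0 - gBar / bBar + gBar / bBar * 0)) :=
      h2.congr' (by
        filter_upwards [Iio_mem_atBot (0:ℝ)] with x hx
        exact (hEqOn hx).symm)
    simpa using tendsto_nhds_unique h3 h1
  have hnonpos : ∀ x ≤ 0, u x = gBar / bBar * Real.exp (c₀ * bBar / aBar * x) := by
    intro x hx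
    rcases hx.lt_or_eq with h | rfl
    · simpa [hv, hconst] using hEqOn h
    · simpa using sub_eq_zero.1 hconst
  intro x
  have habs : u x = u (-|x|) := by
    rcases abs_cases x with h | h <;> rw [h.1]
    · exact (heven x).symm
    · rw [neg_neg]
  rw [habs, hnonpos _ (neg_nonpos.2 (abs_nonneg x)), mul_neg, neg_mul]
end
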